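/- Assume condition (D1) (A is increasing on [0,1]) and that the probability measure m on ℝ has a finite first moment. Then there exists exactly one weak solution F to the Cauchy problem with initial condition H*m that belongs to the class 𝓕. -/

import Mathlib

open MeasureTheory Set Filter Topology Function
open scoped ENNReal

noncomputable section

/-- `primitive f u = ∫₀^u f(v) dv`. -/
def primitive (f : ℝ → ℝ) : ℝ → ℝ := fun u => ∫ v in (0:ℝ)..u, f v

/-- The cumulative distribution function `H * μ` of a measure `μ` on `ℝ`. -/
def cdfOf (μ : MeasureTheory.Measure ℝ) : ℝ → ℝ := fun x => (μ (Set.Iic x)).toReal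

/-- `F` is a weak solution of `∂ₜ F = (1/2) ∂ₓₓ (A (F)) - ∂ₓ (B (F))` with
initial condition `F₀`. -/
def IsWeakSolution (A B : ℝ → ℝ) (F₀ : ℝ → ℝ) (F : ℝ → ℝ → ℝ) : Prop :=
  ∀ g : ℝ → ℝ → ℝ, ContDiff ℝ (⊤ : ℕ∞) (Function.uncurry g) →
    HasCompactSupport (Function.uncurry g) →
    ∀ t : ℝ, 0 ≤ t →
      ((∫ x : ℝ, g t x * F t x) - ∫ x : ℝ, g 0 x * F₀ x) =
        ∫ x : ℝ, ∫ s in (0:ℝ)..t,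
          ((1/2) * A (F s x) * deriv (deriv (fun y => g s y)) x
            + B (F s x) * deriv (fun y => g s y) x
            + F s x * deriv (fun r => g r x) s)

/-- Membership in the class `𝓕`: `F t` is the cdf of `P t` for a weakly continuous
flow `t ↦ P t` of probability measures with finite first moments, the first moment
being locally integrable in time. -/
def MemF (F : ℝ → ℝ → ℝ) : Prop :=
  ∃ P : ℝ → ProbabilityMeasure ℝ,
    ContinuousOn P (Set.Ici 0) ∧
    (∀ t : ℝ, 0 ≤ t → Integrable (fun x => |x|) (P t : Measure ℝ)) ∧
    (∀ T : ℝ, 0 < T → IntegrableOn (fun t => ∫ x, |x| ∂(P t : Measure ℝ)) (Set.Icc 0 T)) ∧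
    (∀ t : ℝ, 0 ≤ t → ∀ x : ℝ, F t x = ((P t : Measure ℝ) (Set.Iic x)).toReal)

/-!
*Uniqueness.* Two solutions `F` and `G` have a potential `D` with `D₀ = 0`, `∂ₓ D = f := F - G` and
`∂ₜ D = (1/2) ∂ₓ α - β`, where `α = A F - A G` and `β = B F - B G`. Differentiate
`∫ w exp (r (D - c t))` in time, with the weight `w = 1 / (1 + x²)`, which satisfies `|w'| ≤ w`, and
integrate by parts: the exponential produces the dissipation `-(1/2) r f α`. As `A` is strictly
increasing, `f α > 0` whenever `F ≠ G`, so by compactness of `[0, 1]²` the dissipation dominates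
`(1/2) |α| + |β| - c` once `r` is large. The integral thus stays below its initial value `∫ w = π`,
and `r → ∞` forces `D ≤ c t`. Letting `c → 0` and exchanging `F` and `G` gives `D = 0`. These
computations are made sense of by mollifying in space; the mollifier is one-sided, so that the
mollifications of a right-continuous function converge to it at every point.

*Existence.* Under a CFL condition the explicit centred scheme is order preserving, hence maps
distribution functions to distribution functions. Helly's selection theorem, made uniform in time by
the weak equicontinuity of the scheme, produces a limit, which solves the equation but might a
priori lose mass at infinity. Testing the equation against cutoffs shows that the tails of `F t`
exceed those of the initial condition by an amount of integral `O(t)` over any window. This excludes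
a loss of mass and also bounds the first moment, which is the integral of the tails.
-/

/-! ### Flows of cumulative distribution functions -/

/-- A sub-distribution function: what remains of a cumulative distribution function when mass may
escape to infinity. Right continuity is not required. -/
structure IsSubCdf (f : ℝ → ℝ) : Prop where
  mono : Monotone f
  mem_Icc : ∀ x, f x ∈ Icc (0 : ℝ) 1

/-- A weakly continuous flow of cumulative distribution functions on `ℝ`. Weak continuity of the
underlying measures is encoded as continuity in time at each point of continuity in space. -/
structure IsCdfFlow (F : ℝ → ℝ → ℝ) : Prop where
  mono : ∀ t, Monotone (F t)
  mem_Icc : ∀ t x, F t x ∈ Icc (0 : ℝ) 1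
  rightCont : ∀ t x, ContinuousWithinAt (F t) (Ici x) x
  tendsto_atBot : ∀ t, Tendsto (F t) atBot (𝓝 0)
  tendsto_atTop : ∀ t, Tendsto (F t) atTop (𝓝 1)
  continuousAt_time : ∀ t x, ContinuousAt (F t) x → ContinuousAt (fun s => F s x) t

/-- The correlation of `f` with the kernel `k`. For `k` concentrated on small nonnegative numbers it
is a mollification of `f` which recovers right-continuous functions at every point. -/
def smear (k f : ℝ → ℝ) (x : ℝ) : ℝ := ∫ y, f (x + y) * k y

lemma ae_continuousAt_of_monotone {f : ℝ → ℝ} (hf : Monotone f) : ∀ᵐ y, ContinuousAt f y := by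
  filter_upwards [hf.countable_not_continuousAt.ae_notMem volume] with y hy
  simpa using hy

lemma exists_continuousAt_mem_Ioo {f : ℝ → ℝ} (hf : Monotone f) {a b : ℝ} (hab : a < b) :
    ∃ y ∈ Ioo a b, ContinuousAt f y := by
  obtain ⟨y, hy, hy'⟩ :=
    (hf.countable_not_continuousAt.dense_compl ℝ).exists_between hab
  exact ⟨y, hy', by simpa using hy⟩

lemma exists_abs_le_on_Icc {ψ : ℝ → ℝ} (hψ : ContinuousOn ψ (Icc 0 1)) :
    ∃ M, 0 ≤ M ∧ ∀ u ∈ Icc (0 : ℝ) 1, |ψ u| ≤ M := by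
  obtain ⟨M, hM⟩ := isCompact_Icc.exists_bound_of_continuousOn hψ
  exact ⟨M, (norm_nonneg _).trans (hM 0 (by simp)), hM⟩

lemma IsSubCdf.integrable_comp_mul {f ψ k : ℝ → ℝ} (hf : IsSubCdf f) (hψ : Continuous ψ)
    (hk : Integrable k) : Integrable fun x => ψ (f x) * k x := by
  obtain ⟨M, -, hM⟩ := exists_abs_le_on_Icc hψ.continuousOn
  exact hk.bdd_mul (hψ.measurable.comp hf.mono.measurable).aestronglyMeasurable
    (.of_forall fun x => hM _ (hf.mem_Icc x))

lemma smear_eq_integral_sub (k f : ℝ → ℝ) (x : ℝ) : smear k f x = ∫ y, f y * k (y - x) := by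
  rw [smear, ← integral_add_left_eq_self (fun y => f y * k (y - x)) x]
  simp

lemma hasCompactSupport_slice {g : ℝ → ℝ → ℝ} (hg : HasCompactSupport (uncurry g)) (t : ℝ) :
    HasCompactSupport (g t) :=
  HasCompactSupport.intro (hg.image continuous_snd) fun x hx =>
    image_eq_zero_of_notMem_tsupport (f := uncurry g) (x := (t, x)) fun h => hx ⟨_, h, rfl⟩

lemma exists_integrable_bound {g : ℝ → ℝ → ℝ} (hg : Continuous (uncurry g))
    (hc : HasCompactSupport (uncurry g)) : ∃ κ : ℝ → ℝ, Integrable κ ∧ ∀ t x, |g t x| ≤ κ x := by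
  obtain ⟨M, hM⟩ := hc.exists_bound_of_continuous hg
  set K := Prod.snd '' tsupport (uncurry g)
  have hK : IsCompact K := hc.image continuous_snd
  refine ⟨K.indicator fun _ => M, ?_, fun t x => ?_⟩
  · exact (integrable_indicator_iff hK.measurableSet).2 (integrableOn_const hK.measure_lt_top.ne)
  · by_cases hx : x ∈ K
    · simpa [hx] using hM (t, x)
    · have : uncurry g (t, x) = 0 := image_eq_zero_of_notMem_tsupport fun h => hx ⟨_, h, rfl⟩
      simpa [hx] using this

namespace IsCdfFlow

variable {F : ℝ → ℝ → ℝ} (hF : IsCdfFlow F)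
include hF

lemma continuousAt_uncurry {t x : ℝ} (h : ContinuousAt (F t) x) :
    ContinuousAt (uncurry F) (t, x) := by
  rw [Metric.continuousAt_iff']
  intro ε hε
  obtain ⟨δ, hδ, hδε⟩ := Metric.continuousAt_iff.1 h (ε / 2) (by positivity)
  obtain ⟨y, hy, hyc⟩ := exists_continuousAt_mem_Ioo (hF.mono t) (show x - δ < x by linarith)
  obtain ⟨z, hz, hzc⟩ := exists_continuousAt_mem_Ioo (hF.mono t) (show x < x + δ by linarith)
  have hFy := Metric.continuousAt_iff'.1 (hF.continuousAt_time t y hyc) (ε / 2) (by positivity)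
  have hFz := Metric.continuousAt_iff'.1 (hF.continuousAt_time t z hzc) (ε / 2) (by positivity)
  have hyz : ∀ᶠ w in 𝓝 x, y < w ∧ w < z := Ioo_mem_nhds hy.2 hz.1
  rw [nhds_prod_eq]
  filter_upwards [(hFy.and hFz).prod_mk hyz] with ⟨s, w⟩ ⟨⟨hsy, hsz⟩, hyw, hwz⟩
  have hty := @hδε y (by rw [Real.dist_eq, abs_lt]; constructor <;> linarith [hy.1, hy.2])
  have htz := @hδε z (by rw [Real.dist_eq, abs_lt]; constructor <;> linarith [hz.1, hz.2])
  have hle₁ := hF.mono s hyw.le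
  have hle₂ := hF.mono s hwz.le
  simp only [uncurry, Real.dist_eq, abs_lt] at *
  constructor <;> linarith

lemma continuous_integral_comp_mul {ψ : ℝ → ℝ} (hψ : Continuous ψ) {k : ℝ → ℝ → ℝ} {κ : ℝ → ℝ}
    (hk : Continuous (uncurry k)) (hκ : Integrable κ) (hkκ : ∀ t x, |k t x| ≤ κ x) :
    Continuous fun q : ℝ × ℝ => ∫ y, ψ (F q.1 (q.2 + y)) * k q.1 y := by
  obtain ⟨M, hM0, hM⟩ := exists_abs_le_on_Icc hψ.continuousOn
  rw [continuous_iff_continuousAt]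
  rintro ⟨t, x⟩
  apply tendsto_integral_filter_of_dominated_convergence fun y => M * κ y
  · refine .of_forall fun q => Measurable.aestronglyMeasurable ?_
    exact (hψ.measurable.comp ((hF.mono q.1).measurable.comp (measurable_const_add _))).mul
      (hk.measurable.comp measurable_prodMk_left)
  · refine .of_forall fun q => .of_forall fun y => ?_
    rw [norm_mul]
    exact mul_le_mul (hM _ (hF.mem_Icc _ _)) (hkκ _ _) (norm_nonneg _) hM0
  · exact hκ.const_mul M
  · have hae : ∀ᵐ y, ContinuousAt (F t) (x + y) :=
      (measurePreserving_add_left volume x).quasiMeasurePreserving.ae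
        (ae_continuousAt_of_monotone (hF.mono t))
    filter_upwards [hae] with y hy
    have hFy : ContinuousAt (fun q : ℝ × ℝ => uncurry F (q.1, q.2 + y)) (t, x) :=
      ContinuousAt.comp (g := uncurry F) (f := fun q : ℝ × ℝ => (q.1, q.2 + y))
        (hF.continuousAt_uncurry hy) (by fun_prop)
    exact (hψ.continuousAt.comp hFy).mul
      (hk.comp (by fun_prop : Continuous fun q : ℝ × ℝ => (q.1, y))).continuousAt

lemma continuous_smear {ψ k : ℝ → ℝ} (hψ : Continuous ψ) (hk : Continuous k)
    (hki : Integrable k) :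
    Continuous fun q : ℝ × ℝ => smear k (fun y => ψ (F q.1 y)) q.2 :=
  hF.continuous_integral_comp_mul (k := fun _ => k) hψ (hk.comp continuous_snd) hki.abs
    fun _ _ => le_rfl

lemma continuous_integral_slice {ψ : ℝ → ℝ} (hψ : Continuous ψ) {g : ℝ → ℝ → ℝ}
    (hg : Continuous (uncurry g)) (hc : HasCompactSupport (uncurry g)) :
    Continuous fun t => ∫ x, ψ (F t x) * g t x := by
  obtain ⟨κ, hκ, hgκ⟩ := exists_integrable_bound hg hc
  simpa [comp_def] using (hF.continuous_integral_comp_mul hψ hg hκ hgκ).comp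
    (continuous_id.prodMk (continuous_const (y := (0 : ℝ))))

lemma continuous_integral {ψ k : ℝ → ℝ} (hψ : Continuous ψ) (hk : Continuous k)
    (hki : Integrable k) : Continuous fun t => ∫ x, ψ (F t x) * k x := by
  simpa [comp_def, smear] using (hF.continuous_smear hψ hk hki).comp
    (continuous_id.prodMk (continuous_const (y := (0 : ℝ))))

lemma isSubCdf (t : ℝ) : IsSubCdf (F t) := ⟨hF.mono t, hF.mem_Icc t⟩

lemma integrable_comp_mul {ψ : ℝ → ℝ} (hψ : Continuous ψ) (t : ℝ) {k : ℝ → ℝ}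
    (hk : Integrable k) : Integrable fun x => ψ (F t x) * k x :=
  (hF.isSubCdf t).integrable_comp_mul hψ hk

end IsCdfFlow

/-! ### A one-sided mollifier -/

/-- The bump function underlying `mollifier n`, centred at its own outer radius. -/
def mollifierBump (n : ℕ) : ContDiffBump (1 / ((n : ℝ) + 1)) where
  rIn := 1 / (2 * ((n : ℝ) + 1))
  rOut := 1 / ((n : ℝ) + 1)
  rIn_pos := by positivity
  rIn_lt_rOut := one_div_lt_one_div_of_lt (by positivity) (by linarith [n.cast_nonneg (α := ℝ)])

/-- A smooth probability density supported in `[0, 2 / (n + 1)]`. -/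
def mollifier (n : ℕ) : ℝ → ℝ := (mollifierBump n).normed volume

lemma contDiff_mollifier (n : ℕ) : ContDiff ℝ (⊤ : ℕ∞) (mollifier n) :=
  (mollifierBump n).contDiff_normed

lemma mollifier_nonneg (n : ℕ) (y : ℝ) : 0 ≤ mollifier n y := (mollifierBump n).nonneg_normed y

lemma hasCompactSupport_mollifier (n : ℕ) : HasCompactSupport (mollifier n) :=
  (mollifierBump n).hasCompactSupport_normed

lemma integrable_mollifier (n : ℕ) : Integrable (mollifier n) := (mollifierBump n).integrable_normed

lemma integral_mollifier (n : ℕ) : ∫ y, mollifier n y = 1 := (mollifierBump n).integral_normed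

lemma mem_Ioo_of_mollifier_ne_zero {n : ℕ} {y : ℝ} (hy : mollifier n y ≠ 0) :
    y ∈ Ioo 0 (2 * (1 / ((n : ℝ) + 1))) := by
  have hmem : y ∈ support ((mollifierBump n).normed volume) := hy
  rw [ContDiffBump.support_normed_eq, Metric.mem_ball, Real.dist_eq, abs_lt] at hmem
  simp only [mollifierBump] at hmem
  constructor <;> linarith [hmem.1, hmem.2]

lemma tendsto_smear_mollifier {f : ℝ → ℝ} {M x : ℝ} (hf : Measurable f) (hM : ∀ y, |f y| ≤ M)
    (hx : ContinuousWithinAt f (Ici x) x) :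
    Tendsto (fun n => smear (mollifier n) f x) atTop (𝓝 (f x)) := by
  rw [Metric.tendsto_atTop']
  intro ε hε
  obtain ⟨δ, hδ, hδε⟩ := Metric.continuousWithinAt_iff.1 hx (ε / 2) (by positivity)
  have hlim : Tendsto (fun n : ℕ => 2 * (1 / ((n : ℝ) + 1))) atTop (𝓝 0) := by
    simpa using tendsto_one_div_add_atTop_nhds_zero_nat.const_mul (2 : ℝ)
  obtain ⟨N, hN⟩ := (hlim.eventually_lt_const hδ).exists_forall_of_atTop
  refine ⟨N, fun n hn => ?_⟩
  have hint : Integrable fun y => f (x + y) * mollifier n y :=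
    (integrable_mollifier n).bdd_mul
      (hf.comp (measurable_const_add x)).aestronglyMeasurable (.of_forall fun y => hM _)
  have hdiff : smear (mollifier n) f x - f x = ∫ y, (f (x + y) - f x) * mollifier n y := by
    simp only [sub_mul]
    rw [integral_sub hint ((integrable_mollifier n).const_mul _), integral_const_mul,
      integral_mollifier, mul_one, smear]
  have hbound : ∀ y, ‖(f (x + y) - f x) * mollifier n y‖ ≤ ε / 2 * mollifier n y := by
    intro y
    by_cases hy : mollifier n y = 0
    · simp [hy]
    · obtain ⟨hy0, hy1⟩ := mem_Ioo_of_mollifier_ne_zero hy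
      have hclose := hδε (x := x + y) (by simp [hy0.le])
        (by simpa [Real.dist_eq, abs_of_pos hy0] using hy1.trans (hN n hn.le))
      rw [norm_mul, Real.norm_of_nonneg (mollifier_nonneg n y)]
      exact mul_le_mul_of_nonneg_right hclose.le (mollifier_nonneg n y)
  rw [Real.dist_eq, hdiff]
  calc ‖∫ y, (f (x + y) - f x) * mollifier n y‖
      ≤ ∫ y, ε / 2 * mollifier n y :=
        norm_integral_le_of_norm_le ((integrable_mollifier n).const_mul _) (.of_forall hbound)
    _ = ε / 2 := by rw [integral_const_mul, integral_mollifier, mul_one]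
    _ < ε := by linarith

lemma IsCdfFlow.tendsto_smear {F : ℝ → ℝ → ℝ} (hF : IsCdfFlow F) {ψ : ℝ → ℝ} (hψ : Continuous ψ)
    (t x : ℝ) :
    Tendsto (fun n => smear (mollifier n) (fun y => ψ (F t y)) x) atTop (𝓝 (ψ (F t x))) := by
  obtain ⟨M, -, hM⟩ := exists_abs_le_on_Icc hψ.continuousOn
  exact tendsto_smear_mollifier (hψ.measurable.comp (hF.mono t).measurable)
    (fun y => hM _ (hF.mem_Icc t y)) (hψ.continuousAt.comp_continuousWithinAt (hF.rightCont t x))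

lemma IsCdfFlow.measurable_uncurry {F : ℝ → ℝ → ℝ} (hF : IsCdfFlow F) : Measurable (uncurry F) :=
  measurable_of_tendsto_metrizable
    (fun n => (hF.continuous_smear continuous_id (contDiff_mollifier n).continuous
      (integrable_mollifier n)).measurable)
    (tendsto_pi_nhds.2 fun q => hF.tendsto_smear continuous_id q.1 q.2)

/-! ### Weak solutions tested against functions of space only -/

/-- The pairing of the spatial operator `(1/2) ∂ₓₓ (A f) - ∂ₓ (B f)` with the test function `φ`. -/
def fluxPairing (A B f φ : ℝ → ℝ) : ℝ :=
  ∫ x, ((1 / 2) * A (f x) * deriv (deriv φ) x + B (f x) * deriv φ x)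

/-- The weak formulation of the Cauchy problem against time-independent test functions. -/
def IsSpatialWeakSolution (A B F₀ : ℝ → ℝ) (F : ℝ → ℝ → ℝ) : Prop :=
  ∀ φ : ℝ → ℝ, ContDiff ℝ (⊤ : ℕ∞) φ → HasCompactSupport φ → ∀ t : ℝ, 0 ≤ t →
    (∫ x, φ x * F t x) - (∫ x, φ x * F₀ x) = ∫ s in (0 : ℝ)..t, fluxPairing A B (F s) φ

lemma contDiff_deriv {φ : ℝ → ℝ} (hφ : ContDiff ℝ (⊤ : ℕ∞) φ) :
    ContDiff ℝ (⊤ : ℕ∞) (deriv φ) :=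
  (contDiff_infty_iff_deriv.1 hφ).2

lemma integrable_of_smooth {φ : ℝ → ℝ} (hφ : ContDiff ℝ (⊤ : ℕ∞) φ) (hc : HasCompactSupport φ) :
    Integrable φ :=
  hφ.continuous.integrable_of_hasCompactSupport hc

lemma contDiff_slice {g : ℝ → ℝ → ℝ} (hg : ContDiff ℝ (⊤ : ℕ∞) (uncurry g)) (t : ℝ) :
    ContDiff ℝ (⊤ : ℕ∞) (g t) :=
  hg.comp (contDiff_prodMk_right t)

section PartialDerivatives

variable {g : ℝ → ℝ → ℝ}

lemma hasDerivAt_space (hg : ContDiff ℝ (⊤ : ℕ∞) (uncurry g)) (s x : ℝ) :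
    HasDerivAt (g s) (fderiv ℝ (uncurry g) (s, x) (0, 1)) x :=
  ((hg.differentiable (by simp)) (s, x)).hasFDerivAt.comp_hasDerivAt x (f := fun y => (s, y))
    ((hasDerivAt_const x s).prodMk (hasDerivAt_id x))

lemma hasDerivAt_time (hg : ContDiff ℝ (⊤ : ℕ∞) (uncurry g)) (s x : ℝ) :
    HasDerivAt (fun r => g r x) (fderiv ℝ (uncurry g) (s, x) (1, 0)) s :=
  ((hg.differentiable (by simp)) (s, x)).hasFDerivAt.comp_hasDerivAt s (f := fun r => (r, x))
    ((hasDerivAt_id s).prodMk (hasDerivAt_const s x))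

lemma contDiff_directional (hg : ContDiff ℝ (⊤ : ℕ∞) (uncurry g)) (v : ℝ × ℝ) :
    ContDiff ℝ (⊤ : ℕ∞) fun p => fderiv ℝ (uncurry g) p v :=
  (hg.fderiv_right (by simp)).clm_apply contDiff_const

lemma hasCompactSupport_directional (hc : HasCompactSupport (uncurry g)) (v : ℝ × ℝ) :
    HasCompactSupport fun p => fderiv ℝ (uncurry g) p v :=
  (hc.fderiv ℝ).comp_left (g := fun L : ℝ × ℝ →L[ℝ] ℝ => L v) (by simp)

lemma contDiff_space_deriv (hg : ContDiff ℝ (⊤ : ℕ∞) (uncurry g)) :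
    ContDiff ℝ (⊤ : ℕ∞) (uncurry fun s => deriv (g s)) := by
  convert contDiff_directional hg (0, 1) using 2 with ⟨s, x⟩
  exact (hasDerivAt_space hg s x).deriv

lemma hasCompactSupport_space_deriv (hg : ContDiff ℝ (⊤ : ℕ∞) (uncurry g))
    (hc : HasCompactSupport (uncurry g)) :
    HasCompactSupport (uncurry fun s => deriv (g s)) := by
  convert hasCompactSupport_directional hc (0, 1) using 2 with ⟨s, x⟩
  exact (hasDerivAt_space hg s x).deriv

lemma contDiff_time_deriv (hg : ContDiff ℝ (⊤ : ℕ∞) (uncurry g)) :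
    ContDiff ℝ (⊤ : ℕ∞) (uncurry fun s x => deriv (fun r => g r x) s) := by
  convert contDiff_directional hg (1, 0) using 2 with ⟨s, x⟩
  exact (hasDerivAt_time hg s x).deriv

lemma hasCompactSupport_time_deriv (hg : ContDiff ℝ (⊤ : ℕ∞) (uncurry g))
    (hc : HasCompactSupport (uncurry g)) :
    HasCompactSupport (uncurry fun s x => deriv (fun r => g r x) s) := by
  convert hasCompactSupport_directional hc (1, 0) using 2 with ⟨s, x⟩
  exact (hasDerivAt_time hg s x).deriv

end PartialDerivatives

section DominatedFubini

variable {H : ℝ → ℝ → ℝ} {κ : ℝ → ℝ} {t : ℝ}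

lemma integrable_prod_of_le (hH : Measurable (uncurry H)) (hκ : Integrable κ)
    (hHκ : ∀ s ∈ Ioc 0 t, ∀ x, |H s x| ≤ κ x) :
    Integrable (uncurry fun x s => H s x) (volume.prod (volume.restrict (Ioc 0 t))) := by
  have hmem : ∀ᵐ p ∂(volume : Measure ℝ).prod (volume.restrict (Ioc 0 t)), p.2 ∈ Ioc 0 t :=
    Measure.quasiMeasurePreserving_snd.ae (ae_restrict_mem measurableSet_Ioc)
  exact (hκ.comp_fst _).mono' (hH.comp measurable_swap).aestronglyMeasurable
    (hmem.mono fun p hp => hHκ p.2 hp p.1)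

lemma intervalIntegrable_integral (hH : Measurable (uncurry H)) (hκ : Integrable κ) (ht : 0 ≤ t)
    (hHκ : ∀ s ∈ Ioc 0 t, ∀ x, |H s x| ≤ κ x) :
    IntervalIntegrable (fun s => ∫ x, H s x) volume 0 t :=
  (intervalIntegrable_iff_integrableOn_Ioc_of_le ht).2
    (integrable_prod_of_le hH hκ hHκ).integral_prod_right

lemma integral_intervalIntegral_swap (hH : Measurable (uncurry H)) (hκ : Integrable κ) (ht : 0 ≤ t)
    (hHκ : ∀ s ∈ Ioc 0 t, ∀ x, |H s x| ≤ κ x) :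
    ∫ x, ∫ s in (0 : ℝ)..t, H s x = ∫ s in (0 : ℝ)..t, ∫ x, H s x := by
  simp only [intervalIntegral.integral_of_le ht]
  exact integral_integral_swap (integrable_prod_of_le hH hκ hHκ)

end DominatedFubini

namespace IsCdfFlow

variable {F : ℝ → ℝ → ℝ} {A B F₀ : ℝ → ℝ}

lemma integral_flux_swap (hF : IsCdfFlow F) (hA : Continuous A) (hB : Continuous B)
    {k₀ k₁ k₂ : ℝ → ℝ → ℝ} {κ₀ κ₁ κ₂ : ℝ → ℝ} (hk₀ : Measurable (uncurry k₀))
    (hk₁ : Measurable (uncurry k₁)) (hk₂ : Measurable (uncurry k₂)) (hκ₀ : Integrable κ₀)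
    (hκ₁ : Integrable κ₁) (hκ₂ : Integrable κ₂) (hb₀ : ∀ s x, |k₀ s x| ≤ κ₀ x)
    (hb₁ : ∀ s x, |k₁ s x| ≤ κ₁ x) (hb₂ : ∀ s x, |k₂ s x| ≤ κ₂ x) {t : ℝ} (ht : 0 ≤ t) :
    (∫ x, ∫ s in (0 : ℝ)..t,
        ((1 / 2) * A (F s x) * k₂ s x + B (F s x) * k₁ s x + F s x * k₀ s x)) =
      ∫ s in (0 : ℝ)..t, ∫ x,
        ((1 / 2) * A (F s x) * k₂ s x + B (F s x) * k₁ s x + F s x * k₀ s x) := by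
  obtain ⟨MA, hMA0, hMA⟩ := exists_abs_le_on_Icc hA.continuousOn
  obtain ⟨MB, hMB0, hMB⟩ := exists_abs_le_on_Icc hB.continuousOn
  have hFm := hF.measurable_uncurry
  refine integral_intervalIntegral_swap (κ := fun x => (1 / 2) * MA * κ₂ x + MB * κ₁ x + 1 * κ₀ x)
    ?_ (((hκ₂.const_mul _).add (hκ₁.const_mul _)).add (hκ₀.const_mul _)) ht fun s _ x => ?_
  · exact ((((hA.measurable.comp hFm).const_mul (1 / 2)).mul hk₂).add
      ((hB.measurable.comp hFm).mul hk₁)).add (hFm.mul hk₀)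
  · have hF01 := hF.mem_Icc s x
    refine (abs_add_le _ _).trans (add_le_add ((abs_add_le _ _).trans ?_) ?_)
    · rw [abs_mul, abs_mul, abs_mul, abs_of_pos (one_half_pos (α := ℝ))]
      gcongr
      exacts [hMA _ hF01, hb₂ s x, hMB _ hF01, hb₁ s x]
    · rw [abs_mul, abs_of_nonneg hF01.1]
      gcongr
      exacts [hF01.2, hb₀ s x]

lemma fluxPairing_eq (hF : IsCdfFlow F) (hA : Continuous A) (hB : Continuous B) {φ : ℝ → ℝ}
    (hφ : ContDiff ℝ (⊤ : ℕ∞) φ) (hc : HasCompactSupport φ) (t : ℝ) :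
    fluxPairing A B (F t) φ =
      (1 / 2) * (∫ x, A (F t x) * deriv (deriv φ) x) + ∫ x, B (F t x) * deriv φ x := by
  have h1 := contDiff_deriv hφ
  have hAi := hF.integrable_comp_mul hA t
    (integrable_of_smooth (contDiff_deriv h1) hc.deriv.deriv)
  have hBi := hF.integrable_comp_mul hB t (integrable_of_smooth h1 hc.deriv)
  rw [fluxPairing, ← integral_const_mul, ← integral_add (hAi.const_mul _) hBi]
  simp only [mul_assoc]

lemma continuous_fluxPairing_slice (hF : IsCdfFlow F) (hA : Continuous A) (hB : Continuous B)
    {g : ℝ → ℝ → ℝ} (hg : ContDiff ℝ (⊤ : ℕ∞) (uncurry g)) (hc : HasCompactSupport (uncurry g)) :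
    Continuous fun t => fluxPairing A B (F t) (g t) := by
  simp only [fun t => hF.fluxPairing_eq hA hB (contDiff_slice hg t)
    (hasCompactSupport_slice hc t) t]
  have h1 := contDiff_space_deriv hg
  have hc1 := hasCompactSupport_space_deriv hg hc
  exact (continuous_const.mul (hF.continuous_integral_slice hA
    (contDiff_space_deriv h1).continuous (hasCompactSupport_space_deriv h1 hc1))).add
    (hF.continuous_integral_slice hB h1.continuous hc1)

lemma continuous_fluxPairing (hF : IsCdfFlow F) (hA : Continuous A) (hB : Continuous B)
    {φ : ℝ → ℝ} (hφ : ContDiff ℝ (⊤ : ℕ∞) φ) (hc : HasCompactSupport φ) :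
    Continuous fun t => fluxPairing A B (F t) φ := by
  simp only [hF.fluxPairing_eq hA hB hφ hc]
  have h1 := contDiff_deriv hφ
  have h2 := contDiff_deriv h1
  exact (continuous_const.mul (hF.continuous_integral hA h2.continuous
    (integrable_of_smooth h2 hc.deriv.deriv))).add
    (hF.continuous_integral hB h1.continuous (integrable_of_smooth h1 hc.deriv))

end IsCdfFlow

lemma exists_smooth_eventuallyEq_one (t : ℝ) :
    ∃ χ : ℝ → ℝ, ContDiff ℝ (⊤ : ℕ∞) χ ∧ HasCompactSupport χ ∧
      ∀ s ∈ Icc 0 t, χ =ᶠ[𝓝 s] fun _ => 1 := by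
  let χ : ContDiffBump (0 : ℝ) := ⟨|t| + 1, |t| + 2, by positivity, by linarith⟩
  refine ⟨χ, χ.contDiff, χ.hasCompactSupport, fun s hs => ?_⟩
  have hs' : s ∈ Metric.ball (0 : ℝ) (|t| + 1) := by
    rw [mem_ball_zero_iff, Real.norm_of_nonneg hs.1]
    linarith [hs.2, le_abs_self t]
  filter_upwards [Metric.isOpen_ball.mem_nhds hs'] with r hr
  exact χ.one_of_mem_closedBall (Metric.ball_subset_closedBall hr)

lemma hasCompactSupport_uncurry_mul {χ φ : ℝ → ℝ} (hχ : HasCompactSupport χ)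
    (hφ : HasCompactSupport φ) : HasCompactSupport (uncurry fun s x => χ s * φ x) := by
  refine HasCompactSupport.intro (hχ.prod hφ) ?_
  rintro ⟨s, x⟩ hsx
  by_contra hne
  exact hsx ⟨subset_tsupport _ (left_ne_zero_of_mul hne),
    subset_tsupport _ (right_ne_zero_of_mul hne)⟩

namespace IsCdfFlow

variable {F : ℝ → ℝ → ℝ} {A B F₀ : ℝ → ℝ}

lemma isSpatialWeakSolution (hF : IsCdfFlow F) (hA : Continuous A) (hB : Continuous B)
    (hW : IsWeakSolution A B F₀ F) : IsSpatialWeakSolution A B F₀ F := by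
  intro φ hφ hc t ht
  obtain ⟨χ, hχ, hχc, hχ1⟩ := exists_smooth_eventuallyEq_one t
  have hweak := hW (fun s x => χ s * φ x) ((hχ.comp contDiff_fst).mul (hφ.comp contDiff_snd))
    (hasCompactSupport_uncurry_mul hχc hc) t ht
  simp only [(hχ1 t ⟨ht, le_rfl⟩).eq_of_nhds, (hχ1 0 ⟨le_rfl, ht⟩).eq_of_nhds, one_mul] at hweak
  have hpt : ∀ x, (∫ s in (0 : ℝ)..t, ((1 / 2) * A (F s x) * deriv (deriv fun y => χ s * φ y) x
        + B (F s x) * deriv (fun y => χ s * φ y) x + F s x * deriv (fun r => χ r * φ x) s)) =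
      ∫ s in (0 : ℝ)..t,
        ((1 / 2) * A (F s x) * deriv (deriv φ) x + B (F s x) * deriv φ x + F s x * 0) := by
    intro x
    refine intervalIntegral.integral_congr fun s hs => ?_
    rw [uIcc_of_le ht] at hs
    have htime : deriv (fun r => χ r * φ x) s = 0 := by
      have hloc : (fun r => χ r * φ x) =ᶠ[𝓝 s] fun _ => φ x := by
        filter_upwards [hχ1 s hs] with r hr using by rw [hr, one_mul]
      rw [hloc.deriv_eq, deriv_const]
    simp only [(hχ1 s hs).eq_of_nhds, one_mul, htime]
  have h1 := contDiff_deriv hφ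
  have h2 := contDiff_deriv h1
  rw [hweak]
  simp only [hpt]
  rw [hF.integral_flux_swap hA hB (k₀ := fun _ _ => 0) (k₁ := fun _ => deriv φ)
    (k₂ := fun _ => deriv (deriv φ)) measurable_const (h1.continuous.measurable.comp measurable_snd)
    (h2.continuous.measurable.comp measurable_snd) (integrable_zero ℝ ℝ volume)
    (integrable_of_smooth h1 hc.deriv).abs (integrable_of_smooth h2 hc.deriv.deriv).abs
    (fun _ _ => abs_zero.le) (fun _ _ => le_rfl) (fun _ _ => le_rfl) ht]
  simp only [fluxPairing, mul_zero, add_zero]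

lemma hasDerivAt_integral_mul_sub (hF : IsCdfFlow F) {g : ℝ → ℝ → ℝ}
    (hg : ContDiff ℝ (⊤ : ℕ∞) (uncurry g)) (hc : HasCompactSupport (uncurry g)) (t : ℝ) :
    HasDerivAt (fun s => ∫ x, F s x * (g s x - g t x))
      (∫ x, F t x * deriv (fun r => g r x) t) t := by
  have hgt : ∀ s x, HasDerivAt (fun r => g r x) (deriv (fun r => g r x) s) s := fun s x =>
    (hasDerivAt_time hg s x).differentiableAt.hasDerivAt
  obtain ⟨κ, hκ, hb⟩ := exists_integrable_bound (contDiff_time_deriv hg).continuous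
    (hasCompactSupport_time_deriv hg hc)
  rw [hasDerivAt_iff_tendsto_slope]
  have hslope : ∀ s, slope (fun s => ∫ x, F s x * (g s x - g t x)) t s
      = ∫ x, F s x * slope (fun r => g r x) t s := by
    intro s
    simp only [slope_def_field, sub_self, mul_zero, integral_zero, sub_zero, ← integral_div,
      mul_div_assoc]
  refine Tendsto.congr (fun s => (hslope s).symm) ?_
  apply tendsto_integral_filter_of_dominated_convergence κ
  · refine .of_forall fun s => Measurable.aestronglyMeasurable ?_
    simp only [slope_def_field]
    exact (hF.mono s).measurable.mul (((contDiff_slice hg s).continuous.measurable.sub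
      (contDiff_slice hg t).continuous.measurable).div_const _)
  · filter_upwards [self_mem_nhdsWithin] with s hs
    refine .of_forall fun x => ?_
    have hmvt : ‖g s x - g t x‖ ≤ κ x * ‖s - t‖ :=
      convex_univ.norm_image_sub_le_of_norm_hasDerivWithin_le (f := fun r => g r x)
        (fun r _ => (hgt r x).hasDerivWithinAt) (fun r _ => hb r x) trivial trivial
    rw [norm_mul, slope_def_field, norm_div, Real.norm_of_nonneg (hF.mem_Icc s x).1]
    exact (mul_le_of_le_one_left (by positivity) (hF.mem_Icc s x).2).trans
      ((div_le_iff₀ (norm_pos_iff.2 (sub_ne_zero.2 hs))).2 hmvt)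
  · exact hκ
  · filter_upwards [ae_continuousAt_of_monotone (hF.mono t)] with x hx
    exact ((hF.continuousAt_time t x hx).tendsto.mono_left nhdsWithin_le_nhds).mul
      (hasDerivAt_iff_tendsto_slope.1 (hgt t x))

lemma hasDerivAt_integral_mul (hF : IsCdfFlow F) (hA : Continuous A) (hB : Continuous B)
    (hW : IsSpatialWeakSolution A B F₀ F) {g : ℝ → ℝ → ℝ}
    (hg : ContDiff ℝ (⊤ : ℕ∞) (uncurry g)) (hc : HasCompactSupport (uncurry g)) {t : ℝ}
    (ht : 0 < t) :
    HasDerivAt (fun s => ∫ x, F s x * g s x)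
      (fluxPairing A B (F t) (g t) + ∫ x, F t x * deriv (fun r => g r x) t) t := by
  have hgt := contDiff_slice hg t
  have hgtc := hasCompactSupport_slice hc t
  have hflux := hF.continuous_fluxPairing hA hB hgt hgtc
  have hfrozen : HasDerivAt
      (fun r => (∫ x, g t x * F₀ x) + ∫ q in (0 : ℝ)..r, fluxPairing A B (F q) (g t))
      (fluxPairing A B (F t) (g t)) t :=
    (intervalIntegral.integral_hasDerivAt_right (hflux.intervalIntegrable _ _)
      (hflux.stronglyMeasurableAtFilter _ _) hflux.continuousAt).const_add _
  refine (hfrozen.add (hF.hasDerivAt_integral_mul_sub hg hc t)).congr_of_eventuallyEq ?_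
  filter_upwards [Ioi_mem_nhds ht] with r hr
  have hint : ∀ s, Integrable fun x => F r x * g s x := fun s =>
    hF.integrable_comp_mul continuous_id r
      (integrable_of_smooth (contDiff_slice hg s) (hasCompactSupport_slice hc s))
  simp only [Pi.add_apply]
  rw [← hW (g t) hgt hgtc r (le_of_lt hr), add_sub_cancel]
  simp only [mul_sub, mul_comm (g t _)]
  rw [integral_sub (hint r) (hint t), add_sub_cancel]

lemma isWeakSolution (hF : IsCdfFlow F) (hA : Continuous A) (hB : Continuous B)
    (hW : IsSpatialWeakSolution A B F₀ F) : IsWeakSolution A B F₀ F := by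
  intro g hg hc t ht
  have hgt := contDiff_time_deriv hg
  have hgtc := hasCompactSupport_time_deriv hg hc
  have hgx := contDiff_space_deriv hg
  have hgxc := hasCompactSupport_space_deriv hg hc
  have hgxx := contDiff_space_deriv hgx
  have hgxxc := hasCompactSupport_space_deriv hgx hgxc
  obtain ⟨κ₀, hκ₀, hb₀⟩ := exists_integrable_bound hgt.continuous hgtc
  obtain ⟨κ₁, hκ₁, hb₁⟩ := exists_integrable_bound hgx.continuous hgxc
  obtain ⟨κ₂, hκ₂, hb₂⟩ := exists_integrable_bound hgxx.continuous hgxxc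
  have hsplit : ∀ s, (∫ x, ((1 / 2) * A (F s x) * deriv (deriv (g s)) x
      + B (F s x) * deriv (g s) x + F s x * deriv (fun r => g r x) s)) =
        fluxPairing A B (F s) (g s) + ∫ x, F s x * deriv (fun r => g r x) s := by
    intro s
    have hi₂ := (hF.integrable_comp_mul hA s (integrable_of_smooth (contDiff_slice hgxx s)
      (hasCompactSupport_slice hgxxc s))).const_mul (1 / 2)
    have hi₁ := hF.integrable_comp_mul hB s (integrable_of_smooth (contDiff_slice hgx s)
      (hasCompactSupport_slice hgxc s))
    have hi₀ : Integrable fun x => F s x * deriv (fun r => g r x) s :=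
      hF.integrable_comp_mul continuous_id s (integrable_of_smooth (contDiff_slice hgt s)
        (hasCompactSupport_slice hgtc s))
    rw [fluxPairing, ← integral_add _ hi₀]
    simp only [← mul_assoc] at hi₂
    exact hi₂.add hi₁
  rw [hF.integral_flux_swap hA hB (k₀ := fun s x => deriv (fun r => g r x) s)
    (k₁ := fun s => deriv (g s)) (k₂ := fun s => deriv (deriv (g s))) hgt.continuous.measurable
    hgx.continuous.measurable hgxx.continuous.measurable hκ₀ hκ₁ hκ₂ hb₀ hb₁ hb₂ ht]
  simp only [hsplit]
  rw [intervalIntegral.integral_eq_sub_of_hasDerivAt_of_le ht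
    (hF.continuous_integral_slice continuous_id hg.continuous hc).continuousOn
    (fun s hs => hF.hasDerivAt_integral_mul hA hB hW hg hc hs.1)
    (((hF.continuous_fluxPairing_slice hA hB hg hc).add
      (hF.continuous_integral_slice continuous_id hgt.continuous hgtc)).intervalIntegrable _ _)]
  have hinit := hW (g 0) (contDiff_slice hg 0) (hasCompactSupport_slice hc 0) 0 le_rfl
  rw [intervalIntegral.integral_same, sub_eq_zero] at hinit
  simp only [id, ← hinit, mul_comm (F _ _)]

end IsCdfFlow

/-! ### Uniqueness: the mollified potential of the difference of two solutions -/

/-- The difference `ψ(F) - ψ(G)` at time `t`. -/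
def gap (ψ : ℝ → ℝ) (F G : ℝ → ℝ → ℝ) (t x : ℝ) : ℝ := ψ (F t x) - ψ (G t x)

/-- The mollification of `(1/2) ∂ₓ (A F - A G) - (B F - B G)`, with the derivative put on the
kernel. -/
def fluxGap (k A B : ℝ → ℝ) (F G : ℝ → ℝ → ℝ) (t x : ℝ) : ℝ :=
  -((1 / 2) * smear (deriv k) (gap A F G t) x) - smear k (gap B F G t) x

/-- The primitive in time of `fluxGap`. For two solutions with the same initial condition it is
also a primitive in space of the mollification of `F - G`. -/
def potential (k A B : ℝ → ℝ) (F G : ℝ → ℝ → ℝ) (t x : ℝ) : ℝ :=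
  ∫ s in (0 : ℝ)..t, fluxGap k A B F G s x

lemma abs_smear_le {k f : ℝ → ℝ} {M : ℝ} (hk : Integrable k) (hM : ∀ y, |f y| ≤ M) (x : ℝ) :
    |smear k f x| ≤ M * ∫ y, |k y| := by
  rw [← integral_const_mul, smear, ← Real.norm_eq_abs]
  refine norm_integral_le_of_norm_le (hk.abs.const_mul M) (.of_forall fun y => ?_)
  rw [norm_mul]
  exact mul_le_mul_of_nonneg_right (hM _) (norm_nonneg _)

lemma abs_smear_mollifier_le {f : ℝ → ℝ} {M : ℝ} (n : ℕ) (hM : ∀ y, |f y| ≤ M) (x : ℝ) :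
    |smear (mollifier n) f x| ≤ M := by
  simpa [abs_of_nonneg (mollifier_nonneg n _), integral_mollifier] using
    abs_smear_le (integrable_mollifier n) hM x

lemma hasDerivAt_smear {k f : ℝ → ℝ} (hk : ContDiff ℝ 1 k) (hc : HasCompactSupport k)
    (hf : LocallyIntegrable f) (x : ℝ) : HasDerivAt (smear k f) (-smear (deriv k) f x) x := by
  have hconv := (hc.comp_homeomorph (Homeomorph.neg ℝ)).hasDerivAt_convolution_right
    (ContinuousLinearMap.mul ℝ ℝ) hf (hk.comp contDiff_neg) x
  have hneg : deriv (k ∘ Homeomorph.neg ℝ) = fun z => -deriv k (-z) := by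
    ext z
    exact deriv_comp_neg k z
  rw [hneg] at hconv
  refine (hconv.congr_deriv ?_).congr_of_eventuallyEq (.of_forall fun z => ?_)
  · simp [convolution, smear_eq_integral_sub, integral_neg]
  · simp [convolution, smear_eq_integral_sub]

lemma abs_intervalIntegral_le {f : ℝ → ℝ} {M : ℝ} (hM : ∀ z, |f z| ≤ M) (a b : ℝ) :
    |∫ z in a..b, f z| ≤ M * |b - a| :=
  intervalIntegral.norm_integral_le_of_norm_le_const (f := f) fun z _ => hM z

lemma intervalIntegral_intervalIntegral_of_hasDerivAt {u v : ℝ → ℝ → ℝ}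
    (hv : Continuous (uncurry v)) (hu : ∀ s z, HasDerivAt (u s) (v s z) z) (t x y : ℝ) :
    ∫ z in x..y, ∫ s in (0 : ℝ)..t, v s z = ∫ s in (0 : ℝ)..t, (u s y - u s x) := by
  rw [← intervalIntegral_intervalIntegral_swap]
  · refine intervalIntegral.integral_congr fun s _ => ?_
    exact intervalIntegral.integral_eq_sub_of_hasDerivAt (fun z _ => hu s z)
      ((hv.comp (Continuous.prodMk_right s)).intervalIntegrable _ _)
  · exact (hv.continuousOn.integrableOn_compact (isCompact_uIcc.prod isCompact_uIcc)).mono_set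
        (prod_mono uIoc_subset_uIcc uIoc_subset_uIcc)

lemma abs_gap_id_le_one {F G : ℝ → ℝ → ℝ} (hF : IsCdfFlow F) (hG : IsCdfFlow G) (t x : ℝ) :
    |gap id F G t x| ≤ 1 := by
  obtain ⟨hF0, hF1⟩ := hF.mem_Icc t x
  obtain ⟨hG0, hG1⟩ := hG.mem_Icc t x
  rw [gap, id, id, abs_le]
  constructor <;> linarith

section Gap

variable {F G : ℝ → ℝ → ℝ} {ψ k : ℝ → ℝ}

lemma exists_abs_gap_le (hF : IsCdfFlow F) (hG : IsCdfFlow G) (hψ : Continuous ψ) :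
    ∃ M, 0 ≤ M ∧ ∀ t x, |gap ψ F G t x| ≤ M := by
  obtain ⟨M, hM0, hM⟩ := exists_abs_le_on_Icc hψ.continuousOn
  refine ⟨M + M, by positivity, fun t x => (abs_sub _ _).trans ?_⟩
  exact add_le_add (hM _ (hF.mem_Icc t x)) (hM _ (hG.mem_Icc t x))

lemma locallyIntegrable_gap (hF : IsCdfFlow F) (hG : IsCdfFlow G) (hψ : Continuous ψ) (t : ℝ) :
    LocallyIntegrable (gap ψ F G t) := by
  obtain ⟨M, hM0, hM⟩ := exists_abs_gap_le hF hG hψ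
  refine (locallyIntegrable_const M).mono ((hψ.measurable.comp (hF.mono t).measurable).sub
    (hψ.measurable.comp (hG.mono t).measurable)).aestronglyMeasurable (.of_forall fun x => ?_)
  rw [Real.norm_of_nonneg hM0]
  exact hM t x

lemma smear_gap (hF : IsCdfFlow F) (hG : IsCdfFlow G) (hψ : Continuous ψ) (hk : Integrable k)
    (t x : ℝ) : smear k (gap ψ F G t) x =
      smear k (fun y => ψ (F t y)) x - smear k (fun y => ψ (G t y)) x := by
  simp only [smear_eq_integral_sub]
  rw [← integral_sub (hF.integrable_comp_mul hψ t (hk.comp_sub_right x))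
    (hG.integrable_comp_mul hψ t (hk.comp_sub_right x))]
  simp only [gap, sub_mul]

lemma continuous_smear_gap (hF : IsCdfFlow F) (hG : IsCdfFlow G) (hψ : Continuous ψ)
    (hk : Continuous k) (hki : Integrable k) :
    Continuous fun q : ℝ × ℝ => smear k (gap ψ F G q.1) q.2 := by
  simp only [smear_gap hF hG hψ hki]
  exact (hF.continuous_smear hψ hk hki).sub (hG.continuous_smear hψ hk hki)

lemma tendsto_smear_gap (hF : IsCdfFlow F) (hG : IsCdfFlow G) (hψ : Continuous ψ) (t x : ℝ) :
    Tendsto (fun n => smear (mollifier n) (gap ψ F G t) x) atTop (𝓝 (gap ψ F G t x)) := by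
  simp only [smear_gap hF hG hψ (integrable_mollifier _)]
  exact (hF.tendsto_smear hψ t x).sub (hG.tendsto_smear hψ t x)

end Gap

section Potential

variable {F G : ℝ → ℝ → ℝ} {A B F₀ k : ℝ → ℝ}

lemma continuous_fluxGap (hF : IsCdfFlow F) (hG : IsCdfFlow G) (hA : Continuous A)
    (hB : Continuous B) (hk : ContDiff ℝ (⊤ : ℕ∞) k) (hc : HasCompactSupport k) :
    Continuous (uncurry (fluxGap k A B F G)) :=
  (((continuous_smear_gap hF hG hA (contDiff_deriv hk).continuous
    (integrable_of_smooth (contDiff_deriv hk) hc.deriv)).const_mul (1 / 2)).neg).sub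
      (continuous_smear_gap hF hG hB hk.continuous (integrable_of_smooth hk hc))

lemma hasDerivAt_smear_gap (hF : IsCdfFlow F) (hG : IsCdfFlow G) {ψ : ℝ → ℝ} (hψ : Continuous ψ)
    (hk : ContDiff ℝ (⊤ : ℕ∞) k) (hc : HasCompactSupport k) (t x : ℝ) :
    HasDerivAt (smear k (gap ψ F G t)) (-smear (deriv k) (gap ψ F G t) x) x :=
  hasDerivAt_smear (hk.of_le (by simp)) hc (locallyIntegrable_gap hF hG hψ t) x

lemma hasDerivAt_fluxGap (hF : IsCdfFlow F) (hG : IsCdfFlow G) (hA : Continuous A)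
    (hB : Continuous B) (hk : ContDiff ℝ (⊤ : ℕ∞) k) (hc : HasCompactSupport k) (s x : ℝ) :
    HasDerivAt (fluxGap k A B F G s)
      ((1 / 2) * smear (deriv (deriv k)) (gap A F G s) x + smear (deriv k) (gap B F G s) x) x := by
  refine ((((hasDerivAt_smear_gap hF hG hA (contDiff_deriv hk) hc.deriv s x).const_mul
    (1 / 2)).neg).sub (hasDerivAt_smear_gap hF hG hB hk hc s x)).congr_deriv ?_
  ring

lemma continuous_potential (hF : IsCdfFlow F) (hG : IsCdfFlow G) (hA : Continuous A)
    (hB : Continuous B) (hk : ContDiff ℝ (⊤ : ℕ∞) k) (hc : HasCompactSupport k) :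
    Continuous (uncurry (potential k A B F G)) :=
  intervalIntegral.continuous_parametric_intervalIntegral_of_continuous
    (f := fun (q : ℝ × ℝ) s => fluxGap k A B F G s q.2)
    ((continuous_fluxGap hF hG hA hB hk hc).comp
      (continuous_snd.prodMk (continuous_snd.comp continuous_fst))) continuous_fst

lemma hasDerivAt_potential_time (hF : IsCdfFlow F) (hG : IsCdfFlow G) (hA : Continuous A)
    (hB : Continuous B) (hk : ContDiff ℝ (⊤ : ℕ∞) k) (hc : HasCompactSupport k) (t x : ℝ) :
    HasDerivAt (fun s => potential k A B F G s x) (fluxGap k A B F G t x) t := by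
  have hcont : Continuous fun s => fluxGap k A B F G s x :=
    (continuous_fluxGap hF hG hA hB hk hc).comp (Continuous.prodMk_left x)
  exact intervalIntegral.integral_hasDerivAt_right (hcont.intervalIntegrable _ _)
    (hcont.stronglyMeasurableAtFilter _ _) hcont.continuousAt

lemma IsSpatialWeakSolution.smear_sub (hF : IsCdfFlow F) (hA : Continuous A) (hB : Continuous B)
    (hW : IsSpatialWeakSolution A B F₀ F) (hk : ContDiff ℝ (⊤ : ℕ∞) k)
    (hc : HasCompactSupport k) {t : ℝ} (ht : 0 ≤ t) (x : ℝ) :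
    smear k (F t) x - smear k F₀ x = ∫ s in (0 : ℝ)..t,
      ((1 / 2) * smear (deriv (deriv k)) (fun y => A (F s y)) x
        + smear (deriv k) (fun y => B (F s y)) x) := by
  have hk' : ContDiff ℝ (⊤ : ℕ∞) fun y => k (y - x) := hk.comp (contDiff_id.sub contDiff_const)
  have hc' : HasCompactSupport fun y => k (y - x) := hc.comp_homeomorph (Homeomorph.subRight x)
  have hderiv : ∀ f : ℝ → ℝ, deriv (fun y => f (y - x)) = fun y => deriv f (y - x) := fun f =>
    funext fun y => deriv_comp_sub_const f x y
  have htest := hW _ hk' hc' t ht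
  simp only [hF.fluxPairing_eq hA hB hk' hc', hderiv] at htest
  simpa only [smear_eq_integral_sub, mul_comm (k _)] using htest

lemma smear_gap_eq_intervalIntegral (hF : IsCdfFlow F) (hG : IsCdfFlow G) (hA : Continuous A)
    (hB : Continuous B) (hFW : IsSpatialWeakSolution A B F₀ F)
    (hGW : IsSpatialWeakSolution A B F₀ G) (hk : ContDiff ℝ (⊤ : ℕ∞) k)
    (hc : HasCompactSupport k) {t : ℝ} (ht : 0 ≤ t) (x : ℝ) :
    smear k (gap id F G t) x = ∫ s in (0 : ℝ)..t,
      ((1 / 2) * smear (deriv (deriv k)) (gap A F G s) x + smear (deriv k) (gap B F G s) x) := by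
  have hk₁ := contDiff_deriv hk
  have hk₂ := contDiff_deriv hk₁
  have hi₁ := integrable_of_smooth hk₁ hc.deriv
  have hi₂ := integrable_of_smooth hk₂ hc.deriv.deriv
  have hcont : ∀ {H : ℝ → ℝ → ℝ}, IsCdfFlow H → Continuous fun s =>
      (1 / 2) * smear (deriv (deriv k)) (fun y => A (H s y)) x
        + smear (deriv k) (fun y => B (H s y)) x := fun hH =>
    (((hH.continuous_smear hA hk₂.continuous hi₂).const_mul (1 / 2)).add
      (hH.continuous_smear hB hk₁.continuous hi₁)).comp (Continuous.prodMk_left x)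
  calc smear k (gap id F G t) x = smear k (F t) x - smear k (G t) x :=
        smear_gap hF hG continuous_id (integrable_of_smooth hk hc) t x
    _ = (smear k (F t) x - smear k F₀ x) - (smear k (G t) x - smear k F₀ x) := by ring
    _ = _ := by
        rw [hFW.smear_sub hF hA hB hk hc ht x, hGW.smear_sub hG hA hB hk hc ht x,
          ← intervalIntegral.integral_sub ((hcont hF).intervalIntegrable _ _)
            ((hcont hG).intervalIntegrable _ _)]
        refine intervalIntegral.integral_congr fun s _ => ?_
        simp only [smear_gap hF hG hA hi₂, smear_gap hF hG hB hi₁]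
        ring

lemma intervalIntegral_smear_gap (hF : IsCdfFlow F) (hG : IsCdfFlow G) (hA : Continuous A)
    (hB : Continuous B) (hFW : IsSpatialWeakSolution A B F₀ F)
    (hGW : IsSpatialWeakSolution A B F₀ G) (hk : ContDiff ℝ (⊤ : ℕ∞) k)
    (hc : HasCompactSupport k) {t : ℝ} (ht : 0 ≤ t) (x y : ℝ) :
    ∫ z in x..y, smear k (gap id F G t) z =
      potential k A B F G t y - potential k A B F G t x := by
  have hk₁ := contDiff_deriv hk
  have hk₂ := contDiff_deriv hk₁
  have hflux : ∀ z, IntervalIntegrable (fun s => fluxGap k A B F G s z) volume 0 t := fun z =>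
    ((continuous_fluxGap hF hG hA hB hk hc).comp (Continuous.prodMk_left z)).intervalIntegrable _ _
  simp only [smear_gap_eq_intervalIntegral hF hG hA hB hFW hGW hk hc ht]
  rw [intervalIntegral_intervalIntegral_of_hasDerivAt _ (hasDerivAt_fluxGap hF hG hA hB hk hc),
    potential, potential, intervalIntegral.integral_sub (hflux y) (hflux x)]
  exact ((continuous_smear_gap hF hG hA hk₂.continuous
    (integrable_of_smooth hk₂ hc.deriv.deriv)).const_mul (1 / 2)).add
      (continuous_smear_gap hF hG hB hk₁.continuous (integrable_of_smooth hk₁ hc.deriv))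

lemma hasDerivAt_potential_space (hF : IsCdfFlow F) (hG : IsCdfFlow G) (hA : Continuous A)
    (hB : Continuous B) (hFW : IsSpatialWeakSolution A B F₀ F)
    (hGW : IsSpatialWeakSolution A B F₀ G) (hk : ContDiff ℝ (⊤ : ℕ∞) k)
    (hc : HasCompactSupport k) {t : ℝ} (ht : 0 ≤ t) (x : ℝ) :
    HasDerivAt (potential k A B F G t) (smear k (gap id F G t) x) x := by
  have hcont : Continuous (smear k (gap id F G t)) :=
    (continuous_smear_gap hF hG continuous_id hk.continuous (integrable_of_smooth hk hc)).comp
      (Continuous.prodMk_right t)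
  refine ((intervalIntegral.integral_hasDerivAt_right (hcont.intervalIntegrable 0 x)
    (hcont.stronglyMeasurableAtFilter _ _) hcont.continuousAt).add_const
      (potential k A B F G t 0)).congr_of_eventuallyEq (.of_forall fun z => ?_)
  simp [intervalIntegral_smear_gap hF hG hA hB hFW hGW hk hc ht]

lemma abs_potential_sub_le (hF : IsCdfFlow F) (hG : IsCdfFlow G) (hA : Continuous A)
    (hB : Continuous B) (hFW : IsSpatialWeakSolution A B F₀ F)
    (hGW : IsSpatialWeakSolution A B F₀ G) (n : ℕ) {t : ℝ} (ht : 0 ≤ t) (x y : ℝ) :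
    |potential (mollifier n) A B F G t y - potential (mollifier n) A B F G t x| ≤ |y - x| := by
  rw [← intervalIntegral_smear_gap hF hG hA hB hFW hGW (contDiff_mollifier n)
    (hasCompactSupport_mollifier n) ht]
  simpa using abs_intervalIntegral_le (abs_smear_mollifier_le n (abs_gap_id_le_one hF hG t)) x y

lemma abs_intervalIntegral_potential_le (hF : IsCdfFlow F) (hG : IsCdfFlow G) (hA : Continuous A)
    (hB : Continuous B) {M : ℝ} (hMA : ∀ t x, |gap A F G t x| ≤ M)
    (hMB : ∀ t x, |gap B F G t x| ≤ M) (n : ℕ) {t : ℝ} (ht : 0 ≤ t) (x : ℝ) :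
    |∫ z in x..x + 1, potential (mollifier n) A B F G t z| ≤ 2 * M * t := by
  have hk := contDiff_mollifier n
  have hc := hasCompactSupport_mollifier n
  set α : ℝ → ℝ → ℝ := fun s => smear (mollifier n) (gap A F G s)
  set β : ℝ → ℝ → ℝ := fun s => smear (mollifier n) (gap B F G s)
  have hβ : ∀ s, Continuous (β s) := fun s =>
    (continuous_smear_gap hF hG hB hk.continuous (integrable_mollifier n)).comp
      (Continuous.prodMk_right s)
  have hprim : ∀ s z, HasDerivAt (fun y => (1 / 2) * α s y - ∫ w in (0 : ℝ)..y, β s w)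
      (fluxGap (mollifier n) A B F G s z) z := by
    intro s z
    refine (((hasDerivAt_smear_gap hF hG hA hk hc s z).const_mul (1 / 2)).sub
      (intervalIntegral.integral_hasDerivAt_right ((hβ s).intervalIntegrable 0 z)
        ((hβ s).stronglyMeasurableAtFilter _ _) (hβ s).continuousAt)).congr_deriv ?_
    rw [mul_neg, fluxGap]
  have hα : ∀ s y, |α s y| ≤ M := fun s => abs_smear_mollifier_le n (hMA s)
  simp only [potential]
  rw [intervalIntegral_intervalIntegral_of_hasDerivAt
    (continuous_fluxGap hF hG hA hB hk hc) hprim]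
  refine (abs_intervalIntegral_le (M := 2 * M) (fun s => ?_) 0 t).trans
    (by rw [sub_zero, abs_of_nonneg ht])
  have hint : |∫ w in x..x + 1, β s w| ≤ M := by
    simpa using abs_intervalIntegral_le (abs_smear_mollifier_le n (hMB s)) x (x + 1)
  rw [← intervalIntegral.integral_interval_sub_left ((hβ s).intervalIntegrable 0 (x + 1))
    ((hβ s).intervalIntegrable 0 x), abs_le] at hint
  have hx := abs_le.1 (hα s x)
  have hx1 := abs_le.1 (hα s (x + 1))
  rw [abs_le]
  constructor <;> linarith [hx.1, hx.2, hx1.1, hx1.2, hint.1, hint.2]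

/-- A 1-Lipschitz function is within `1` of its average over a unit interval, and that average is
controlled without any derivative of the mollifier. -/
lemma potential_le (hF : IsCdfFlow F) (hG : IsCdfFlow G) (hA : Continuous A)
    (hB : Continuous B) (hFW : IsSpatialWeakSolution A B F₀ F)
    (hGW : IsSpatialWeakSolution A B F₀ G) {M : ℝ} (hMA : ∀ t x, |gap A F G t x| ≤ M)
    (hMB : ∀ t x, |gap B F G t x| ≤ M) (n : ℕ) {t : ℝ} (ht : 0 ≤ t) (x : ℝ) :
    potential (mollifier n) A B F G t x ≤ 2 * M * t + 1 := by
  set D := potential (mollifier n) A B F G t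
  have hD : Continuous D := (continuous_potential hF hG hA hB (contDiff_mollifier n)
    (hasCompactSupport_mollifier n)).comp (Continuous.prodMk_right t)
  have hmono : ∫ _ in x..x + 1, (D x - 1) ≤ ∫ z in x..x + 1, D z := by
    refine intervalIntegral.integral_mono_on (by linarith) intervalIntegrable_const
      (hD.intervalIntegrable _ _) fun z hz => ?_
    have hlip := abs_potential_sub_le hF hG hA hB hFW hGW n ht x z
    rw [abs_of_nonneg (sub_nonneg.2 hz.1)] at hlip
    linarith [(abs_le.1 hlip).1, hz.2]
  have havg := (abs_le.1 (abs_intervalIntegral_potential_le hF hG hA hB hMA hMB n ht x)).2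
  simp only [intervalIntegral.integral_const, add_sub_cancel_left, one_smul] at hmono
  linarith

end Potential

/-! ### Uniqueness: a weighted exponential estimate for the potential -/

/-- The weight `1 / (1 + x²)` on the line, whose derivative it dominates. -/
def cauchyWeight (x : ℝ) : ℝ := (1 + x ^ 2)⁻¹

/-- The part of `(1/2)|α| + |β|` which is compensated neither by the dissipation `(1/2) r f α` nor
by the constant `c`. -/
def excess (r c f α β : ℝ) : ℝ := max (1 / 2 * |α| + |β| - 1 / 2 * r * f * α - c) 0

lemma cauchyWeight_pos (x : ℝ) : 0 < cauchyWeight x := by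
  unfold cauchyWeight
  positivity

lemma continuous_cauchyWeight : Continuous cauchyWeight :=
  (continuous_const.add (continuous_pow 2)).inv₀ fun x => (by positivity : 0 < 1 + x ^ 2).ne'

lemma hasDerivAt_cauchyWeight (x : ℝ) :
    HasDerivAt cauchyWeight (-(2 * x * cauchyWeight x) * cauchyWeight x) x := by
  refine (((hasDerivAt_pow 2 x).const_add 1).inv (by positivity)).congr_deriv ?_
  simp only [cauchyWeight]
  field_simp
  push_cast
  ring

lemma abs_two_mul_mul_cauchyWeight_le (x : ℝ) : |2 * x * cauchyWeight x| ≤ 1 := by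
  rw [cauchyWeight, ← div_eq_mul_inv, abs_div, div_le_one (by positivity),
    abs_of_pos (by positivity : 0 < 1 + x ^ 2), abs_le]
  constructor <;> nlinarith [sq_nonneg (x - 1), sq_nonneg (x + 1)]

lemma integrable_cauchyWeight : Integrable cauchyWeight := integrable_inv_one_add_sq

lemma integral_cauchyWeight : ∫ x, cauchyWeight x = Real.pi := integral_univ_inv_one_add_sq

lemma integrable_cauchyWeight_mul {g : ℝ → ℝ} {M : ℝ} (hg : Continuous g) (hM : ∀ x, |g x| ≤ M) :
    Integrable fun x => cauchyWeight x * g x :=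
  integrable_cauchyWeight.mul_bdd hg.aestronglyMeasurable (.of_forall hM)

lemma continuous_excess (r c : ℝ) :
    Continuous fun p : ℝ × ℝ × ℝ => excess r c p.1 p.2.1 p.2.2 := by
  unfold excess
  fun_prop

lemma excess_le {r c f α β M : ℝ} (hr : 0 ≤ r) (hc : 0 ≤ c) (hf : |f| ≤ 1) (hα : |α| ≤ M)
    (hβ : |β| ≤ M) : excess r c f α β ≤ (2 + r) * M := by
  have hM : 0 ≤ M := (abs_nonneg α).trans hα
  have hfα : |f * α| ≤ M := by
    rw [abs_mul]
    exact mul_le_of_le_one_left (abs_nonneg α) hf |>.trans hα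
  have hrfα : r * -(f * α) ≤ r * M := mul_le_mul_of_nonneg_left ((neg_le_abs _).trans hfα) hr
  have hrM : 0 ≤ r * M := mul_nonneg hr hM
  exact max_le (by linarith) (by linarith)

lemma abs_excess_le {r c f α β M : ℝ} (hr : 0 ≤ r) (hc : 0 ≤ c) (hf : |f| ≤ 1) (hα : |α| ≤ M)
    (hβ : |β| ≤ M) : |excess r c f α β| ≤ (2 + r) * M := by
  rw [abs_of_nonneg (le_max_right _ _)]
  exact excess_le hr hc hf hα hβ

lemma half_mul_sub_le_excess {q r c f α β : ℝ} (hq : |q| ≤ 1) :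
    1 / 2 * ((q - r * f) * α) - (β + c) ≤ excess r c f α β := by
  have hqα : q * α ≤ |α| := (le_abs_self _).trans (by
    rw [abs_mul]
    exact mul_le_of_le_one_left (abs_nonneg α) hq)
  refine le_max_of_le_left ?_
  linarith [neg_abs_le β]

lemma integrable_cauchyWeight_mul_exp {D g : ℝ → ℝ} {K C r : ℝ} (hD : Continuous D) (hr : 0 ≤ r)
    (hDK : ∀ x, D x ≤ K) (hg : Continuous g) (hgC : ∀ x, |g x| ≤ C) :
    Integrable fun x => cauchyWeight x * (Real.exp (r * D x) * g x) := by
  refine integrable_cauchyWeight_mul (M := Real.exp (r * K) * C) (by fun_prop) fun x => ?_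
  rw [abs_mul, Real.abs_exp]
  exact mul_le_mul (Real.exp_le_exp.2 (mul_le_mul_of_nonneg_left (hDK x) hr)) (hgC x)
    (abs_nonneg _) (Real.exp_nonneg _)

lemma cauchyWeight_mul_exp_mul_le_excess {r c d K f : ℝ} (hr : 0 ≤ r) (hd : d ≤ K) (x α β : ℝ) :
    cauchyWeight x *
        (Real.exp (r * d) * (1 / 2 * ((2 * x * cauchyWeight x - r * f) * α) - (β + c))) ≤
      Real.exp (r * K) * (cauchyWeight x * excess r c f α β) := by
  rw [mul_left_comm (Real.exp (r * K))]
  refine mul_le_mul_of_nonneg_left ?_ (cauchyWeight_pos x).le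
  calc Real.exp (r * d) * (1 / 2 * ((2 * x * cauchyWeight x - r * f) * α) - (β + c))
      ≤ Real.exp (r * d) * excess r c f α β := by
        gcongr
        exact half_mul_sub_le_excess (abs_two_mul_mul_cauchyWeight_le x)
    _ ≤ Real.exp (r * K) * excess r c f α β := by
        have : 0 ≤ excess r c f α β := le_max_right _ _
        gcongr

section FixedTime

variable {D f α α' β : ℝ → ℝ} {K M M' r c : ℝ}

lemma integral_cauchyWeight_mul_exp_mul_deriv (hD : ∀ x, HasDerivAt D (f x) x)
    (hα : ∀ x, HasDerivAt α (α' x) x)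
    (hi₀ : Integrable fun x => cauchyWeight x * (Real.exp (r * D x) * α x))
    (hi₁ : Integrable fun x => cauchyWeight x * (Real.exp (r * D x) * α' x))
    (hi₂ : Integrable fun x => cauchyWeight x *
      (Real.exp (r * D x) * ((2 * x * cauchyWeight x - r * f x) * α x))) :
    ∫ x, cauchyWeight x * (Real.exp (r * D x) * α' x) =
      ∫ x, cauchyWeight x *
        (Real.exp (r * D x) * ((2 * x * cauchyWeight x - r * f x) * α x)) := by
  rw [← sub_eq_zero, ← integral_sub hi₁ hi₂]
  refine integral_eq_zero_of_hasDerivAt_of_integrable (fun x => ?_) (hi₁.sub hi₂) hi₀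
  exact ((hasDerivAt_cauchyWeight x).mul ((((hD x).const_mul r).exp).mul (hα x))).congr_deriv
    (by rw [Pi.mul_apply]; ring)

lemma integral_cauchyWeight_mul_exp_le (hD : ∀ x, HasDerivAt D (f x) x)
    (hα : ∀ x, HasDerivAt α (α' x) x) (hf : Continuous f) (hα' : Continuous α')
    (hβ : Continuous β) (hr : 0 ≤ r) (hc : 0 ≤ c) (hDK : ∀ x, D x ≤ K) (hfM : ∀ x, |f x| ≤ 1)
    (hαM : ∀ x, |α x| ≤ M) (hβM : ∀ x, |β x| ≤ M) (hαM' : ∀ x, |α' x| ≤ M') :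
    ∫ x, cauchyWeight x * (Real.exp (r * D x) * (1 / 2 * α' x - β x - c)) ≤
      Real.exp (r * K) * ∫ x, cauchyWeight x * excess r c (f x) (α x) (β x) := by
  have hDc : Continuous D := continuous_iff_continuousAt.2 fun x => (hD x).continuousAt
  have hαc : Continuous α := continuous_iff_continuousAt.2 fun x => (hα x).continuousAt
  have hwc := continuous_cauchyWeight
  have hrf : ∀ x, |r * f x| ≤ r := fun x => by
    rw [abs_mul, abs_of_nonneg hr]
    exact mul_le_of_le_one_right hr (hfM x)
  have hqα : ∀ x, |(2 * x * cauchyWeight x - r * f x) * α x| ≤ (1 + r) * M := fun x => by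
    rw [abs_mul]
    exact mul_le_mul ((abs_sub _ _).trans (add_le_add (abs_two_mul_mul_cauchyWeight_le x) (hrf x)))
      (hαM x) (abs_nonneg _) (by positivity)
  have hβc : ∀ x, |β x + c| ≤ M + c := fun x =>
    (abs_add_le _ _).trans (add_le_add (hβM x) (abs_of_nonneg hc).le)
  have hi₁ := integrable_cauchyWeight_mul_exp hDc hr hDK hα' hαM'
  have hi₂ := integrable_cauchyWeight_mul_exp hDc hr hDK (by fun_prop) hqα
  have hi₃ := integrable_cauchyWeight_mul_exp hDc hr hDK (by fun_prop) hβc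
  calc ∫ x, cauchyWeight x * (Real.exp (r * D x) * (1 / 2 * α' x - β x - c))
      = 1 / 2 * (∫ x, cauchyWeight x * (Real.exp (r * D x) * α' x))
          - ∫ x, cauchyWeight x * (Real.exp (r * D x) * (β x + c)) := by
        rw [← integral_const_mul, ← integral_sub (hi₁.const_mul _) hi₃]
        congr with x
        ring
    _ = ∫ x, (1 / 2 * (cauchyWeight x * (Real.exp (r * D x) *
            ((2 * x * cauchyWeight x - r * f x) * α x)))
          - cauchyWeight x * (Real.exp (r * D x) * (β x + c))) := by
        rw [integral_cauchyWeight_mul_exp_mul_deriv hD hα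
          (integrable_cauchyWeight_mul_exp hDc hr hDK hαc hαM) hi₁ hi₂,
          integral_sub (hi₂.const_mul _) hi₃, integral_const_mul]
    _ ≤ ∫ x, Real.exp (r * K) * (cauchyWeight x * excess r c (f x) (α x) (β x)) := by
        refine integral_mono ((hi₂.const_mul _).sub hi₃) ((integrable_cauchyWeight_mul
          ((continuous_excess r c).comp (hf.prodMk (hαc.prodMk hβ)))
          fun x => abs_excess_le hr hc (hfM x) (hαM x) (hβM x)).const_mul _) fun x => ?_
        linarith [cauchyWeight_mul_exp_mul_le_excess (f := f x) (c := c) hr (hDK x) x (α x) (β x)]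
    _ = Real.exp (r * K) * ∫ x, cauchyWeight x * excess r c (f x) (α x) (β x) :=
        integral_const_mul _ _

end FixedTime

/-- The integral of `excess` against `cauchyWeight` at time `s` for the mollified differences of two
flows. -/
def excessIntegral (A B : ℝ → ℝ) (F G : ℝ → ℝ → ℝ) (r c : ℝ) (n : ℕ) (s : ℝ) : ℝ :=
  ∫ x, cauchyWeight x * excess r c (smear (mollifier n) (gap id F G s) x)
    (smear (mollifier n) (gap A F G s) x) (smear (mollifier n) (gap B F G s) x)

/-- The time derivative of `exp (r (D - c s))`, where `D` is the potential of two flows mollified at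
scale `n`. -/
def expRate (A B : ℝ → ℝ) (F G : ℝ → ℝ → ℝ) (r c : ℝ) (n : ℕ) (s x : ℝ) : ℝ :=
  r * ((fluxGap (mollifier n) A B F G s x - c) *
    Real.exp (r * (potential (mollifier n) A B F G s x - c * s)))

section Growth

variable {F G : ℝ → ℝ → ℝ} {A B F₀ : ℝ → ℝ} {M r c : ℝ} {n : ℕ}

lemma exists_abs_fluxGap_le (hMA : ∀ t x, |gap A F G t x| ≤ M)
    (hMB : ∀ t x, |gap B F G t x| ≤ M) (n : ℕ) :
    ∃ C, 0 ≤ C ∧ ∀ s x, |fluxGap (mollifier n) A B F G s x| ≤ C := by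
  have hk : Integrable (deriv (mollifier n)) :=
    integrable_of_smooth (contDiff_deriv (contDiff_mollifier n))
      (hasCompactSupport_mollifier n).deriv
  have hM : 0 ≤ M := (abs_nonneg _).trans (hMA 0 0)
  refine ⟨1 / 2 * (M * ∫ y, |deriv (mollifier n) y|) + M, by positivity, fun s x => ?_⟩
  refine (abs_sub _ _).trans (add_le_add ?_ (abs_smear_mollifier_le n (hMB s) x))
  rw [abs_neg, abs_mul, abs_of_pos (one_half_pos (α := ℝ))]
  exact mul_le_mul_of_nonneg_left (abs_smear_le hk (hMA s) x) (by norm_num)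

lemma intervalIntegral_expRate (hF : IsCdfFlow F) (hG : IsCdfFlow G) (hA : Continuous A)
    (hB : Continuous B) (r c : ℝ) (n : ℕ) (t x : ℝ) :
    ∫ s in (0 : ℝ)..t, expRate A B F G r c n s x =
      Real.exp (r * (potential (mollifier n) A B F G t x - c * t)) - 1 := by
  have hk := contDiff_mollifier n
  have hc := hasCompactSupport_mollifier n
  have hflux : Continuous fun s => fluxGap (mollifier n) A B F G s x :=
    (continuous_fluxGap hF hG hA hB hk hc).comp (Continuous.prodMk_left x)
  have hpot : Continuous fun s => potential (mollifier n) A B F G s x :=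
    (continuous_potential hF hG hA hB hk hc).comp (Continuous.prodMk_left x)
  have hrate : Continuous fun s => expRate A B F G r c n s x := by
    simp only [expRate]
    fun_prop
  have hderiv : ∀ s, HasDerivAt
      (fun s => Real.exp (r * (potential (mollifier n) A B F G s x - c * s)))
      (expRate A B F G r c n s x) s := fun s =>
    ((((hasDerivAt_potential_time hF hG hA hB hk hc s x).sub
      ((hasDerivAt_id s).const_mul c)).const_mul r).exp).congr_deriv (by
        simp only [expRate, id_eq, Pi.sub_apply]
        ring)
  rw [intervalIntegral.integral_eq_sub_of_hasDerivAt (fun s _ => hderiv s)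
    (hrate.intervalIntegrable _ _)]
  simp [potential]

lemma continuous_excess_smear (hF : IsCdfFlow F) (hG : IsCdfFlow G) (hA : Continuous A)
    (hB : Continuous B) (r c : ℝ) (n : ℕ) :
    Continuous fun p : ℝ × ℝ => excess r c (smear (mollifier n) (gap id F G p.1) p.2)
      (smear (mollifier n) (gap A F G p.1) p.2) (smear (mollifier n) (gap B F G p.1) p.2) := by
  have hk := (contDiff_mollifier n).continuous
  have hki := integrable_mollifier n
  exact (continuous_excess r c).comp ((continuous_smear_gap hF hG continuous_id hk hki).prodMk
    ((continuous_smear_gap hF hG hA hk hki).prodMk (continuous_smear_gap hF hG hB hk hki)))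

lemma abs_excess_smear_le (hF : IsCdfFlow F) (hG : IsCdfFlow G)
    (hMA : ∀ t x, |gap A F G t x| ≤ M) (hMB : ∀ t x, |gap B F G t x| ≤ M) (hr : 0 ≤ r)
    (hc : 0 ≤ c) (n : ℕ) (s x : ℝ) :
    |excess r c (smear (mollifier n) (gap id F G s) x) (smear (mollifier n) (gap A F G s) x)
      (smear (mollifier n) (gap B F G s) x)| ≤ (2 + r) * M :=
  abs_excess_le hr hc (abs_smear_mollifier_le n (abs_gap_id_le_one hF hG s) x)
    (abs_smear_mollifier_le n (hMA s) x) (abs_smear_mollifier_le n (hMB s) x)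

lemma continuous_excessIntegral (hF : IsCdfFlow F) (hG : IsCdfFlow G) (hA : Continuous A)
    (hB : Continuous B) (hMA : ∀ t x, |gap A F G t x| ≤ M) (hMB : ∀ t x, |gap B F G t x| ≤ M)
    (hr : 0 ≤ r) (hc : 0 ≤ c) (n : ℕ) : Continuous (excessIntegral A B F G r c n) := by
  have hcont := continuous_excess_smear hF hG hA hB r c n
  refine continuous_of_dominated (bound := fun x => cauchyWeight x * ((2 + r) * M))
    (fun s => ?_) (fun s => .of_forall fun x => ?_)
    (integrable_cauchyWeight.mul_const _) (.of_forall fun x => ?_)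
  · exact (continuous_cauchyWeight.mul
      (hcont.comp (Continuous.prodMk_right s))).aestronglyMeasurable
  · rw [norm_mul, Real.norm_of_nonneg (cauchyWeight_pos x).le]
    exact mul_le_mul_of_nonneg_left (abs_excess_smear_le hF hG hMA hMB hr hc n s x)
      (cauchyWeight_pos x).le
  · exact continuous_const.mul (hcont.comp (Continuous.prodMk_left x))

lemma integral_cauchyWeight_mul_expRate_le (hF : IsCdfFlow F) (hG : IsCdfFlow G) (hA : Continuous A)
    (hB : Continuous B) (hFW : IsSpatialWeakSolution A B F₀ F)
    (hGW : IsSpatialWeakSolution A B F₀ G) (hMA : ∀ t x, |gap A F G t x| ≤ M)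
    (hMB : ∀ t x, |gap B F G t x| ≤ M) (hr : 0 ≤ r) (hc : 0 ≤ c) (n : ℕ) {s K : ℝ} (hs : 0 ≤ s)
    (hK : ∀ x, potential (mollifier n) A B F G s x ≤ K) :
    ∫ x, cauchyWeight x * expRate A B F G r c n s x ≤
      r * Real.exp (r * K) * excessIntegral A B F G r c n s := by
  have hk := contDiff_mollifier n
  have hks := hasCompactSupport_mollifier n
  have hslice : ∀ {ψ k : ℝ → ℝ}, Continuous ψ → ContDiff ℝ (⊤ : ℕ∞) k → HasCompactSupport k →
      Continuous (smear k (gap ψ F G s)) := fun hψ hk hks =>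
    (continuous_smear_gap hF hG hψ hk.continuous (integrable_of_smooth hk hks)).comp
      (Continuous.prodMk_right s)
  have hbound := integral_cauchyWeight_mul_exp_le
    (hasDerivAt_potential_space hF hG hA hB hFW hGW hk hks hs)
    (hasDerivAt_smear_gap hF hG hA hk hks s) (hslice continuous_id hk hks)
    (hslice hA (contDiff_deriv hk) hks.deriv).neg (hslice hB hk hks) hr hc hK
    (abs_smear_mollifier_le n (abs_gap_id_le_one hF hG s)) (abs_smear_mollifier_le n (hMA s))
    (abs_smear_mollifier_le n (hMB s)) fun x => by
      rw [abs_neg]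
      exact abs_smear_le (integrable_of_smooth (contDiff_deriv hk) hks.deriv) (hMA s) x
  have hI : 0 ≤ excessIntegral A B F G r c n s :=
    integral_nonneg fun x => mul_nonneg (cauchyWeight_pos x).le (le_max_right _ _)
  have hexp : Real.exp (-(r * (c * s))) ≤ 1 := Real.exp_le_one_iff.2 (by
    have := mul_nonneg hr (mul_nonneg hc hs)
    linarith)
  calc _ = r * (Real.exp (-(r * (c * s))) * ∫ x, cauchyWeight x *
        (Real.exp (r * potential (mollifier n) A B F G s x) *
          (1 / 2 * -smear (deriv (mollifier n)) (gap A F G s) x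
            - smear (mollifier n) (gap B F G s) x - c))) := by
        simp only [← integral_const_mul]
        congr with x
        rw [expRate, mul_sub r, sub_eq_add_neg (r * _), Real.exp_add, fluxGap]
        ring
    _ ≤ r * (1 * (Real.exp (r * K) * excessIntegral A B F G r c n s)) := by
        refine mul_le_mul_of_nonneg_left ?_ hr
        exact (mul_le_mul_of_nonneg_left hbound (Real.exp_nonneg _)).trans
          (mul_le_mul_of_nonneg_right hexp (mul_nonneg (Real.exp_nonneg _) hI))
    _ = r * Real.exp (r * K) * excessIntegral A B F G r c n s := by ring

lemma exp_mul_sub_le {D s K : ℝ} (hr : 0 ≤ r) (hc : 0 ≤ c) (hs : 0 ≤ s) (hD : D ≤ K) :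
    Real.exp (r * (D - c * s)) ≤ Real.exp (r * K) :=
  Real.exp_le_exp.2 (mul_le_mul_of_nonneg_left (by linarith [mul_nonneg hc hs]) hr)

lemma continuous_expRate (hF : IsCdfFlow F) (hG : IsCdfFlow G) (hA : Continuous A)
    (hB : Continuous B) (r c : ℝ) (n : ℕ) : Continuous (uncurry (expRate A B F G r c n)) := by
  have hD := continuous_potential hF hG hA hB (contDiff_mollifier n) (hasCompactSupport_mollifier n)
  have hflux :=
    continuous_fluxGap hF hG hA hB (contDiff_mollifier n) (hasCompactSupport_mollifier n)
  simp only [uncurry_def, expRate] at hD hflux ⊢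
  fun_prop

lemma exists_abs_expRate_le (hMA : ∀ t x, |gap A F G t x| ≤ M) (hMB : ∀ t x, |gap B F G t x| ≤ M)
    (hr : 0 ≤ r) (hc : 0 ≤ c) (n : ℕ) {t K : ℝ}
    (hK : ∀ s ∈ Icc 0 t, ∀ x, potential (mollifier n) A B F G s x ≤ K) :
    ∃ C, ∀ s ∈ Icc 0 t, ∀ x, |expRate A B F G r c n s x| ≤ C := by
  obtain ⟨C, hC0, hC⟩ := exists_abs_fluxGap_le hMA hMB n
  refine ⟨r * ((C + c) * Real.exp (r * K)), fun s hs x => ?_⟩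
  rw [expRate, abs_mul, abs_mul, abs_of_nonneg hr, Real.abs_exp]
  exact mul_le_mul_of_nonneg_left (mul_le_mul
    ((abs_sub _ _).trans (add_le_add (hC s x) (abs_of_nonneg hc).le))
    (exp_mul_sub_le hr hc hs.1 (hK s hs x)) (Real.exp_nonneg _) (by positivity)) hr

lemma integrable_cauchyWeight_mul_exp_potential (hF : IsCdfFlow F) (hG : IsCdfFlow G)
    (hA : Continuous A) (hB : Continuous B) (hr : 0 ≤ r) (hc : 0 ≤ c) (n : ℕ) {t K : ℝ}
    (ht : 0 ≤ t) (hK : ∀ x, potential (mollifier n) A B F G t x ≤ K) :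
    Integrable fun x =>
      cauchyWeight x * Real.exp (r * (potential (mollifier n) A B F G t x - c * t)) := by
  have hD := (continuous_potential hF hG hA hB (contDiff_mollifier n)
    (hasCompactSupport_mollifier n)).comp (Continuous.prodMk_right t)
  refine integrable_cauchyWeight_mul (M := Real.exp (r * K)) ?_ fun x => ?_
  · exact Real.continuous_exp.comp (continuous_const.mul (hD.sub continuous_const))
  · rw [Real.abs_exp]
    exact exp_mul_sub_le hr hc ht (hK x)

lemma integral_exp_potential_le (hF : IsCdfFlow F) (hG : IsCdfFlow G) (hA : Continuous A)
    (hB : Continuous B) (hFW : IsSpatialWeakSolution A B F₀ F)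
    (hGW : IsSpatialWeakSolution A B F₀ G) (hMA : ∀ t x, |gap A F G t x| ≤ M)
    (hMB : ∀ t x, |gap B F G t x| ≤ M) (hr : 0 ≤ r) (hc : 0 ≤ c) (n : ℕ) {t K : ℝ} (ht : 0 ≤ t)
    (hK : ∀ s ∈ Icc 0 t, ∀ x, potential (mollifier n) A B F G s x ≤ K) :
    ∫ x, cauchyWeight x * Real.exp (r * (potential (mollifier n) A B F G t x - c * t)) ≤
      Real.pi + r * Real.exp (r * K) * ∫ s in (0 : ℝ)..t, excessIntegral A B F G r c n s := by
  have hexp := integrable_cauchyWeight_mul_exp_potential hF hG hA hB hr hc n ht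
    (hK t ⟨ht, le_rfl⟩)
  have hm : Measurable (uncurry fun s x => cauchyWeight x * expRate A B F G r c n s x) :=
    ((continuous_cauchyWeight.comp continuous_snd).mul
      (continuous_expRate hF hG hA hB r c n)).measurable
  obtain ⟨C, hC⟩ := exists_abs_expRate_le hMA hMB hr hc n hK
  have hb : ∀ s ∈ Ioc 0 t, ∀ x,
      |cauchyWeight x * expRate A B F G r c n s x| ≤ cauchyWeight x * C := fun s hs x => by
    rw [abs_mul, abs_of_pos (cauchyWeight_pos x)]
    exact mul_le_mul_of_nonneg_left (hC s ⟨hs.1.le, hs.2⟩ x) (cauchyWeight_pos x).le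
  have hC' : Integrable fun x => cauchyWeight x * C := integrable_cauchyWeight.mul_const C
  have hgrowth : (∫ x, cauchyWeight x *
        Real.exp (r * (potential (mollifier n) A B F G t x - c * t))) - Real.pi =
      ∫ s in (0 : ℝ)..t, ∫ x, cauchyWeight x * expRate A B F G r c n s x := by
    rw [← integral_intervalIntegral_swap hm hC' ht hb, ← integral_cauchyWeight,
      ← integral_sub hexp integrable_cauchyWeight]
    simp only [intervalIntegral.integral_const_mul, intervalIntegral_expRate hF hG hA hB, mul_sub,
      mul_one]
  rw [← sub_le_iff_le_add', hgrowth, ← intervalIntegral.integral_const_mul]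
  exact intervalIntegral.integral_mono_on ht (intervalIntegrable_integral hm hC' ht hb)
    ((continuous_excessIntegral hF hG hA hB hMA hMB hr hc n).intervalIntegrable _ _ |>.const_mul _)
    fun s hs => integral_cauchyWeight_mul_expRate_le hF hG hA hB hFW hGW hMA hMB hr hc n hs.1
      (hK s hs)

end Growth

/-! ### Uniqueness of weak solutions -/

lemma sub_mul_sub_pos_of_strictMonoOn {A : ℝ → ℝ} {s : Set ℝ} (hA : StrictMonoOn A s) {u v : ℝ}
    (hu : u ∈ s) (hv : v ∈ s) (huv : u ≠ v) : 0 < (u - v) * (A u - A v) := by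
  rcases huv.lt_or_gt with h | h
  · exact mul_pos_of_neg_of_neg (sub_neg.2 h) (sub_neg.2 (hA hu hv h))
  · exact mul_pos (sub_pos.2 h) (sub_pos.2 (hA hv hu h))

/-- Away from the diagonal the dissipation `(u - v) (A u - A v)` is bounded below by compactness, so
that it absorbs the flux once `r` is large. -/
lemma exists_forall_excess_eq_zero {A B : ℝ → ℝ} (hA : Continuous A) (hB : Continuous B)
    (hmono : StrictMonoOn A (Icc 0 1)) {c : ℝ} (hc : 0 < c) :
    ∃ r₀, ∀ r ≥ r₀, ∀ u ∈ Icc (0 : ℝ) 1, ∀ v ∈ Icc (0 : ℝ) 1,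
      excess r c (u - v) (A u - A v) (B u - B v) = 0 := by
  set L : ℝ × ℝ → ℝ := fun p => 1 / 2 * |A p.1 - A p.2| + |B p.1 - B p.2|
  set S : Set (ℝ × ℝ) := Icc 0 1 ×ˢ Icc 0 1 ∩ {p | c ≤ L p}
  have hL : Continuous L := by fun_prop
  have hS : IsCompact S :=
    (isCompact_Icc.prod isCompact_Icc).inter_right (isClosed_le continuous_const hL)
  have hpos : ∀ p ∈ S, 0 < (p.1 - p.2) * (A p.1 - A p.2) := fun p hp =>
    sub_mul_sub_pos_of_strictMonoOn hmono hp.1.1 hp.1.2 fun h =>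
      hc.not_ge (by simpa [L, h] using hp.2)
  have hratio : ContinuousOn (fun p => 2 * L p / ((p.1 - p.2) * (A p.1 - A p.2))) S :=
    (continuous_const.mul hL).continuousOn.div (by fun_prop) fun p hp => (hpos p hp).ne'
  obtain ⟨r₀, hr₀⟩ := hS.bddAbove_image hratio
  refine ⟨max r₀ 0, fun r hr u hu v hv => max_eq_right ?_⟩
  have hdiss : 0 ≤ (u - v) * (A u - A v) := by
    rcases eq_or_ne u v with rfl | huv
    · simp
    · exact (sub_mul_sub_pos_of_strictMonoOn hmono hu hv huv).le
  have hLr : L (u, v) ≤ 1 / 2 * (r * ((u - v) * (A u - A v))) + c := by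
    by_cases hcL : c ≤ L (u, v)
    · have hmem : (u, v) ∈ S := ⟨⟨hu, hv⟩, hcL⟩
      have hle := (hr₀ (mem_image_of_mem _ hmem)).trans ((le_max_left _ _).trans hr)
      rw [div_le_iff₀ (hpos _ hmem)] at hle
      linarith
    · have := mul_nonneg ((le_max_right _ _).trans hr) hdiss
      linarith
  simp only [L] at hLr
  linarith [mul_assoc (1 / 2 * r) (u - v) (A u - A v)]

section Uniqueness

variable {F G : ℝ → ℝ → ℝ} {A B F₀ : ℝ → ℝ}

lemma tendsto_excessIntegral (hF : IsCdfFlow F) (hG : IsCdfFlow G) (hA : Continuous A)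
    (hB : Continuous B) {M r c : ℝ} (hMA : ∀ t x, |gap A F G t x| ≤ M)
    (hMB : ∀ t x, |gap B F G t x| ≤ M) (hr : 0 ≤ r) (hc : 0 ≤ c)
    (hrc : ∀ u ∈ Icc (0 : ℝ) 1, ∀ v ∈ Icc (0 : ℝ) 1,
      excess r c (u - v) (A u - A v) (B u - B v) = 0) (s : ℝ) :
    Tendsto (fun n => excessIntegral A B F G r c n s) atTop (𝓝 0) := by
  suffices h : Tendsto (fun n => excessIntegral A B F G r c n s) atTop (𝓝 (∫ _ : ℝ, (0 : ℝ))) by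
    simpa using h
  refine tendsto_integral_of_dominated_convergence (fun x => cauchyWeight x * ((2 + r) * M))
    (fun n => ?_) (integrable_cauchyWeight.mul_const _)
    (fun n => .of_forall fun x => ?_) (.of_forall fun x => ?_)
  · exact (continuous_cauchyWeight.mul ((continuous_excess_smear hF hG hA hB r c n).comp
      (Continuous.prodMk_right s))).aestronglyMeasurable
  · rw [norm_mul, Real.norm_of_nonneg (cauchyWeight_pos x).le]
    exact mul_le_mul_of_nonneg_left (abs_excess_smear_le hF hG hMA hMB hr hc n s x)
      (cauchyWeight_pos x).le
  · have hlim := ((continuous_excess r c).tendsto _).comp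
      ((tendsto_smear_gap hF hG continuous_id s x).prodMk_nhds
        ((tendsto_smear_gap hF hG hA s x).prodMk_nhds (tendsto_smear_gap hF hG hB s x)))
    simp only [gap, id, hrc _ (hF.mem_Icc s x) _ (hG.mem_Icc s x)] at hlim
    simpa using hlim.const_mul (cauchyWeight x)

lemma tendsto_intervalIntegral_excessIntegral (hF : IsCdfFlow F) (hG : IsCdfFlow G)
    (hA : Continuous A) (hB : Continuous B) {M r c : ℝ} (hMA : ∀ t x, |gap A F G t x| ≤ M)
    (hMB : ∀ t x, |gap B F G t x| ≤ M) (hr : 0 ≤ r) (hc : 0 ≤ c)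
    (hrc : ∀ u ∈ Icc (0 : ℝ) 1, ∀ v ∈ Icc (0 : ℝ) 1,
      excess r c (u - v) (A u - A v) (B u - B v) = 0) (t : ℝ) :
    Tendsto (fun n => ∫ s in (0 : ℝ)..t, excessIntegral A B F G r c n s) atTop (𝓝 0) := by
  suffices h : Tendsto (fun n => ∫ s in (0 : ℝ)..t, excessIntegral A B F G r c n s) atTop
      (𝓝 (∫ _ in (0 : ℝ)..t, 0)) by simpa using h
  refine intervalIntegral.tendsto_integral_filter_of_dominated_convergence
    (fun _ => ∫ x, cauchyWeight x * ((2 + r) * M)) (.of_forall fun n => ?_)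
    (.of_forall fun n => .of_forall fun s _ => ?_) intervalIntegrable_const
    (.of_forall fun s _ => tendsto_excessIntegral hF hG hA hB hMA hMB hr hc hrc s)
  · exact (continuous_excessIntegral hF hG hA hB hMA hMB hr hc n).aestronglyMeasurable
  · refine norm_integral_le_of_norm_le (integrable_cauchyWeight.mul_const _)
      (.of_forall fun x => ?_)
    rw [norm_mul, Real.norm_of_nonneg (cauchyWeight_pos x).le]
    exact mul_le_mul_of_nonneg_left (abs_excess_smear_le hF hG hMA hMB hr hc n s x)
      (cauchyWeight_pos x).le

lemma mul_exp_le_integral {D : ℝ → ℝ} {r b θ x₀ : ℝ} (hr : 0 ≤ r) (hθ : 0 < θ)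
    (hD : ∀ x ∈ Icc (x₀ - θ) (x₀ + θ), b ≤ D x)
    (hi : Integrable fun x => cauchyWeight x * Real.exp (r * D x)) :
    (∫ x in (x₀ - θ)..(x₀ + θ), cauchyWeight x) * Real.exp (r * b) ≤
      ∫ x, cauchyWeight x * Real.exp (r * D x) := by
  have hle : x₀ - θ ≤ x₀ + θ := by linarith
  rw [← intervalIntegral.integral_mul_const]
  calc ∫ x in (x₀ - θ)..(x₀ + θ), cauchyWeight x * Real.exp (r * b)
      ≤ ∫ x in (x₀ - θ)..(x₀ + θ), cauchyWeight x * Real.exp (r * D x) := by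
        refine intervalIntegral.integral_mono_on hle
          (integrable_cauchyWeight.mul_const _).intervalIntegrable hi.intervalIntegrable
          fun x hx => mul_le_mul_of_nonneg_left ?_ (cauchyWeight_pos x).le
        exact Real.exp_le_exp.2 (mul_le_mul_of_nonneg_left (hD x hx) hr)
    _ ≤ ∫ x, cauchyWeight x * Real.exp (r * D x) := by
        rw [intervalIntegral.integral_of_le hle]
        exact setIntegral_le_integral hi (.of_forall fun x =>
          mul_nonneg (cauchyWeight_pos x).le (Real.exp_nonneg _))

lemma mul_exp_le_of_lt_potential (hF : IsCdfFlow F) (hG : IsCdfFlow G) (hA : Continuous A)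
    (hB : Continuous B) (hFW : IsSpatialWeakSolution A B F₀ F)
    (hGW : IsSpatialWeakSolution A B F₀ G) {r c t θ K x₀ : ℝ} (hr : 0 ≤ r) (hc : 0 ≤ c) (n : ℕ)
    (ht : 0 ≤ t) (hθ : 0 < θ) (hct : c * t ≤ θ)
    (hK : ∀ x, potential (mollifier n) A B F G t x ≤ K)
    (hlt : 3 * θ < potential (mollifier n) A B F G t x₀) :
    (∫ x in (x₀ - θ)..(x₀ + θ), cauchyWeight x) * Real.exp (r * θ) ≤
      ∫ x, cauchyWeight x * Real.exp (r * (potential (mollifier n) A B F G t x - c * t)) := by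
  refine mul_exp_le_integral hr hθ (fun x hx => ?_)
    (integrable_cauchyWeight_mul_exp_potential hF hG hA hB hr hc n ht hK)
  have hlip := (abs_le.1 (abs_potential_sub_le hF hG hA hB hFW hGW n ht x₀ x)).1
  have : |x - x₀| ≤ θ := abs_le.2 ⟨by linarith [hx.1], by linarith [hx.2]⟩
  linarith

lemma eventually_potential_le (hF : IsCdfFlow F) (hG : IsCdfFlow G) (hA : Continuous A)
    (hB : Continuous B) (hmono : StrictMonoOn A (Icc 0 1)) (hFW : IsSpatialWeakSolution A B F₀ F)
    (hGW : IsSpatialWeakSolution A B F₀ G) {t θ : ℝ} (ht : 0 ≤ t) (hθ : 0 < θ) (x₀ : ℝ) :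
    ∀ᶠ n in atTop, potential (mollifier n) A B F G t x₀ ≤ 3 * θ := by
  obtain ⟨MA, hMA0, hMA⟩ := exists_abs_gap_le hF hG hA
  obtain ⟨MB, -, hMB⟩ := exists_abs_gap_le hF hG hB
  set M := max MA MB
  have hMA' : ∀ t x, |gap A F G t x| ≤ M := fun t x => (hMA t x).trans (le_max_left _ _)
  have hMB' : ∀ t x, |gap B F G t x| ≤ M := fun t x => (hMB t x).trans (le_max_right _ _)
  have hM : 0 ≤ M := hMA0.trans (le_max_left _ _)
  obtain ⟨c, hc, hct⟩ : ∃ c > 0, c * t ≤ θ := ⟨θ / (t + 1), by positivity, by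
    rw [div_mul_eq_mul_div, div_le_iff₀ (by positivity)]
    nlinarith⟩
  obtain ⟨r₀, hr₀⟩ := exists_forall_excess_eq_zero hA hB hmono hc
  have hκ : 0 < ∫ x in (x₀ - θ)..(x₀ + θ), cauchyWeight x :=
    intervalIntegral.intervalIntegral_pos_of_pos integrable_cauchyWeight.intervalIntegrable
      cauchyWeight_pos (by linarith)
  set κ := ∫ x in (x₀ - θ)..(x₀ + θ), cauchyWeight x
  have hlarge : Tendsto (fun r => κ * Real.exp (r * θ)) atTop atTop :=
    (Real.tendsto_exp_atTop.comp (tendsto_id.atTop_mul_const hθ)).const_mul_atTop hκ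
  obtain ⟨r, hrr₀, hr, hrκ⟩ := ((eventually_ge_atTop r₀).and ((eventually_ge_atTop 0).and
    (hlarge.eventually_gt_atTop (Real.pi + 1)))).exists
  have hK : ∀ n, ∀ s ∈ Icc 0 t, ∀ x, potential (mollifier n) A B F G s x ≤ 2 * M * t + 1 :=
    fun n s hs x => (potential_le hF hG hA hB hFW hGW hMA' hMB' n hs.1 x).trans
      (add_le_add_left (mul_le_mul_of_nonneg_left hs.2 (mul_nonneg zero_le_two hM)) _)
  have hsmall := (tendsto_intervalIntegral_excessIntegral hF hG hA hB hMA' hMB' hr hc.le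
    (hr₀ r hrr₀) t).const_mul (r * Real.exp (r * (2 * M * t + 1)))
  rw [mul_zero] at hsmall
  filter_upwards [hsmall.eventually_lt_const one_pos] with n hn
  by_contra! hlt
  have hgrowth := integral_exp_potential_le hF hG hA hB hFW hGW hMA' hMB' hr hc.le n ht (hK n)
  have hlower := mul_exp_le_of_lt_potential hF hG hA hB hFW hGW hr hc.le n ht hθ hct
    (hK n t ⟨ht, le_rfl⟩) hlt
  linarith

lemma tendsto_potential (hF : IsCdfFlow F) (hG : IsCdfFlow G) (hA : Continuous A)
    (hB : Continuous B) (hmono : StrictMonoOn A (Icc 0 1)) (hFW : IsSpatialWeakSolution A B F₀ F)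
    (hGW : IsSpatialWeakSolution A B F₀ G) {t : ℝ} (ht : 0 ≤ t) (x : ℝ) :
    Tendsto (fun n => potential (mollifier n) A B F G t x) atTop (𝓝 0) := by
  have hgap : ∀ (ψ : ℝ → ℝ) s, gap ψ G F s = -gap ψ F G s := fun ψ s => by
    ext y
    simp [gap]
  have hneg : ∀ n, potential (mollifier n) A B G F t x = -potential (mollifier n) A B F G t x := by
    intro n
    rw [potential, potential, ← intervalIntegral.integral_neg]
    congr with s
    simp only [fluxGap, smear, hgap, Pi.neg_apply, neg_mul, integral_neg]
    ring
  rw [Metric.tendsto_nhds]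
  intro ε hε
  filter_upwards [eventually_potential_le hF hG hA hB hmono hFW hGW ht (θ := ε / 6) (by positivity)
    x, eventually_potential_le hG hF hA hB hmono hGW hFW ht (θ := ε / 6) (by positivity) x]
    with n hn hn'
  rw [hneg] at hn'
  rw [Real.dist_eq, sub_zero, abs_lt]
  constructor <;> linarith

lemma intervalIntegral_eq_of_isSpatialWeakSolution (hF : IsCdfFlow F) (hG : IsCdfFlow G)
    (hA : Continuous A) (hB : Continuous B) (hmono : StrictMonoOn A (Icc 0 1))
    (hFW : IsSpatialWeakSolution A B F₀ F) (hGW : IsSpatialWeakSolution A B F₀ G) {t : ℝ}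
    (ht : 0 ≤ t) (x y : ℝ) :
    ∫ z in x..y, F t z = ∫ z in x..y, G t z := by
  have hlim : Tendsto (fun n => ∫ z in x..y, smear (mollifier n) (gap id F G t) z) atTop
      (𝓝 (∫ z in x..y, gap id F G t z)) := by
    refine intervalIntegral.tendsto_integral_filter_of_dominated_convergence (fun _ => 1)
      (.of_forall fun n => ?_) (.of_forall fun n => .of_forall fun z _ =>
        abs_smear_mollifier_le n (abs_gap_id_le_one hF hG t) z) intervalIntegrable_const
      (.of_forall fun z _ => tendsto_smear_gap hF hG continuous_id t z)
    exact ((continuous_smear_gap hF hG continuous_id (contDiff_mollifier n).continuous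
      (integrable_mollifier n)).comp (Continuous.prodMk_right t)).aestronglyMeasurable
  have hzero : Tendsto (fun n => ∫ z in x..y, smear (mollifier n) (gap id F G t) z) atTop
      (𝓝 0) := by
    simp only [intervalIntegral_smear_gap hF hG hA hB hFW hGW (contDiff_mollifier _)
      (hasCompactSupport_mollifier _) ht]
    simpa using (tendsto_potential hF hG hA hB hmono hFW hGW ht y).sub
      (tendsto_potential hF hG hA hB hmono hFW hGW ht x)
  rw [← sub_eq_zero, ← intervalIntegral.integral_sub (hF.mono t).intervalIntegrable
    (hG.mono t).intervalIntegrable]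
  exact tendsto_nhds_unique hlim hzero

end Uniqueness

lemma le_of_forall_intervalIntegral_eq {f g : ℝ → ℝ} (hf : Monotone f) (hg : Monotone g) {x : ℝ}
    (hgx : ContinuousWithinAt g (Ici x) x)
    (hfg : ∀ y, ∫ z in x..y, f z = ∫ z in x..y, g z) : f x ≤ g x := by
  refine ge_of_tendsto (hgx.mono Ioi_subset_Ici_self) ?_
  filter_upwards [self_mem_nhdsWithin] with y (hy : x < y)
  have hlow : ∫ _ in x..y, f x ≤ ∫ z in x..y, f z := intervalIntegral.integral_mono_on hy.le
    intervalIntegrable_const hf.intervalIntegrable fun z hz => hf hz.1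
  have hup : ∫ z in x..y, g z ≤ ∫ _ in x..y, g y := intervalIntegral.integral_mono_on hy.le
    hg.intervalIntegrable intervalIntegrable_const fun z hz => hg hz.2
  rw [intervalIntegral.integral_const, smul_eq_mul] at hlow hup
  exact le_of_mul_le_mul_left (hlow.trans ((hfg y).le.trans hup)) (sub_pos.2 hy)

theorem IsSpatialWeakSolution.unique {F G : ℝ → ℝ → ℝ} {A B F₀ : ℝ → ℝ}
    (hFW : IsSpatialWeakSolution A B F₀ F) (hGW : IsSpatialWeakSolution A B F₀ G)
    (hF : IsCdfFlow F) (hG : IsCdfFlow G) (hA : Continuous A) (hB : Continuous B)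
    (hmono : StrictMonoOn A (Icc 0 1)) {t : ℝ} (ht : 0 ≤ t) (x : ℝ) : F t x = G t x :=
  le_antisymm
    (le_of_forall_intervalIntegral_eq (hF.mono t) (hG.mono t) (hG.rightCont t x)
      fun y => intervalIntegral_eq_of_isSpatialWeakSolution hF hG hA hB hmono hFW hGW ht x y)
    (le_of_forall_intervalIntegral_eq (hG.mono t) (hF.mono t) (hF.rightCont t x)
      fun y => intervalIntegral_eq_of_isSpatialWeakSolution hG hF hA hB hmono hGW hFW ht x y)

/-! ### Existence: centred differences and a monotone explicit scheme -/

/-- The centred difference quotient of `f` with mesh `h`, approximating `f'`. -/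
def centralDiff (h : ℝ) (f : ℝ → ℝ) (x : ℝ) : ℝ := (f (x + h) - f (x - h)) / (2 * h)

/-- The second centred difference quotient of `f` with mesh `h`, approximating `f''`. -/
def secondDiff (h : ℝ) (f : ℝ → ℝ) (x : ℝ) : ℝ := (f (x + h) - 2 * f x + f (x - h)) / h ^ 2

/-- One step of length `τ` of the explicit scheme with mesh `h` for
`∂ₜ f = (1/2) ∂ₓₓ (A (f)) - ∂ₓ (B (f))`. -/
def schemeStep (A B : ℝ → ℝ) (h τ : ℝ) (f : ℝ → ℝ) (x : ℝ) : ℝ :=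
  f x + τ * (1 / 2 * secondDiff h (fun y => A (f y)) x - centralDiff h (fun y => B (f y)) x)

/-- The discrete counterpart of `fluxPairing`: the action of one unit of time of the scheme on a
test function `φ`. -/
def schemePairing (A B : ℝ → ℝ) (h : ℝ) (f φ : ℝ → ℝ) : ℝ :=
  ∫ x, ((1 / 2) * A (f x) * secondDiff h φ x + B (f x) * centralDiff h φ x)

/-- A Courant–Friedrichs–Lewy condition: it makes `schemeStep A B h τ` order preserving. -/
structure IsCFL (A B : ℝ → ℝ) (h τ : ℝ) : Prop where
  mesh_pos : 0 < h
  time_nonneg : 0 ≤ τ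
  transport_le : ∀ ⦃u v⦄, u ≤ v → h * |B v - B u| ≤ A v - A u
  diffusion_le : ∀ ⦃u v⦄, u ≤ v → τ * (A v - A u) ≤ h ^ 2 * (v - u)

section Differences

variable {φ : ℝ → ℝ} {h : ℝ}

lemma exists_centralDiff_eq_deriv (hφ : Differentiable ℝ φ) (hh : 0 < h) (x : ℝ) :
    ∃ ξ ∈ Ioo (x - h) (x + h), centralDiff h φ x = deriv φ ξ := by
  obtain ⟨ξ, hξ, h'⟩ := exists_deriv_eq_slope φ (show x - h < x + h by linarith)
    hφ.continuous.continuousOn hφ.differentiableOn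
  exact ⟨ξ, hξ, by rw [h', centralDiff]; ring_nf⟩

lemma exists_secondDiff_eq_deriv (hφ : Differentiable ℝ φ) (hφ' : Differentiable ℝ (deriv φ))
    (hh : 0 < h) (x : ℝ) :
    ∃ ξ ∈ Ioo (x - h) (x + h), secondDiff h φ x = deriv (deriv φ) ξ := by
  have hd (s : ℝ) : HasDerivAt (fun s => φ (x + s) + φ (x - s))
      (deriv φ (x + s) - deriv φ (x - s)) s :=
    (((hφ _).hasDerivAt.comp_const_add x s).fun_add
      ((hφ _).hasDerivAt.comp_const_sub x s)).congr_deriv (by ring)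
  have hsq (s : ℝ) : HasDerivAt (fun s : ℝ => s ^ 2) (2 * s) s := by
    simpa using hasDerivAt_pow 2 s
  obtain ⟨c, hc, hslope⟩ := exists_ratio_hasDerivAt_eq_ratio_slope _ _ hh
    (fun s _ => (hd s).continuousAt.continuousWithinAt) (fun s _ => hd s) _ _
    (fun s _ => (hsq s).continuousAt.continuousWithinAt) (fun s _ => hsq s)
  obtain ⟨ξ, hξ, hc'⟩ := exists_centralDiff_eq_deriv hφ' hc.1 x
  refine ⟨ξ, ⟨by linarith [hξ.1, hc.2], by linarith [hξ.2, hc.2]⟩, ?_⟩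
  have hc0 := hc.1.ne'
  rw [← hc', secondDiff, centralDiff, div_eq_div_iff (by positivity) (by positivity)]
  simp only [add_zero, sub_zero] at hslope
  linarith

lemma tendsto_of_forall_exists_mem_Ioo {D g : ℝ → ℝ} {x : ℝ} (hg : ContinuousAt g x)
    (hD : ∀ h > 0, ∃ ξ ∈ Ioo (x - h) (x + h), D h = g ξ) : Tendsto D (𝓝[>] 0) (𝓝 (g x)) := by
  rw [Metric.tendsto_nhds]
  intro ε hε
  obtain ⟨δ, hδ, hδε⟩ := Metric.continuousAt_iff.1 hg ε hε
  filter_upwards [Ioo_mem_nhdsGT hδ] with h hh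
  obtain ⟨ξ, hξ, hDξ⟩ := hD h hh.1
  rw [hDξ]
  exact hδε (by rw [Real.dist_eq, abs_lt]; constructor <;> linarith [hξ.1, hξ.2, hh.2])

lemma tendsto_centralDiff (hφ : ContDiff ℝ (⊤ : ℕ∞) φ) (x : ℝ) :
    Tendsto (fun h => centralDiff h φ x) (𝓝[>] 0) (𝓝 (deriv φ x)) :=
  tendsto_of_forall_exists_mem_Ioo (contDiff_deriv hφ).continuous.continuousAt
    fun _ hh => exists_centralDiff_eq_deriv (hφ.differentiable (by simp)) hh x

lemma tendsto_secondDiff (hφ : ContDiff ℝ (⊤ : ℕ∞) φ) (x : ℝ) :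
    Tendsto (fun h => secondDiff h φ x) (𝓝[>] 0) (𝓝 (deriv (deriv φ) x)) :=
  tendsto_of_forall_exists_mem_Ioo (contDiff_deriv (contDiff_deriv hφ)).continuous.continuousAt
    fun _ hh => exists_secondDiff_eq_deriv (hφ.differentiable (by simp))
      ((contDiff_deriv hφ).differentiable (by simp)) hh x

lemma exists_integrable_local_bound {g : ℝ → ℝ} (hg : Continuous g) (hc : HasCompactSupport g) :
    ∃ κ : ℝ → ℝ, Integrable κ ∧ ∀ x, ∀ y ∈ Ioo (x - 1) (x + 1), |g y| ≤ κ x := by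
  obtain ⟨M, hM⟩ := hc.exists_bound_of_continuous hg
  set K := Metric.cthickening 1 (tsupport g)
  have hK : IsCompact K := hc.isCompact.cthickening
  refine ⟨K.indicator fun _ => M, ?_, fun x y hy => ?_⟩
  · exact (integrable_indicator_iff hK.measurableSet).2 (integrableOn_const hK.measure_lt_top.ne)
  · by_cases hx : x ∈ K
    · simpa [hx] using hM y
    · have hgy : g y = 0 := image_eq_zero_of_notMem_tsupport fun hy' => hx <|
        Metric.mem_cthickening_of_dist_le x y 1 _ hy' <| by
          rw [Real.dist_eq, abs_le]; constructor <;> linarith [hy.1, hy.2]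
      simp [hx, hgy]

lemma exists_integrable_bound_differences (hφ : ContDiff ℝ (⊤ : ℕ∞) φ) (hc : HasCompactSupport φ) :
    ∃ κ : ℝ → ℝ, Integrable κ ∧ ∀ h ∈ Ioc (0 : ℝ) 1, ∀ x,
      |centralDiff h φ x| ≤ κ x ∧ |secondDiff h φ x| ≤ κ x := by
  have hφ' := contDiff_deriv hφ
  obtain ⟨κ, hκ, hφκ⟩ := exists_integrable_local_bound hφ'.continuous hc.deriv
  obtain ⟨κ', hκ', hφκ'⟩ :=
    exists_integrable_local_bound (contDiff_deriv hφ').continuous hc.deriv.deriv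
  refine ⟨_, hκ.add hκ', fun h hh x => ?_⟩
  have hsub : Ioo (x - h) (x + h) ⊆ Ioo (x - 1) (x + 1) :=
    Ioo_subset_Ioo (by linarith [hh.2]) (by linarith [hh.2])
  have hx : x ∈ Ioo (x - 1) (x + 1) := ⟨by linarith, by linarith⟩
  have h0 := (abs_nonneg _).trans (hφκ x x hx)
  have h0' := (abs_nonneg _).trans (hφκ' x x hx)
  obtain ⟨ξ, hξ, hξφ⟩ := exists_centralDiff_eq_deriv (hφ.differentiable (by simp)) hh.1 x
  obtain ⟨η, hη, hηφ⟩ := exists_secondDiff_eq_deriv (hφ.differentiable (by simp))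
    (hφ'.differentiable (by simp)) hh.1 x
  rw [hξφ, hηφ, Pi.add_apply]
  exact ⟨(hφκ x ξ (hsub hξ)).trans (by linarith), (hφκ' x η (hsub hη)).trans (by linarith)⟩

lemma integral_mul_shift (φ g : ℝ → ℝ) (s : ℝ) :
    ∫ x, φ x * g (x + s) = ∫ x, φ (x - s) * g x := by
  simpa using integral_add_right_eq_self (fun x => φ (x - s) * g x) s

lemma integrable_shift_mul {g : ℝ → ℝ} (hφg : ∀ s, Integrable fun x => φ x * g (x + s)) (s : ℝ) :
    Integrable fun x => φ (x + s) * g x := by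
  simpa using (hφg (-s)).comp_add_right s

lemma mul_centralDiff (φ g : ℝ → ℝ) (x : ℝ) :
    φ x * centralDiff h g x = (φ x * g (x + h) - φ x * g (x + -h)) / (2 * h) := by
  rw [centralDiff, ← sub_eq_add_neg]; ring

lemma mul_secondDiff (φ g : ℝ → ℝ) (x : ℝ) : φ x * secondDiff h g x =
    (φ x * g (x + h) - 2 * (φ x * g (x + 0)) + φ x * g (x + -h)) / h ^ 2 := by
  rw [secondDiff, ← sub_eq_add_neg, add_zero]; ring

lemma integrable_mul_centralDiff {g : ℝ → ℝ}
    (hφg : ∀ s, Integrable fun x => φ x * g (x + s)) :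
    Integrable fun x => φ x * centralDiff h g x := by
  simp only [mul_centralDiff]
  exact ((hφg h).sub' (hφg (-h))).div_const _

lemma integrable_mul_secondDiff {g : ℝ → ℝ} (hφg : ∀ s, Integrable fun x => φ x * g (x + s)) :
    Integrable fun x => φ x * secondDiff h g x := by
  simp only [mul_secondDiff]
  exact (((hφg h).sub' ((hφg 0).const_mul 2)).fun_add (hφg (-h))).div_const _

lemma integral_mul_centralDiff {g : ℝ → ℝ} (hφg : ∀ s, Integrable fun x => φ x * g (x + s)) :
    ∫ x, φ x * centralDiff h g x = - ∫ x, centralDiff h φ x * g x := by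
  simp only [mul_centralDiff, mul_comm (centralDiff h φ _), integral_div]
  simp only [mul_comm (g _) (φ _)]
  rw [integral_sub (hφg h) (hφg (-h)), integral_sub (integrable_shift_mul hφg h)
    (integrable_shift_mul hφg (-h)), integral_mul_shift, integral_mul_shift]
  simp only [sub_neg_eq_add, ← sub_eq_add_neg]
  ring

lemma integral_mul_secondDiff {g : ℝ → ℝ} (hφg : ∀ s, Integrable fun x => φ x * g (x + s)) :
    ∫ x, φ x * secondDiff h g x = ∫ x, secondDiff h φ x * g x := by
  have hφg' := integrable_shift_mul hφg
  simp only [mul_secondDiff, mul_comm (secondDiff h φ _), integral_div]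
  simp only [mul_comm (g _) (φ _)]
  rw [integral_add ((hφg h).sub' ((hφg 0).const_mul 2)) (hφg (-h)),
    integral_sub (hφg h) ((hφg 0).const_mul 2),
    integral_add ((hφg' h).sub' ((hφg' 0).const_mul 2)) (hφg' (-h)),
    integral_sub (hφg' h) ((hφg' 0).const_mul 2), integral_const_mul, integral_const_mul,
    integral_mul_shift, integral_mul_shift, integral_mul_shift]
  simp only [sub_neg_eq_add, sub_zero, add_zero, ← sub_eq_add_neg]
  ring

lemma integrable_centralDiff (hφ : Integrable φ) : Integrable (centralDiff h φ) :=
  ((hφ.comp_add_right h).sub (hφ.comp_sub_right h)).div_const _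

lemma integrable_secondDiff (hφ : Integrable φ) : Integrable (secondDiff h φ) :=
  (((hφ.comp_add_right h).sub (hφ.const_mul 2)).add (hφ.comp_sub_right h)).div_const _

end Differences

lemma IsSubCdf.comp_add_const {f : ℝ → ℝ} (hf : IsSubCdf f) (s : ℝ) :
    IsSubCdf fun x => f (x + s) :=
  ⟨fun _ _ hxy => hf.mono (by linarith), fun x => hf.mem_Icc _⟩

section Scheme

variable {A B f φ : ℝ → ℝ} {h τ : ℝ}

lemma schemeStep_le (hCFL : IsCFL A B h τ) {f g : ℝ → ℝ} {x y : ℝ} (hr : f (x + h) ≤ g (y + h))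
    (hc : f x ≤ g y) (hl : f (x - h) ≤ g (y - h)) :
    schemeStep A B h τ f x ≤ schemeStep A B h τ g y := by
  obtain ⟨hh, hτ, htr, hdiff⟩ := hCFL
  -- The step is the sum of a nondecreasing function of each of the three values it involves.
  have hstep (f : ℝ → ℝ) (x : ℝ) : schemeStep A B h τ f x = (f x - τ / h ^ 2 * A (f x)) +
      τ / (2 * h ^ 2) * (A (f (x + h)) - h * B (f (x + h))) +
      τ / (2 * h ^ 2) * (A (f (x - h)) + h * B (f (x - h))) := by
    rw [schemeStep, secondDiff, centralDiff]; field_simp; ring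
  have hcenter : f x - τ / h ^ 2 * A (f x) ≤ g y - τ / h ^ 2 * A (g y) := by
    have : τ / h ^ 2 * (A (g y) - A (f x)) ≤ g y - f x := by
      rw [div_mul_eq_mul_div, div_le_iff₀ (by positivity)]
      linarith [hdiff hc]
    linarith
  have hright : A (f (x + h)) - h * B (f (x + h)) ≤ A (g (y + h)) - h * B (g (y + h)) := by
    linarith [htr hr, mul_le_mul_of_nonneg_left (le_abs_self (B (g (y + h)) - B (f (x + h)))) hh.le]
  have hleft : A (f (x - h)) + h * B (f (x - h)) ≤ A (g (y - h)) + h * B (g (y - h)) := by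
    linarith [htr hl,
      mul_le_mul_of_nonneg_left (neg_abs_le (B (g (y - h)) - B (f (x - h)))) hh.le]
  rw [hstep, hstep]
  gcongr

lemma schemeStep_const (c x : ℝ) : schemeStep A B h τ (fun _ => c) x = c := by
  simp only [schemeStep, secondDiff, centralDiff]; ring

lemma IsSubCdf.schemeStep (hCFL : IsCFL A B h τ) (hf : IsSubCdf f) :
    IsSubCdf (schemeStep A B h τ f) where
  mono x y hxy := schemeStep_le hCFL (hf.mono (by linarith)) (hf.mono hxy) (hf.mono (by linarith))
  mem_Icc x := by
    constructor
    · rw [← schemeStep_const (A := A) (B := B) (h := h) (τ := τ) 0 x]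
      exact schemeStep_le hCFL (hf.mem_Icc _).1 (hf.mem_Icc _).1 (hf.mem_Icc _).1
    · rw [← schemeStep_const (A := A) (B := B) (h := h) (τ := τ) 1 x]
      exact schemeStep_le hCFL (hf.mem_Icc _).2 (hf.mem_Icc _).2 (hf.mem_Icc _).2

lemma integral_mul_schemeStep_sub (hA : Continuous A) (hB : Continuous B) (hf : IsSubCdf f)
    (hφ : Integrable φ) :
    (∫ x, φ x * schemeStep A B h τ f x) - ∫ x, φ x * f x = τ * schemePairing A B h f φ := by
  have hint {ψ : ℝ → ℝ} (hψ : Continuous ψ) (s : ℝ) : Integrable fun x => φ x * ψ (f (x + s)) := by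
    simpa only [mul_comm] using (hf.comp_add_const s).integrable_comp_mul hψ hφ
  have hid : Integrable fun x => φ x * f x := by simpa using hint continuous_id 0
  have hsecond := integrable_mul_secondDiff (h := h) (g := fun y => A (f y)) (hint hA)
  have hcentral := integrable_mul_centralDiff (h := h) (g := fun y => B (f y)) (hint hB)
  have hstep (x : ℝ) : φ x * schemeStep A B h τ f x = φ x * f x +
      (τ / 2 * (φ x * secondDiff h (fun y => A (f y)) x) -
        τ * (φ x * centralDiff h (fun y => B (f y)) x)) := by
    rw [schemeStep]; ring
  have hpair : schemePairing A B h f φ = (1 / 2) * (∫ x, secondDiff h φ x * A (f x)) +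
      ∫ x, centralDiff h φ x * B (f x) := by
    rw [← integral_const_mul, ← integral_add]
    · exact integral_congr_ae (.of_forall fun x => by ring)
    · simpa only [mul_comm] using
        (hf.integrable_comp_mul hA (integrable_secondDiff (h := h) hφ)).mul_const (1 / 2)
    · simpa only [mul_comm] using hf.integrable_comp_mul hB (integrable_centralDiff (h := h) hφ)
  simp only [hstep]
  rw [integral_add hid ((hsecond.const_mul _).sub' (hcentral.const_mul _)),
    integral_sub (hsecond.const_mul _) (hcentral.const_mul _), integral_const_mul,
    integral_const_mul, integral_mul_secondDiff (hint hA), integral_mul_centralDiff (hint hB),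
    hpair]
  ring

end Scheme

section StepFunction

variable {v : ℕ → ℝ} {K τ : ℝ}

lemma intervalIntegrable_comp_floor (hv : ∀ j, |v j| ≤ K) (c d : ℝ) :
    IntervalIntegrable (fun s : ℝ => v ⌊s / τ⌋₊) volume c d := by
  have hmeas : Measurable fun s : ℝ => v ⌊s / τ⌋₊ :=
    (measurable_from_nat (f := v)).comp (Nat.measurable_floor.comp (measurable_id.div_const τ))
  exact (intervalIntegrable_const (c := K)).mono_fun hmeas.aestronglyMeasurable
    (.of_forall fun _ => (hv _).trans (le_abs_self K))

lemma intervalIntegral_comp_floor (hτ : 0 < τ) (hv : ∀ j, |v j| ≤ K) (N : ℕ) :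
    ∫ s in (0 : ℝ)..(N * τ), v ⌊s / τ⌋₊ = τ * ∑ j ∈ Finset.range N, v j := by
  induction N with
  | zero => simp
  | succ N ih =>
    have hN : ∫ s in (N * τ)..((N + 1 : ℕ) * τ), v ⌊s / τ⌋₊ =
        ∫ _ in (N * τ)..((N + 1 : ℕ) * τ), v N := by
      refine intervalIntegral.integral_congr_Ioo_of_le (by push_cast; nlinarith) fun s hs => ?_
      have hs0 : 0 ≤ s / τ := div_nonneg (le_trans (by positivity) hs.1.le) hτ.le
      have : ⌊s / τ⌋₊ = N := (Nat.floor_eq_iff hs0).2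
        ⟨(le_div_iff₀ hτ).2 hs.1.le, (div_lt_iff₀ hτ).2 (by exact_mod_cast hs.2)⟩
      simp only [this]
    rw [← intervalIntegral.integral_add_adjacent_intervals (intervalIntegrable_comp_floor hv 0 _)
      (intervalIntegrable_comp_floor hv (N * τ) _), ih, hN, Finset.sum_range_succ,
      intervalIntegral.integral_const, smul_eq_mul]
    push_cast; ring

lemma abs_sum_sub_intervalIntegral_le (hτ : 0 < τ) (hv : ∀ j, |v j| ≤ K) {t : ℝ} (ht : 0 ≤ t) :
    |τ * (∑ j ∈ Finset.range ⌊t / τ⌋₊, v j) - ∫ s in (0 : ℝ)..t, v ⌊s / τ⌋₊| ≤ K * τ := by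
  have hle : (⌊t / τ⌋₊ : ℝ) * τ ≤ t := (le_div_iff₀ hτ).1 (Nat.floor_le (div_nonneg ht hτ.le))
  have hge : t ≤ (⌊t / τ⌋₊ + 1 : ℝ) * τ := (div_le_iff₀ hτ).1 (Nat.lt_floor_add_one (t / τ)).le
  rw [← intervalIntegral_comp_floor hτ hv, abs_sub_comm,
    intervalIntegral.integral_interval_sub_left (intervalIntegrable_comp_floor hv _ _)
      (intervalIntegrable_comp_floor hv _ _)]
  refine (abs_intervalIntegral_le (fun _ => hv _) _ _).trans ?_
  rw [abs_of_nonneg (by linarith)]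
  exact mul_le_mul_of_nonneg_left (by linarith) ((abs_nonneg _).trans (hv 0))

end StepFunction

/-- The approximate flow: iterates of `schemeStep`, constant on time intervals of length `τ`. -/
def scheme (A B : ℝ → ℝ) (h τ : ℝ) (F₀ : ℝ → ℝ) (t : ℝ) : ℝ → ℝ :=
  (schemeStep A B h τ)^[⌊t / τ⌋₊] F₀

lemma IsSubCdf.iterate_schemeStep {A B F₀ : ℝ → ℝ} {h τ : ℝ} (hCFL : IsCFL A B h τ)
    (hF₀ : IsSubCdf F₀) (N : ℕ) : IsSubCdf ((_root_.schemeStep A B h τ)^[N] F₀) := by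
  induction N with
  | zero => exact hF₀
  | succ N ih => rw [iterate_succ_apply']; exact ih.schemeStep hCFL

lemma exists_abs_schemePairing_le {φ : ℝ → ℝ} (hφ : ContDiff ℝ (⊤ : ℕ∞) φ)
    (hc : HasCompactSupport φ) (M : ℝ) : ∃ K, ∀ A B h f, h ∈ Ioc (0 : ℝ) 1 → IsSubCdf f →
      (∀ u ∈ Icc (0 : ℝ) 1, |A u| ≤ M) → (∀ u ∈ Icc (0 : ℝ) 1, |B u| ≤ M) →
      |schemePairing A B h f φ| ≤ K := by
  obtain ⟨κ, hκ, hφκ⟩ := exists_integrable_bound_differences hφ hc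
  refine ⟨∫ x, 2 * M * κ x, fun A B h f hh hf hA hB => ?_⟩
  rw [schemePairing, ← Real.norm_eq_abs]
  refine norm_integral_le_of_norm_le (hκ.const_mul _) (.of_forall fun x => ?_)
  rw [Real.norm_eq_abs]
  obtain ⟨hcentral, hsecond⟩ := hφκ h hh x
  have hM : 0 ≤ M := (abs_nonneg _).trans (hA 0 (by simp))
  have hκ0 : 0 ≤ κ x := (abs_nonneg _).trans hcentral
  calc |1 / 2 * A (f x) * secondDiff h φ x + B (f x) * centralDiff h φ x|
      ≤ 1 / 2 * |A (f x)| * |secondDiff h φ x| + |B (f x)| * |centralDiff h φ x| := by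
        refine (abs_add_le _ _).trans_eq ?_
        rw [abs_mul, abs_mul, abs_mul, abs_of_pos (by norm_num : (0 : ℝ) < 1 / 2)]
    _ ≤ 1 / 2 * M * κ x + M * κ x := by
        gcongr
        · exact hA _ (hf.mem_Icc x)
        · exact hB _ (hf.mem_Icc x)
    _ ≤ 2 * M * κ x := by nlinarith [mul_nonneg hM hκ0]

section Scheme

variable {A B F₀ φ : ℝ → ℝ} {h τ K : ℝ}

lemma integral_mul_iterate_schemeStep_sub (hA : Continuous A) (hB : Continuous B)
    (hCFL : IsCFL A B h τ) (hF₀ : IsSubCdf F₀) (hφ : Integrable φ) (N : ℕ) :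
    (∫ x, φ x * (schemeStep A B h τ)^[N] F₀ x) - ∫ x, φ x * F₀ x =
      τ * ∑ j ∈ Finset.range N, schemePairing A B h ((schemeStep A B h τ)^[j] F₀) φ := by
  induction N with
  | zero => simp
  | succ N ih =>
    have := integral_mul_schemeStep_sub hA hB (hF₀.iterate_schemeStep hCFL N) hφ (h := h) (τ := τ)
    rw [iterate_succ_apply', Finset.sum_range_succ, mul_add, ← ih]
    linarith

lemma abs_integral_mul_scheme_sub_le (hA : Continuous A) (hB : Continuous B)
    (hCFL : IsCFL A B h τ) (hτ : 0 < τ) (hF₀ : IsSubCdf F₀) (hφ : Integrable φ)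
    (hK : ∀ f, IsSubCdf f → |schemePairing A B h f φ| ≤ K) {t : ℝ} (ht : 0 ≤ t) :
    |(∫ x, φ x * scheme A B h τ F₀ t x) - (∫ x, φ x * F₀ x) -
      ∫ s in (0 : ℝ)..t, schemePairing A B h (scheme A B h τ F₀ s) φ| ≤ K * τ := by
  simp only [scheme]
  rw [integral_mul_iterate_schemeStep_sub hA hB hCFL hF₀ hφ]
  exact abs_sum_sub_intervalIntegral_le
    (v := fun j => schemePairing A B h ((schemeStep A B h τ)^[j] F₀) φ) hτ
    (fun j => hK _ (hF₀.iterate_schemeStep hCFL j)) ht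

lemma abs_integral_mul_scheme_sub_scheme_le (hA : Continuous A) (hB : Continuous B)
    (hCFL : IsCFL A B h τ) (hτ : 0 < τ) (hF₀ : IsSubCdf F₀) (hφ : Integrable φ)
    (hK : ∀ f, IsSubCdf f → |schemePairing A B h f φ| ≤ K) {s t : ℝ} (hs : 0 ≤ s) (ht : 0 ≤ t) :
    |(∫ x, φ x * scheme A B h τ F₀ t x) - ∫ x, φ x * scheme A B h τ F₀ s x| ≤
      K * (|t - s| + 2 * τ) := by
  have hbound (r : ℝ) : |schemePairing A B h (scheme A B h τ F₀ r) φ| ≤ K :=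
    hK _ (hF₀.iterate_schemeStep hCFL _)
  have hint (r : ℝ) : IntervalIntegrable
      (fun s => schemePairing A B h (scheme A B h τ F₀ s) φ) volume 0 r :=
    intervalIntegrable_comp_floor
      (v := fun j => schemePairing A B h ((schemeStep A B h τ)^[j] F₀) φ)
      (fun j => hK _ (hF₀.iterate_schemeStep hCFL j)) _ _
  have hflux := abs_intervalIntegral_le hbound s t
  rw [← intervalIntegral.integral_interval_sub_left (hint t) (hint s), abs_le] at hflux
  have hs' := abs_le.1 (abs_integral_mul_scheme_sub_le hA hB hCFL hτ hF₀ hφ hK hs)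
  have ht' := abs_le.1 (abs_integral_mul_scheme_sub_le hA hB hCFL hτ hF₀ hφ hK ht)
  rw [abs_le]
  constructor <;> linarith [hflux.1, hflux.2, hs'.1, hs'.2, ht'.1, ht'.2]

end Scheme

/-! ### Existence: compactness -/

/-- Convergence of `f k` to `F` at the continuity points of `F`, the notion of convergence of
distribution functions which corresponds to vague convergence of measures. -/
def CdfTendsto (f : ℕ → ℝ → ℝ) (F : ℝ → ℝ) : Prop :=
  ∀ x, ContinuousAt F x → Tendsto (fun k => f k x) atTop (𝓝 (F x))

lemma exists_strictMono_forall_tendsto {ι : Type*} [Countable ι] {u : ℕ → ι → ℝ} {a b : ℝ}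
    (hu : ∀ k i, u k i ∈ Icc a b) :
    ∃ σ : ℕ → ℕ, StrictMono σ ∧ ∀ i, ∃ l, Tendsto (fun k => u (σ k) i) atTop (𝓝 l) := by
  obtain ⟨g, -, σ, hσ, hg⟩ := (isCompact_univ_pi fun _ : ι => isCompact_Icc).tendsto_subseq
    (x := u) fun k i _ => hu k i
  exact ⟨σ, hσ, fun i => ⟨g i, tendsto_pi_nhds.1 hg i⟩⟩

lemma exists_tendsto_of_forall_rat {u : ℕ → ℝ → ℝ} {τ : ℕ → ℝ} {K : ℝ}
    (hτ : Tendsto τ atTop (𝓝 0)) (hu : ∀ k s t, |u k t - u k s| ≤ K * (|t - s| + τ k))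
    (hq : ∀ q : ℚ, ∃ l, Tendsto (fun k => u k q) atTop (𝓝 l)) (t : ℝ) :
    ∃ l, Tendsto (fun k => u k t) atTop (𝓝 l) := by
  refine cauchySeq_tendsto_of_complete (Metric.cauchySeq_iff.2 fun ε hε => ?_)
  have hsmall : ∀ᶠ q in 𝓝 t, K * |t - q| < ε / 6 := by
    have : Continuous fun q => K * |t - q| := by fun_prop
    exact this.continuousAt.eventually (gt_mem_nhds (by simpa using by positivity))
  obtain ⟨q, hqt⟩ := Rat.denseRange_cast.exists_mem_open isOpen_interior
    ⟨t, mem_interior_iff_mem_nhds.2 hsmall⟩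
  replace hqt : K * |t - q| < ε / 6 := interior_subset (s := {q | K * |t - q| < ε / 6}) hqt
  obtain ⟨l, hl⟩ := hq q
  obtain ⟨N, hN⟩ := Metric.cauchySeq_iff.1 hl.cauchySeq (ε / 3) (by positivity)
  have hKτ : ∀ᶠ k in atTop, K * τ k < ε / 6 :=
    (hτ.const_mul K).eventually (gt_mem_nhds (by simpa using by positivity))
  obtain ⟨N', hN'⟩ := eventually_atTop.1 hKτ
  refine ⟨max N N', fun j hj k hk => ?_⟩
  have hjk := hN j (le_of_max_le_left hj) k (le_of_max_le_left hk)
  have hjt := abs_le.1 (hu j q t)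
  have hkt := abs_le.1 (hu k q t)
  have hjN := hN' j (le_of_max_le_right hj)
  have hkN := hN' k (le_of_max_le_right hk)
  rw [Real.dist_eq, abs_lt] at hjk ⊢
  constructor <;> linarith [hjk.1, hjk.2, hjt.1, hjt.2, hkt.1, hkt.2]

/-- The limit is the right-continuous modification of the upper limit. -/
lemma exists_cdfTendsto {f : ℕ → ℝ → ℝ} (hf : ∀ k, IsSubCdf (f k))
    (hconv : ∀ x y, x < y → ∃ u : ℕ → ℝ, (∃ l, Tendsto u atTop (𝓝 l)) ∧
      ∀ k, u k ∈ Icc (f k x) (f k y)) :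
    ∃ F, IsSubCdf F ∧ (∀ x, ContinuousWithinAt F (Ici x) x) ∧ CdfTendsto f F := by
  set S : ℝ → ℝ := fun x => limsup (fun k => f k x) atTop
  have hbdd (x : ℝ) : IsBoundedUnder (· ≤ ·) atTop (fun k => f k x) :=
    isBoundedUnder_of ⟨1, fun k => ((hf k).mem_Icc x).2⟩
  have hcobdd (x : ℝ) : IsCoboundedUnder (· ≤ ·) atTop (fun k => f k x) :=
    (isBoundedUnder_of ⟨0, fun k => ((hf k).mem_Icc x).1⟩).isCoboundedUnder_le
  have hmono : Monotone S := fun x y hxy =>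
    limsup_le_limsup (.of_forall fun k => (hf k).mono hxy) (hcobdd x) (hbdd y)
  have hS0 (x : ℝ) : 0 ≤ S x :=
    le_limsup_of_frequently_le (.of_forall fun k => ((hf k).mem_Icc x).1) (hbdd x)
  have hS1 (x : ℝ) : S x ≤ 1 :=
    limsup_le_of_le (hcobdd x) (.of_forall fun k => ((hf k).mem_Icc x).2)
  refine ⟨hmono.stieltjesFunction, ⟨hmono.stieltjesFunction.mono, fun x =>
    ⟨(hS0 x).trans (hmono.le_rightLim le_rfl), (hmono.rightLim_le (lt_add_one x)).trans (hS1 _)⟩⟩,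
    hmono.stieltjesFunction.right_continuous, fun x hx => tendsto_order.2 ⟨fun c hc => ?_,
      fun c hc => eventually_lt_of_limsup_lt ((hmono.le_rightLim le_rfl).trans_lt hc) (hbdd x)⟩⟩
  obtain ⟨y, hyx, hy⟩ := (mem_nhdsLE_iff_exists_Ioc_subset.1
    (mem_nhdsWithin_of_mem_nhds (hx.eventually (lt_mem_nhds hc))))
  obtain ⟨z, hyz, hzx⟩ := exists_between (mem_Iio.1 hyx)
  obtain ⟨w, hzw, hwx⟩ := exists_between hzx
  obtain ⟨u, ⟨l, hl⟩, hu⟩ := hconv w x hwx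
  have hcl : c < l := calc
    c < hmono.stieltjesFunction z := hy ⟨hyz, hzx.le⟩
    _ ≤ S w := hmono.rightLim_le hzw
    _ ≤ limsup u atTop :=
      limsup_le_limsup (.of_forall fun k => (hu k).1) (hcobdd w) hl.isBoundedUnder_le
    _ = l := hl.limsup_eq
  filter_upwards [hl.eventually (lt_mem_nhds hcl)] with k hk using hk.trans_le (hu k).2

lemma IsSubCdf.smear_mollifier_mem_Icc {f : ℝ → ℝ} (hf : IsSubCdf f) (n : ℕ) (x : ℝ) :
    smear (mollifier n) f x ∈ Icc (f x) (f (x + 2 * (1 / ((n : ℝ) + 1)))) := by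
  have hint : Integrable fun y => f (x + y) * mollifier n y := by
    simpa [add_comm] using
      (hf.comp_add_const x).integrable_comp_mul continuous_id (integrable_mollifier n)
  have hconst (c : ℝ) : ∫ y, c * mollifier n y = c := by
    rw [integral_const_mul, integral_mollifier, mul_one]
  constructor
  · rw [smear, ← hconst (f x)]
    refine integral_mono ((integrable_mollifier n).const_mul _) hint fun y => ?_
    by_cases hy : mollifier n y = 0
    · simp [hy]
    · exact mul_le_mul_of_nonneg_right
        (hf.mono (by linarith [(mem_Ioo_of_mollifier_ne_zero hy).1])) (mollifier_nonneg n y)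
  · rw [smear, ← hconst (f (x + _))]
    refine integral_mono hint ((integrable_mollifier n).const_mul _) fun y => ?_
    by_cases hy : mollifier n y = 0
    · simp [hy]
    · exact mul_le_mul_of_nonneg_right
        (hf.mono (by linarith [(mem_Ioo_of_mollifier_ne_zero hy).2])) (mollifier_nonneg n y)

/-- A Helly selection principle for flows, uniform over the uncountably many times. -/
lemma exists_subseq_cdfTendsto {f : ℕ → ℝ → ℝ → ℝ} (hf : ∀ k t, IsSubCdf (f k t)) {τ : ℕ → ℝ}
    (hτ : Tendsto τ atTop (𝓝 0))
    (hequi : ∀ φ, ContDiff ℝ (⊤ : ℕ∞) φ → HasCompactSupport φ → ∃ K, ∀ k s t,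
      |(∫ x, φ x * f k t x) - ∫ x, φ x * f k s x| ≤ K * (|t - s| + τ k)) :
    ∃ σ : ℕ → ℕ, StrictMono σ ∧ ∃ F : ℝ → ℝ → ℝ, ∀ t, IsSubCdf (F t) ∧
      (∀ x, ContinuousWithinAt (F t) (Ici x) x) ∧ CdfTendsto (fun k => f (σ k) t) (F t) := by
  have hmem (k : ℕ) (p : ℕ × ℚ × ℚ) :
      smear (mollifier p.1) (f k p.2.2) p.2.1 ∈ Icc (0 : ℝ) 1 :=
    Icc_subset_Icc ((hf k _).mem_Icc _).1 ((hf k _).mem_Icc _).2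
      ((hf k _).smear_mollifier_mem_Icc p.1 p.2.1)
  obtain ⟨σ, hσ, hconv⟩ := exists_strictMono_forall_tendsto hmem
  have hlim (n : ℕ) (r : ℚ) (t : ℝ) :
      ∃ l, Tendsto (fun k => smear (mollifier n) (f (σ k) t) r) atTop (𝓝 l) := by
    obtain ⟨K, hK⟩ := hequi (fun y => mollifier n (y - r))
      ((contDiff_mollifier n).comp (contDiff_id.sub contDiff_const))
      ((hasCompactSupport_mollifier n).comp_homeomorph (Homeomorph.subRight (r : ℝ)))
    refine exists_tendsto_of_forall_rat (K := K)
      (u := fun k t => smear (mollifier n) (f (σ k) t) r) (hτ.comp hσ.tendsto_atTop)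
      (fun k s t => ?_) (fun q => hconv (n, r, q)) t
    simpa only [smear_eq_integral_sub, mul_comm, comp_apply] using hK (σ k) s t
  have hlimit (t : ℝ) := exists_cdfTendsto (fun k => hf (σ k) t) fun x y hxy => by
    obtain ⟨r, hxr, hry⟩ := exists_rat_btwn hxy
    obtain ⟨n, hn⟩ := exists_nat_one_div_lt (half_pos (sub_pos.2 hry))
    refine ⟨_, hlim n r t, fun k => ?_⟩
    exact Icc_subset_Icc ((hf _ t).mono hxr.le) ((hf _ t).mono (by linarith))
      ((hf (σ k) t).smear_mollifier_mem_Icc n r)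
  choose F hF using hlimit
  exact ⟨σ, hσ, F, hF⟩

/-! ### Existence: convergence of the scheme -/

lemma IsSubCdf.integrable_mul {f φ : ℝ → ℝ} (hf : IsSubCdf f) (hφ : Integrable φ) :
    Integrable fun x => φ x * f x := by
  simpa only [mul_comm, id] using hf.integrable_comp_mul continuous_id hφ

lemma CdfTendsto.tendsto_integral_mul {f : ℕ → ℝ → ℝ} {F φ : ℝ → ℝ} (h : CdfTendsto f F)
    (hf : ∀ k, IsSubCdf (f k)) (hF : Monotone F) (hφ : Integrable φ) :
    Tendsto (fun k => ∫ x, φ x * f k x) atTop (𝓝 (∫ x, φ x * F x)) := by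
  refine tendsto_integral_of_dominated_convergence (fun x => ‖φ x‖)
    (fun k => ((hf k).integrable_mul hφ).aestronglyMeasurable) hφ.norm
    (fun k => .of_forall fun x => ?_) ?_
  · rw [norm_mul, Real.norm_eq_abs (f k x), abs_of_nonneg ((hf k).mem_Icc x).1]
    exact mul_le_of_le_one_right (norm_nonneg _) ((hf k).mem_Icc x).2
  · filter_upwards [ae_continuousAt_of_monotone hF] with x hx using (h x hx).const_mul _

/-- Parameters of a sequence of monotone schemes consistent with `∂ₜ f = (1/2) ∂ₓₓ (A (f)) -
∂ₓ (B (f))`. The diffusion flux `A` may be perturbed to `𝒜 k`, since `A` need not dominate `B` as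
the CFL condition demands. -/
structure IsConsistentScheme (A B : ℝ → ℝ) (𝒜 : ℕ → ℝ → ℝ) (h τ : ℕ → ℝ) : Prop where
  cfl : ∀ k, IsCFL (𝒜 k) B (h k) (τ k)
  continuous_diffusion : ∀ k, Continuous (𝒜 k)
  continuous_transport : Continuous B
  mesh_le_one : ∀ k, h k ≤ 1
  time_pos : ∀ k, 0 < τ k
  tendsto_mesh : Tendsto h atTop (𝓝 0)
  tendsto_time : Tendsto τ atTop (𝓝 0)
  bound_diffusion : ∃ M, ∀ k, ∀ u ∈ Icc (0 : ℝ) 1, |𝒜 k u| ≤ M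
  tendsto_diffusion : ∀ u, Tendsto (uncurry 𝒜) (atTop ×ˢ 𝓝 u) (𝓝 (A u))

/-- The perturbation adds the artificial viscosity `C h`, which absorbs the transport term. -/
lemma exists_isConsistentScheme {A B : ℝ → ℝ} {C : NNReal} (hA : LipschitzWith C A)
    (hB : LipschitzWith C B) (hmono : Monotone A) (hC : 0 < C) :
    ∃ 𝒜 h τ, IsConsistentScheme A B 𝒜 h τ := by
  set h : ℕ → ℝ := fun k => 1 / ((k : ℝ) + 1)
  have hpos (k : ℕ) : 0 < h k := Nat.one_div_pos_of_nat
  have hle (k : ℕ) : h k ≤ 1 := by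
    simpa [h] using inv_le_one_of_one_le₀ (by linarith [k.cast_nonneg (α := ℝ)] : (1 : ℝ) ≤ k + 1)
  have hlim : Tendsto h atTop (𝓝 0) := tendsto_one_div_add_atTop_nhds_zero_nat
  have hC' : (0 : ℝ) < C := hC
  obtain ⟨M, -, hM⟩ := exists_abs_le_on_Icc hA.continuous.continuousOn
  refine ⟨fun k u => A u + C * h k * u, h, fun k => h k ^ 2 / (2 * C), ⟨fun k => ?_, fun k =>
    hA.continuous.add (by fun_prop), hB.continuous, hle, fun k => by have := hpos k; positivity,
    hlim, by simpa using (hlim.pow 2).div_const (2 * (C : ℝ)), ⟨M + C, fun k u hu => ?_⟩,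
    fun u => ?_⟩⟩
  · refine ⟨hpos k, by positivity, fun u v huv => ?_, fun u v huv => ?_⟩
    · have hBuv : |B v - B u| ≤ C * (v - u) := by
        simpa [Real.dist_eq, abs_of_nonneg (sub_nonneg.2 huv)] using hB.dist_le_mul v u
      nlinarith [hmono huv, mul_le_mul_of_nonneg_left hBuv (hpos k).le]
    · have hAuv : A v - A u ≤ C * (v - u) := (le_abs_self _).trans <| by
        simpa [Real.dist_eq, abs_of_nonneg (sub_nonneg.2 huv)] using hA.dist_le_mul v u
      have hvisc : C * h k * (v - u) ≤ C * (v - u) :=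
        mul_le_mul_of_nonneg_right (mul_le_of_le_one_right hC'.le (hle k)) (sub_nonneg.2 huv)
      calc h k ^ 2 / (2 * C) * (A v + C * h k * v - (A u + C * h k * u))
          ≤ h k ^ 2 / (2 * C) * (2 * C * (v - u)) := by gcongr; linarith
        _ = h k ^ 2 * (v - u) := by field_simp
  · have hvisc : |C * h k * u| ≤ C := by
      rw [abs_of_nonneg (mul_nonneg (mul_nonneg hC'.le (hpos k).le) hu.1), mul_assoc]
      exact mul_le_of_le_one_right hC'.le (mul_le_one₀ (hle k) hu.1 hu.2)
    exact (abs_add_le _ _).trans (add_le_add (hM u hu) hvisc)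
  · simpa [uncurry_def] using ((hA.continuous.tendsto u).comp tendsto_snd).add
      (((hlim.const_mul (C : ℝ)).comp tendsto_fst).mul tendsto_snd)

lemma scheme_max_zero {A B F₀ : ℝ → ℝ} {h τ : ℝ} (hτ : 0 < τ) (t : ℝ) :
    scheme A B h τ F₀ (max t 0) = scheme A B h τ F₀ t := by
  rcases le_total 0 t with ht | ht
  · rw [max_eq_left ht]
  · rw [scheme, scheme, max_eq_right ht, zero_div, Nat.floor_zero,
      Nat.floor_of_nonpos (div_nonpos_of_nonpos_of_nonneg ht hτ.le)]

namespace IsConsistentScheme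

variable {A B F₀ φ : ℝ → ℝ} {𝒜 : ℕ → ℝ → ℝ} {h τ : ℕ → ℝ}

lemma comp_strictMono (hS : IsConsistentScheme A B 𝒜 h τ) {σ : ℕ → ℕ} (hσ : StrictMono σ) :
    IsConsistentScheme A B (fun k => 𝒜 (σ k)) (fun k => h (σ k)) (fun k => τ (σ k)) where
  cfl _ := hS.cfl _
  continuous_diffusion _ := hS.continuous_diffusion _
  continuous_transport := hS.continuous_transport
  mesh_le_one _ := hS.mesh_le_one _
  time_pos _ := hS.time_pos _
  tendsto_mesh := hS.tendsto_mesh.comp hσ.tendsto_atTop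
  tendsto_time := hS.tendsto_time.comp hσ.tendsto_atTop
  bound_diffusion := hS.bound_diffusion.imp fun _ hM _ => hM _
  tendsto_diffusion u := (hS.tendsto_diffusion u).comp (hσ.tendsto_atTop.prodMap tendsto_id)

lemma exists_abs_schemePairing_le (hS : IsConsistentScheme A B 𝒜 h τ)
    (hφ : ContDiff ℝ (⊤ : ℕ∞) φ) (hc : HasCompactSupport φ) :
    ∃ K, ∀ k f, IsSubCdf f → |schemePairing (𝒜 k) B (h k) f φ| ≤ K := by
  obtain ⟨M, hM⟩ := hS.bound_diffusion
  obtain ⟨M', -, hM'⟩ := exists_abs_le_on_Icc hS.continuous_transport.continuousOn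
  obtain ⟨K, hK⟩ := _root_.exists_abs_schemePairing_le hφ hc (max M M')
  exact ⟨K, fun k f hf => hK _ _ _ _ ⟨(hS.cfl k).mesh_pos, hS.mesh_le_one k⟩ hf
    (fun u hu => (hM k u hu).trans (le_max_left _ _))
    (fun u hu => (hM' u hu).trans (le_max_right _ _))⟩

lemma tendsto_schemePairing (hS : IsConsistentScheme A B 𝒜 h τ) {f : ℕ → ℝ → ℝ} {F : ℝ → ℝ}
    (hf : ∀ k, IsSubCdf (f k)) (hF : Monotone F) (hfF : CdfTendsto f F)
    (hφ : ContDiff ℝ (⊤ : ℕ∞) φ) (hc : HasCompactSupport φ) :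
    Tendsto (fun k => schemePairing (𝒜 k) B (h k) (f k) φ) atTop (𝓝 (fluxPairing A B F φ)) := by
  obtain ⟨κ, hκ, hφκ⟩ := exists_integrable_bound_differences hφ hc
  obtain ⟨M, hM⟩ := hS.bound_diffusion
  obtain ⟨M', -, hM'⟩ := exists_abs_le_on_Icc hS.continuous_transport.continuousOn
  have hmesh : Tendsto h atTop (𝓝[>] 0) :=
    tendsto_nhdsWithin_iff.2 ⟨hS.tendsto_mesh, .of_forall fun k => (hS.cfl k).mesh_pos⟩
  refine tendsto_integral_of_dominated_convergence (fun x => 1 / 2 * M * κ x + M' * κ x)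
    (fun k => ?_) ((hκ.const_mul _).add (hκ.const_mul _)) (fun k => .of_forall fun x => ?_) ?_
  · have hfk := (hf k).mono.measurable
    have hA := (hS.continuous_diffusion k).measurable.comp hfk
    have hB := hS.continuous_transport.measurable.comp hfk
    have hcentral := (integrable_centralDiff (h := h k) (integrable_of_smooth hφ hc))
    have hsecond := (integrable_secondDiff (h := h k) (integrable_of_smooth hφ hc))
    exact ((hA.const_mul _).aestronglyMeasurable.mul hsecond.aestronglyMeasurable).add
      (hB.aestronglyMeasurable.mul hcentral.aestronglyMeasurable)
  · obtain ⟨hcentral, hsecond⟩ := hφκ (h k) ⟨(hS.cfl k).mesh_pos, hS.mesh_le_one k⟩ x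
    have hA := hM k _ ((hf k).mem_Icc x)
    have hB := hM' _ ((hf k).mem_Icc x)
    refine (norm_add_le _ _).trans ?_
    simp only [norm_mul, Real.norm_eq_abs, abs_of_pos (one_half_pos (α := ℝ))]
    have := (abs_nonneg _).trans hA
    have := (abs_nonneg _).trans hB
    gcongr
  · filter_upwards [ae_continuousAt_of_monotone hF] with x hx
    have hfx := hfF x hx
    have hA := (hS.tendsto_diffusion (F x)).comp (tendsto_id.prodMk hfx)
    have hB := (hS.continuous_transport.tendsto (F x)).comp hfx
    exact ((hA.const_mul _).mul ((tendsto_secondDiff hφ x).comp hmesh)).add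
      (hB.mul ((tendsto_centralDiff hφ x).comp hmesh))

lemma abs_integral_mul_scheme_sub_scheme_le (hS : IsConsistentScheme A B 𝒜 h τ)
    (hF₀ : IsSubCdf F₀) (hφ : Integrable φ) {K : ℝ} {k : ℕ}
    (hK : ∀ f, IsSubCdf f → |schemePairing (𝒜 k) B (h k) f φ| ≤ K) (s t : ℝ) :
    |(∫ x, φ x * scheme (𝒜 k) B (h k) (τ k) F₀ t x) -
      ∫ x, φ x * scheme (𝒜 k) B (h k) (τ k) F₀ s x| ≤ K * (|t - s| + 2 * τ k) := by
  rw [← scheme_max_zero (hS.time_pos k) t, ← scheme_max_zero (hS.time_pos k) s]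
  refine (_root_.abs_integral_mul_scheme_sub_scheme_le (hS.continuous_diffusion k)
    hS.continuous_transport (hS.cfl k) (hS.time_pos k) hF₀ hφ hK (le_max_right _ _)
    (le_max_right _ _)).trans ?_
  have hK0 : 0 ≤ K := (abs_nonneg _).trans (hK _ hF₀)
  gcongr K * (?_ + _)
  exact abs_max_sub_max_le_abs t s 0

lemma exists_subseq_cdfTendsto (hS : IsConsistentScheme A B 𝒜 h τ) (hF₀ : IsSubCdf F₀) :
    ∃ σ : ℕ → ℕ, StrictMono σ ∧ ∃ F : ℝ → ℝ → ℝ, ∀ t, IsSubCdf (F t) ∧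
      (∀ x, ContinuousWithinAt (F t) (Ici x) x) ∧
      CdfTendsto (fun k => scheme (𝒜 (σ k)) B (h (σ k)) (τ (σ k)) F₀ t) (F t) := by
  refine _root_.exists_subseq_cdfTendsto (f := fun k => scheme (𝒜 k) B (h k) (τ k) F₀)
    (fun k t => hF₀.iterate_schemeStep (hS.cfl k) _)
    (by simpa using hS.tendsto_time.const_mul 2) fun φ hφ hc => ?_
  obtain ⟨K, hK⟩ := hS.exists_abs_schemePairing_le hφ hc
  exact ⟨K, fun k => hS.abs_integral_mul_scheme_sub_scheme_le hF₀ (integrable_of_smooth hφ hc)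
    (hK k)⟩

section Limit

variable {F : ℝ → ℝ → ℝ}

lemma isSpatialWeakSolution (hS : IsConsistentScheme A B 𝒜 h τ) (hF₀ : IsSubCdf F₀)
    (hF : ∀ t, IsSubCdf (F t))
    (hlim : ∀ t, CdfTendsto (fun k => scheme (𝒜 k) B (h k) (τ k) F₀ t) (F t)) :
    IsSpatialWeakSolution A B F₀ F := by
  intro φ hφ hc t ht
  obtain ⟨K, hK⟩ := hS.exists_abs_schemePairing_le hφ hc
  have hφi := integrable_of_smooth hφ hc
  have hsub (k : ℕ) (s : ℝ) : IsSubCdf (scheme (𝒜 k) B (h k) (τ k) F₀ s) :=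
    hF₀.iterate_schemeStep (hS.cfl k) _
  have hflux : Tendsto (fun k => ∫ s in (0 : ℝ)..t,
      schemePairing (𝒜 k) B (h k) (scheme (𝒜 k) B (h k) (τ k) F₀ s) φ) atTop
      (𝓝 (∫ s in (0 : ℝ)..t, fluxPairing A B (F s) φ)) := by
    refine intervalIntegral.tendsto_integral_filter_of_dominated_convergence (fun _ => K)
      (.of_forall fun k => ?_) (.of_forall fun k => .of_forall fun s _ => hK k _ (hsub k s))
      intervalIntegrable_const (.of_forall fun s _ =>
        hS.tendsto_schemePairing (fun k => hsub k s) (hF s).mono (hlim s) hφ hc)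
    exact (intervalIntegrable_comp_floor
      (v := fun j => schemePairing (𝒜 k) B (h k) ((schemeStep (𝒜 k) B (h k) (τ k))^[j] F₀) φ)
      (fun j => hK k _ (hF₀.iterate_schemeStep (hS.cfl k) j)) 0 t).def'.aestronglyMeasurable
  have herror := le_of_tendsto_of_tendsto' ((((hlim t).tendsto_integral_mul (fun k => hsub k t)
    (hF t).mono hφi).sub_const (∫ x, φ x * F₀ x)).sub hflux).abs (hS.tendsto_time.const_mul K)
    fun k => abs_integral_mul_scheme_sub_le (hS.continuous_diffusion k) hS.continuous_transport
      (hS.cfl k) (hS.time_pos k) hF₀ hφi (hK k) ht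
  rw [mul_zero] at herror
  exact sub_eq_zero.1 (abs_nonpos_iff.1 herror)

lemma exists_abs_integral_mul_sub_le (hS : IsConsistentScheme A B 𝒜 h τ) (hF₀ : IsSubCdf F₀)
    (hF : ∀ t, IsSubCdf (F t))
    (hlim : ∀ t, CdfTendsto (fun k => scheme (𝒜 k) B (h k) (τ k) F₀ t) (F t))
    (hφ : ContDiff ℝ (⊤ : ℕ∞) φ) (hc : HasCompactSupport φ) :
    ∃ K, ∀ s t, |(∫ x, φ x * F t x) - ∫ x, φ x * F s x| ≤ K * |t - s| := by
  obtain ⟨K, hK⟩ := hS.exists_abs_schemePairing_le hφ hc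
  have hφi := integrable_of_smooth hφ hc
  have hconv (t : ℝ) := (hlim t).tendsto_integral_mul
    (fun k => hF₀.iterate_schemeStep (hS.cfl k) _) (hF t).mono hφi
  refine ⟨K, fun s t => le_of_tendsto_of_tendsto' ((hconv t).sub (hconv s)).abs ?_ fun k =>
    hS.abs_integral_mul_scheme_sub_scheme_le hF₀ hφi (hK k) s t⟩
  simpa using ((hS.tendsto_time.const_mul 2).const_add |t - s|).const_mul K

end Limit

end IsConsistentScheme

lemma continuousAt_time_of_integral_mul {F : ℝ → ℝ → ℝ} (hF : ∀ t, IsSubCdf (F t))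
    (hcont : ∀ φ, ContDiff ℝ (⊤ : ℕ∞) φ → HasCompactSupport φ →
      Continuous fun t => ∫ x, φ x * F t x) {t x : ℝ} (hx : ContinuousAt (F t) x) :
    ContinuousAt (fun s => F s x) t := by
  have hsmear (n : ℕ) (y : ℝ) : ContinuousAt (fun s => smear (mollifier n) (F s) y) t := by
    simpa only [smear_eq_integral_sub, mul_comm] using (hcont (fun z => mollifier n (z - y))
      ((contDiff_mollifier n).comp (contDiff_id.sub contDiff_const))
      ((hasCompactSupport_mollifier n).comp_homeomorph (Homeomorph.subRight y))).continuousAt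
  refine tendsto_order.2 ⟨fun c hc => ?_, fun c hc => ?_⟩
  · obtain ⟨δ, hδ, hδc⟩ := Metric.eventually_nhds_iff.1 (hx.eventually (lt_mem_nhds hc))
    obtain ⟨n, hn⟩ := exists_nat_one_div_lt (show (0 : ℝ) < δ / 4 by positivity)
    have hlt : c < F t (x - δ / 2) := hδc (by
      rw [Real.dist_eq, abs_lt]; constructor <;> linarith)
    filter_upwards [(hsmear n (x - δ / 2)).eventually
      (lt_mem_nhds (hlt.trans_le ((hF t).smear_mollifier_mem_Icc n _).1))] with s hs
    exact hs.trans_le (((hF s).smear_mollifier_mem_Icc n _).2.trans ((hF s).mono (by linarith)))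
  · obtain ⟨δ, hδ, hδc⟩ := Metric.eventually_nhds_iff.1 (hx.eventually (gt_mem_nhds hc))
    obtain ⟨n, hn⟩ := exists_nat_one_div_lt (show (0 : ℝ) < δ / 4 by positivity)
    have hlt : F t (x + δ / 2) < c := hδc (by
      rw [Real.dist_eq, abs_lt]; constructor <;> linarith)
    filter_upwards [(hsmear n x).eventually (gt_mem_nhds
      ((((hF t).smear_mollifier_mem_Icc n x).2.trans ((hF t).mono (by linarith))).trans_lt hlt))]
      with s hs
    exact ((hF s).smear_mollifier_mem_Icc n x).1.trans_lt hs

lemma exists_isSpatialWeakSolution {A B F₀ : ℝ → ℝ} {C : NNReal} (hA : LipschitzWith C A)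
    (hB : LipschitzWith C B) (hmono : Monotone A) (hF₀ : IsSubCdf F₀) :
    ∃ F : ℝ → ℝ → ℝ, IsSpatialWeakSolution A B F₀ F ∧ (∀ t, IsSubCdf (F t)) ∧
      (∀ t x, ContinuousWithinAt (F t) (Ici x) x) ∧
      ∀ t x, ContinuousAt (F t) x → ContinuousAt (fun s => F s x) t := by
  obtain ⟨𝒜, h, τ, hS⟩ := exists_isConsistentScheme (hA.weaken (le_max_left C 1))
    (hB.weaken (le_max_left C 1)) hmono (by positivity)
  obtain ⟨σ, hσ, F, hF⟩ := hS.exists_subseq_cdfTendsto hF₀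
  have hSσ := hS.comp_strictMono hσ
  have hsub (t : ℝ) := (hF t).1
  have hlim (t : ℝ) := (hF t).2.2
  refine ⟨F, hSσ.isSpatialWeakSolution hF₀ hsub hlim, hsub, fun t => (hF t).2.1, fun t x hx =>
    continuousAt_time_of_integral_mul hsub (fun φ hφ hc => ?_) hx⟩
  obtain ⟨K, hK⟩ := hSσ.exists_abs_integral_mul_sub_le hF₀ hsub hlim hφ hc
  exact (LipschitzWith.of_le_add_mul' K fun s t => by
    rw [Real.dist_eq]; linarith [(abs_le.1 (hK t s)).2]).continuous

/-! ### Existence: tails and moments -/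

/-- The mass of the complement of `(-s, s]` for the measure with distribution function `f`. -/
def tail (f : ℝ → ℝ) (s : ℝ) : ℝ := 1 - f s + f (-s)

namespace IsSubCdf

variable {f φ : ℝ → ℝ}

lemma tail_nonneg (hf : IsSubCdf f) (s : ℝ) : 0 ≤ tail f s := by
  unfold tail; linarith [(hf.mem_Icc s).2, (hf.mem_Icc (-s)).1]

lemma tail_le_two (hf : IsSubCdf f) (s : ℝ) : tail f s ≤ 2 := by
  unfold tail; linarith [(hf.mem_Icc s).1, (hf.mem_Icc (-s)).2]

lemma antitone_tail (hf : IsSubCdf f) : Antitone (tail f) := fun s r h => by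
  unfold tail; linarith [hf.mono h, hf.mono (neg_le_neg h)]

lemma integrable_mul_comp_neg (hf : IsSubCdf f) (hφ : Integrable φ) :
    Integrable fun x => φ x * f (-x) := by
  simpa using (hf.integrable_mul hφ.comp_neg).comp_neg

lemma integrable_mul_tail (hf : IsSubCdf f) (hφ : Integrable φ) :
    Integrable fun x => φ x * tail f x := by
  simp only [tail, mul_add, mul_sub, mul_one]
  exact (hφ.sub' (hf.integrable_mul hφ)).add (hf.integrable_mul_comp_neg hφ)

lemma integral_mul_tail (hf : IsSubCdf f) (hφ : Integrable φ) :
    ∫ x, φ x * tail f x = (∫ x, φ x) - (∫ x, φ x * f x) + ∫ x, φ (-x) * f x := by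
  simp only [tail, mul_add, mul_sub, mul_one]
  rw [integral_add (hφ.sub' (hf.integrable_mul hφ)) (hf.integrable_mul_comp_neg hφ),
    integral_sub hφ (hf.integrable_mul hφ), ← integral_neg_eq_self (fun x => φ x * f (-x))]
  simp only [neg_neg]

end IsSubCdf

section Cutoff

lemma integral_abs_sub_translate_le {η : ℝ → ℝ} (hη : Integrable η) (c d : ℝ) :
    ∫ x, |η (x - c) - η (x - d)| ≤ 2 * ∫ x, |η x| := calc
  ∫ x, |η (x - c) - η (x - d)| ≤ ∫ x, (|η (x - c)| + |η (x - d)|) :=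
    integral_mono ((hη.comp_sub_right c).sub (hη.comp_sub_right d)).abs
      ((hη.comp_sub_right c).abs.add (hη.comp_sub_right d).abs) fun x => abs_sub _ _
  _ = 2 * ∫ x, |η x| := by
    rw [integral_add (hη.comp_sub_right c).abs (hη.comp_sub_right d).abs,
      integral_sub_right_eq_self (fun x => |η x|), integral_sub_right_eq_self (fun x => |η x|),
      two_mul]

lemma deriv_sub_translate {η : ℝ → ℝ} (hη : Differentiable ℝ η) (c d : ℝ) :
    deriv (fun x => η (x - c) - η (x - d)) = fun x => deriv η (x - c) - deriv η (x - d) := by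
  ext x
  rw [deriv_fun_sub (by fun_prop) (by fun_prop), deriv_comp_sub_const, deriv_comp_sub_const]

/-- A smooth cutoff function, equal to `1` on `[c + 1, d]` and supported in `[c, d + 1]`. -/
def cutoff (c d x : ℝ) : ℝ := Real.smoothTransition (x - c) - Real.smoothTransition (x - d)

lemma hasCompactSupport_deriv_smoothTransition :
    HasCompactSupport (deriv Real.smoothTransition) := by
  refine HasCompactSupport.intro (isCompact_Icc (a := (0 : ℝ)) (b := 1)) fun x hx => ?_
  rw [mem_Icc, not_and_or, not_le, not_le] at hx
  obtain ⟨c, hc⟩ : ∃ c : ℝ, Real.smoothTransition =ᶠ[𝓝 x] fun _ => c := by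
    rcases hx with hx | hx
    · exact ⟨0, (gt_mem_nhds hx).mono fun y hy => Real.smoothTransition.zero_of_nonpos hy.le⟩
    · exact ⟨1, (lt_mem_nhds hx).mono fun y hy => Real.smoothTransition.one_of_one_le hy.le⟩
  rw [hc.deriv_eq, deriv_const]

lemma exists_integral_abs_deriv_cutoff_le : ∃ K, ∀ c d,
    (∫ x, |deriv (cutoff c d) x|) + ∫ x, |deriv (deriv (cutoff c d)) x| ≤ K := by
  have hS : ContDiff ℝ (⊤ : ℕ∞) Real.smoothTransition := Real.smoothTransition.contDiff
  have hS' := contDiff_deriv hS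
  have hc := hasCompactSupport_deriv_smoothTransition
  refine ⟨2 * (∫ x, |deriv Real.smoothTransition x|) +
    2 * ∫ x, |deriv (deriv Real.smoothTransition) x|, fun c d => ?_⟩
  have hderiv := deriv_sub_translate (hS.differentiable (by simp)) c d
  have hderiv' := deriv_sub_translate (hS'.differentiable (by simp)) c d
  rw [← hderiv] at hderiv'
  rw [funext (cutoff.eq_1 c d), hderiv', hderiv]
  exact add_le_add (integral_abs_sub_translate_le (integrable_of_smooth hS' hc) c d)
    (integral_abs_sub_translate_le (integrable_of_smooth (contDiff_deriv hS') hc.deriv) c d)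

variable {c d : ℝ}

lemma contDiff_cutoff : ContDiff ℝ (⊤ : ℕ∞) (cutoff c d) :=
  (Real.smoothTransition.contDiff.comp (contDiff_id.sub contDiff_const)).sub
    (Real.smoothTransition.contDiff.comp (contDiff_id.sub contDiff_const))

lemma cutoff_eq_one {x : ℝ} (hx : x ∈ Icc (c + 1) d) : cutoff c d x = 1 := by
  rw [cutoff, Real.smoothTransition.one_of_one_le (by linarith [hx.1]),
    Real.smoothTransition.zero_of_nonpos (by linarith [hx.2]), sub_zero]

lemma cutoff_mem_Icc (hcd : c + 1 ≤ d) (x : ℝ) : cutoff c d x ∈ Icc 0 1 := by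
  refine ⟨sub_nonneg.2 ?_, (sub_le_self _ (Real.smoothTransition.nonneg _)).trans
    (Real.smoothTransition.le_one _)⟩
  rcases le_total x d with hx | hx
  · rw [Real.smoothTransition.zero_of_nonpos (x := x - d) (by linarith)]
    exact Real.smoothTransition.nonneg _
  · rw [Real.smoothTransition.one_of_one_le (x := x - c) (by linarith)]
    exact Real.smoothTransition.le_one _

lemma cutoff_eq_zero (hcd : c ≤ d) {x : ℝ} (hx : x ∉ Ioc c (d + 1)) : cutoff c d x = 0 := by
  rw [mem_Ioc, not_and_or, not_lt, not_le] at hx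
  rcases hx with hx | hx
  · rw [cutoff, Real.smoothTransition.zero_of_nonpos (by linarith),
      Real.smoothTransition.zero_of_nonpos (by linarith), sub_zero]
  · rw [cutoff, Real.smoothTransition.one_of_one_le (by linarith),
      Real.smoothTransition.one_of_one_le (by linarith), sub_self]

lemma hasCompactSupport_cutoff (hcd : c ≤ d) : HasCompactSupport (cutoff c d) :=
  HasCompactSupport.intro isCompact_Icc fun _ hx =>
    cutoff_eq_zero hcd fun hx' => hx (Ioc_subset_Icc_self hx')

lemma integrable_cutoff (hcd : c ≤ d) : Integrable (cutoff c d) :=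
  integrable_of_smooth contDiff_cutoff (hasCompactSupport_cutoff hcd)

variable {f : ℝ → ℝ}

lemma IsSubCdf.intervalIntegral_tail_le (hf : IsSubCdf f) (hcd : c + 1 ≤ d) :
    ∫ s in (c + 1)..d, tail f s ≤ ∫ s, cutoff c d s * tail f s := calc
  ∫ s in (c + 1)..d, tail f s = ∫ s in Ioc (c + 1) d, cutoff c d s * tail f s := by
    rw [intervalIntegral.integral_of_le hcd]
    refine setIntegral_congr_fun measurableSet_Ioc fun s hs => ?_
    simp only [cutoff_eq_one (Ioc_subset_Icc_self hs), one_mul]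
  _ ≤ ∫ s, cutoff c d s * tail f s :=
    setIntegral_le_integral (hf.integrable_mul_tail (integrable_cutoff (by linarith)))
      (.of_forall fun s => mul_nonneg (cutoff_mem_Icc hcd s).1 (hf.tail_nonneg s))

lemma IsSubCdf.integral_cutoff_mul_tail_le (hf : IsSubCdf f) (hcd : c + 1 ≤ d) :
    ∫ s, cutoff c d s * tail f s ≤ ∫ s in c..(d + 1), tail f s := by
  rw [intervalIntegral.integral_of_le (by linarith), ← integral_indicator measurableSet_Ioc]
  refine integral_mono (hf.integrable_mul_tail (integrable_cutoff (by linarith)))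
    ((hf.antitone_tail.intervalIntegrable (a := c) (b := d + 1)).1.integrable_indicator
      measurableSet_Ioc) fun s => ?_
  by_cases hs : s ∈ Ioc c (d + 1)
  · simpa only [indicator_of_mem hs] using
      mul_le_of_le_one_left (hf.tail_nonneg s) (cutoff_mem_Icc hcd s).2
  · simp [indicator_of_notMem hs, cutoff_eq_zero (by linarith) hs]

end Cutoff

lemma IsSubCdf.abs_fluxPairing_le {A B f φ : ℝ → ℝ} {M : ℝ} (hf : IsSubCdf f)
    (hA : ∀ u ∈ Icc (0 : ℝ) 1, |A u| ≤ M) (hB : ∀ u ∈ Icc (0 : ℝ) 1, |B u| ≤ M)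
    (hφ : ContDiff ℝ (⊤ : ℕ∞) φ) (hc : HasCompactSupport φ) :
    |fluxPairing A B f φ| ≤ M * ((∫ x, |deriv φ x|) + ∫ x, |deriv (deriv φ) x|) := by
  have hφ' := contDiff_deriv hφ
  have hint := (integrable_of_smooth hφ' hc.deriv).abs
  have hint' := (integrable_of_smooth (contDiff_deriv hφ') hc.deriv.deriv).abs
  rw [← integral_add hint hint', ← integral_const_mul, fluxPairing, ← Real.norm_eq_abs]
  refine norm_integral_le_of_norm_le ((hint.add hint').const_mul M) (.of_forall fun x => ?_)
  have hAx := hA _ (hf.mem_Icc x)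
  have hBx := hB _ (hf.mem_Icc x)
  have hM : 0 ≤ M := (abs_nonneg _).trans hAx
  refine (norm_add_le _ _).trans ?_
  simp only [norm_mul, Real.norm_eq_abs, abs_of_pos (one_half_pos (α := ℝ))]
  calc 1 / 2 * |A (f x)| * |deriv (deriv φ) x| + |B (f x)| * |deriv φ x|
      ≤ 1 / 2 * M * |deriv (deriv φ) x| + M * |deriv φ x| := by gcongr
    _ ≤ M * (|deriv φ x| + |deriv (deriv φ) x|) := by
      nlinarith [mul_nonneg hM (abs_nonneg (deriv (deriv φ) x))]

lemma deriv_deriv_comp_neg (φ : ℝ → ℝ) :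
    deriv (deriv fun x => φ (-x)) = fun x => deriv (deriv φ) (-x) := by
  have h : (deriv fun x => φ (-x)) = fun x => -deriv φ (-x) := funext (deriv_comp_neg φ)
  ext x
  rw [h, deriv.fun_neg, deriv_comp_neg, neg_neg]

namespace IsSpatialWeakSolution

variable {A B F₀ φ : ℝ → ℝ} {F : ℝ → ℝ → ℝ}

lemma integral_mul_tail_le (hW : IsSpatialWeakSolution A B F₀ F) (hF₀ : IsSubCdf F₀)
    (hF : ∀ t, IsSubCdf (F t)) {M : ℝ} (hA : ∀ u ∈ Icc (0 : ℝ) 1, |A u| ≤ M)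
    (hB : ∀ u ∈ Icc (0 : ℝ) 1, |B u| ≤ M) (hφ : ContDiff ℝ (⊤ : ℕ∞) φ)
    (hc : HasCompactSupport φ) {t : ℝ} (ht : 0 ≤ t) :
    ∫ x, φ x * tail (F t) x ≤ (∫ x, φ x * tail F₀ x) +
      2 * (M * ((∫ x, |deriv φ x|) + ∫ x, |deriv (deriv φ) x|)) * t := by
  have hφn : ContDiff ℝ (⊤ : ℕ∞) fun x => φ (-x) := hφ.comp contDiff_neg
  have hcn : HasCompactSupport fun x => φ (-x) := hc.comp_homeomorph (Homeomorph.neg ℝ)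
  have h := abs_intervalIntegral_le
    (fun s => (hF s).abs_fluxPairing_le hA hB hφ hc) 0 t
  have hn := abs_intervalIntegral_le
    (fun s => (hF s).abs_fluxPairing_le hA hB hφn hcn) 0 t
  simp only [deriv_deriv_comp_neg, deriv_comp_neg, abs_neg] at hn
  rw [integral_neg_eq_self (fun x => |deriv φ x|),
    integral_neg_eq_self (fun x => |deriv (deriv φ) x|), ← hW _ hφn hcn t ht] at hn
  rw [← hW φ hφ hc t ht] at h
  rw [sub_zero, abs_of_nonneg ht, abs_le] at h hn
  have hφi := integrable_of_smooth hφ hc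
  rw [(hF t).integral_mul_tail hφi, hF₀.integral_mul_tail hφi]
  linarith [h.1, hn.2]

lemma exists_intervalIntegral_tail_le (hW : IsSpatialWeakSolution A B F₀ F) (hF₀ : IsSubCdf F₀)
    (hF : ∀ t, IsSubCdf (F t)) (hA : Continuous A) (hB : Continuous B) :
    ∃ K, ∀ t ≥ 0, ∀ c d, c + 1 ≤ d →
      ∫ s in (c + 1)..d, tail (F t) s ≤ (∫ s in c..(d + 1), tail F₀ s) + K * t := by
  obtain ⟨M, hM0, hM⟩ := exists_abs_le_on_Icc hA.continuousOn
  obtain ⟨M', -, hM'⟩ := exists_abs_le_on_Icc hB.continuousOn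
  obtain ⟨K, hK⟩ := exists_integral_abs_deriv_cutoff_le
  refine ⟨2 * (max M M' * K), fun t ht c d hcd => ?_⟩
  calc ∫ s in (c + 1)..d, tail (F t) s
      ≤ ∫ s, cutoff c d s * tail (F t) s := (hF t).intervalIntegral_tail_le hcd
    _ ≤ _ := hW.integral_mul_tail_le hF₀ hF (fun u hu => (hM u hu).trans (le_max_left _ _))
        (fun u hu => (hM' u hu).trans (le_max_right _ _)) contDiff_cutoff
        (hasCompactSupport_cutoff (by linarith)) ht
    _ ≤ (∫ s in c..(d + 1), tail F₀ s) + 2 * (max M M' * K) * t := by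
        have : 0 ≤ max M M' := le_max_of_le_left hM0
        gcongr
        · exact hF₀.integral_cutoff_mul_tail_le hcd
        · exact hK c d

/-- On a window of length `L` far out, the mass gained by the tail of `F t` is at most `O(t)`, so
the limit of the tail is `O(t / L)` for every `L`. -/
lemma tendsto_tail (hW : IsSpatialWeakSolution A B F₀ F) (hF₀ : IsSubCdf F₀)
    (hF : ∀ t, IsSubCdf (F t)) (hA : Continuous A) (hB : Continuous B)
    (hlim : Tendsto (tail F₀) atTop (𝓝 0)) {t : ℝ} (ht : 0 ≤ t) :
    Tendsto (tail (F t)) atTop (𝓝 0) := by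
  obtain ⟨K, hK⟩ := hW.exists_intervalIntegral_tail_le hF₀ hF hA hB
  have hbdd : BddBelow (range (tail (F t))) := ⟨0, forall_mem_range.2 (hF t).tail_nonneg⟩
  set l := ⨅ s, tail (F t) s
  have hwindow (L : ℝ) (hL : 0 ≤ L) : L * l ≤ K * t := by
    have hbound (c : ℝ) : L * l ≤ (L + 2) * tail F₀ c + K * t := calc
      L * l = ∫ _ in (c + 1)..(c + 1 + L), l := by simp
      _ ≤ ∫ s in (c + 1)..(c + 1 + L), tail (F t) s :=
        intervalIntegral.integral_mono (by linarith) intervalIntegrable_const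
          (hF t).antitone_tail.intervalIntegrable fun s => ciInf_le hbdd s
      _ ≤ (∫ s in c..(c + 1 + L + 1), tail F₀ s) + K * t := hK t ht c _ (by linarith)
      _ ≤ (∫ _ in c..(c + 1 + L + 1), tail F₀ c) + K * t := by
        gcongr
        exact intervalIntegral.integral_mono_on (by linarith)
          hF₀.antitone_tail.intervalIntegrable intervalIntegrable_const
          fun s hs => hF₀.antitone_tail hs.1
      _ = (L + 2) * tail F₀ c + K * t := by
        rw [intervalIntegral.integral_const, smul_eq_mul]; ring
    simpa using ge_of_tendsto' ((hlim.const_mul (L + 2)).add_const (K * t)) hbound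
  have hl0 : l = 0 := by
    refine le_antisymm (not_lt.1 fun hpos => ?_) (le_ciInf (hF t).tail_nonneg)
    obtain ⟨n, hn⟩ := exists_nat_gt (K * t / l)
    exact ((div_lt_iff₀ hpos).1 hn).not_ge (hwindow n n.cast_nonneg)
  exact hl0 ▸ tendsto_atTop_ciInf (hF t).antitone_tail hbdd

end IsSpatialWeakSolution

/-! ### Flows of probability measures -/

section CdfOf

variable (μ : Measure ℝ) [IsProbabilityMeasure μ]

lemma cdfOf_eq_cdf : cdfOf μ = ProbabilityTheory.cdf μ :=
  funext fun x => (ProbabilityTheory.cdf_eq_real μ x).symm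

lemma isSubCdf_cdfOf : IsSubCdf (cdfOf μ) where
  mono := cdfOf_eq_cdf μ ▸ ProbabilityTheory.monotone_cdf μ
  mem_Icc x := cdfOf_eq_cdf μ ▸
    ⟨ProbabilityTheory.cdf_nonneg μ x, ProbabilityTheory.cdf_le_one μ x⟩

lemma tendsto_tail_cdfOf : Tendsto (tail (cdfOf μ)) atTop (𝓝 0) := by
  have h := ((ProbabilityTheory.tendsto_cdf_atTop μ).const_sub 1).add
    ((ProbabilityTheory.tendsto_cdf_atBot μ).comp tendsto_neg_atTop_atBot)
  rw [sub_self, zero_add] at h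
  exact cdfOf_eq_cdf μ ▸ h

lemma measure_Ioi_add_measure_Iic_neg (s : ℝ) :
    μ (Ioi s) + μ (Iic (-s)) = ENNReal.ofReal (tail (cdfOf μ) s) := by
  have hIoi : 1 - cdfOf μ s = μ.real (Ioi s) := by
    rw [← compl_Iic, probReal_compl_eq_one_sub measurableSet_Iic]; rfl
  rw [tail, hIoi, cdfOf, ENNReal.ofReal_add measureReal_nonneg ENNReal.toReal_nonneg,
    ofReal_measureReal, ENNReal.ofReal_toReal (measure_ne_top μ _)]

/-- Layer cake applied to `x⁺` and `x⁻` separately. -/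
lemma lintegral_abs_eq_lintegral_tail :
    ∫⁻ x, ENNReal.ofReal |x| ∂μ = ∫⁻ s in Ioi 0, ENNReal.ofReal (tail (cdfOf μ) s) := by
  have hpos : ∫⁻ x, ENNReal.ofReal (max x 0) ∂μ = ∫⁻ s in Ioi 0, μ (Ioi s) := by
    rw [lintegral_eq_lintegral_meas_lt μ (.of_forall fun x => le_max_right x 0) (by fun_prop)]
    refine setLIntegral_congr_fun measurableSet_Ioi fun s (hs : 0 < s) => congrArg μ ?_
    ext x
    simp [hs.not_gt]
  have hneg : ∫⁻ x, ENNReal.ofReal (max (-x) 0) ∂μ = ∫⁻ s in Ioi 0, μ (Iic (-s)) := by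
    rw [lintegral_eq_lintegral_meas_le μ (.of_forall fun x => le_max_right (-x) 0) (by fun_prop)]
    refine setLIntegral_congr_fun measurableSet_Ioi fun s (hs : 0 < s) => congrArg μ ?_
    ext x
    simp [hs.not_ge, le_neg]
  calc ∫⁻ x, ENNReal.ofReal |x| ∂μ
      = ∫⁻ x, (ENNReal.ofReal (max x 0) + ENNReal.ofReal (max (-x) 0)) ∂μ :=
        lintegral_congr fun x => by
          rw [← ENNReal.ofReal_add (le_max_right x 0) (le_max_right (-x) 0)]
          congr 1
          rcases le_total 0 x with h | h <;> simp [h, abs_of_nonneg, abs_of_nonpos]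
    _ = ∫⁻ s in Ioi 0, (μ (Ioi s) + μ (Iic (-s))) := by
        have hanti : Antitone fun s => μ (Ioi s) := fun _ _ h => measure_mono (Ioi_subset_Ioi h)
        rw [lintegral_add_left (by fun_prop), hpos, hneg, lintegral_add_left hanti.measurable]
    _ = ∫⁻ s in Ioi 0, ENNReal.ofReal (tail (cdfOf μ) s) := by
        simp only [measure_Ioi_add_measure_Iic_neg]

lemma integrableOn_tail_cdfOf (hμ : Integrable (fun x => |x|) μ) :
    IntegrableOn (tail (cdfOf μ)) (Ioi 0) := by
  have hcdf := isSubCdf_cdfOf μ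
  refine (lintegral_ofReal_ne_top_iff_integrable hcdf.antitone_tail.measurable.aestronglyMeasurable
    (.of_forall hcdf.tail_nonneg)).1 ?_
  exact lintegral_abs_eq_lintegral_tail μ ▸ hμ.lintegral_lt_top.ne

end CdfOf

lemma IsSubCdf.lintegral_tail_le {f : ℝ → ℝ} (hf : IsSubCdf f) {D : ℝ}
    (hD : ∀ R ≥ 1, ∫ s in (1 : ℝ)..R, tail f s ≤ D) :
    ∫⁻ s in Ioi 0, ENNReal.ofReal (tail f s) ≤ ENNReal.ofReal (2 + D) := by
  have hD0 : 0 ≤ D := by simpa using hD 1 le_rfl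
  have hint : IntegrableOn (tail f) (Ioi 1) := by
    refine integrableOn_Ioi_of_intervalIntegral_norm_bounded D 1
      (fun R => (hf.antitone_tail.intervalIntegrable (a := 1) (b := R)).1) tendsto_id ?_
    filter_upwards [eventually_ge_atTop 1] with R hR
    simpa only [Real.norm_of_nonneg (hf.tail_nonneg _)] using hD R hR
  have hle : ∫ s in Ioi 1, tail f s ≤ D :=
    le_of_tendsto (intervalIntegral_tendsto_integral_Ioi 1 hint tendsto_id)
      ((eventually_ge_atTop 1).mono hD)
  rw [← Ioc_union_Ioi_eq_Ioi (zero_le_one' ℝ), ENNReal.ofReal_add zero_le_two hD0]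
  refine (lintegral_union_le _ _ _).trans (add_le_add ?_ ?_)
  · calc ∫⁻ s in Ioc 0 1, ENNReal.ofReal (tail f s)
        ≤ ∫⁻ _ in Ioc (0 : ℝ) 1, ENNReal.ofReal 2 :=
          lintegral_mono fun s => ENNReal.ofReal_le_ofReal (hf.tail_le_two s)
      _ = ENNReal.ofReal 2 := by simp
  · rw [← ofReal_integral_eq_lintegral_ofReal hint (.of_forall hf.tail_nonneg)]
    exact ENNReal.ofReal_le_ofReal hle

lemma IsSpatialWeakSolution.exists_lintegral_tail_le {A B F₀ : ℝ → ℝ} {F : ℝ → ℝ → ℝ}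
    (hW : IsSpatialWeakSolution A B F₀ F) (hF₀ : IsSubCdf F₀) (hF : ∀ t, IsSubCdf (F t))
    (hA : Continuous A) (hB : Continuous B) (hint : IntegrableOn (tail F₀) (Ioi 0)) :
    ∃ D K, ∀ t ≥ 0, ∫⁻ s in Ioi 0, ENNReal.ofReal (tail (F t) s) ≤ ENNReal.ofReal (D + K * t) := by
  obtain ⟨K, hK⟩ := hW.exists_intervalIntegral_tail_le hF₀ hF hA hB
  refine ⟨2 + ∫ s in Ioi 0, tail F₀ s, K, fun t ht => ?_⟩
  rw [add_assoc]
  refine (hF t).lintegral_tail_le fun R hR => ?_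
  calc ∫ s in (1 : ℝ)..R, tail (F t) s
      ≤ (∫ s in (0 : ℝ)..(R + 1), tail F₀ s) + K * t := by
        simpa using hK t ht 0 R (by simpa using hR)
    _ ≤ (∫ s in Ioi 0, tail F₀ s) + K * t := by
        rw [intervalIntegral.integral_of_le (by linarith)]
        exact add_le_add_left (setIntegral_mono_set hint (.of_forall hF₀.tail_nonneg)
          Ioc_subset_Ioi_self.eventuallyLE) _

namespace IsCdfFlow

variable {F : ℝ → ℝ → ℝ}

/-- The law at time `t` of a flow of distribution functions: the Lebesgue–Stieltjes measure of
`F t`. -/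
def law (hF : IsCdfFlow F) (t : ℝ) : ProbabilityMeasure ℝ :=
  let S : StieltjesFunction ℝ :=
    { toFun := F t, mono' := hF.mono t, right_continuous' := hF.rightCont t }
  ⟨S.measure, S.isProbabilityMeasure (hF.tendsto_atBot t) (hF.tendsto_atTop t)⟩

lemma law_Ioc (hF : IsCdfFlow F) (t x y : ℝ) :
    (hF.law t : Measure ℝ) (Ioc x y) = ENNReal.ofReal (F t y - F t x) :=
  StieltjesFunction.measure_Ioc _ x y

lemma cdfOf_law (hF : IsCdfFlow F) (t : ℝ) : cdfOf (hF.law t) = F t := by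
  ext x
  have h : (hF.law t : Measure ℝ) (Iic x) = ENNReal.ofReal (F t x - 0) :=
    StieltjesFunction.measure_Iic _ (hF.tendsto_atBot t) x
  rw [cdfOf, h, sub_zero, ENNReal.toReal_ofReal (hF.mem_Icc t x).1]

lemma continuous_law (hF : IsCdfFlow F) : Continuous hF.law := by
  refine continuous_iff_continuousAt.2 fun t => ?_
  let S : Set (Set ℝ) :=
    {s | ∃ c d, ContinuousAt (F t) c ∧ ContinuousAt (F t) d ∧ s = Ioc c d}
  have hS : IsPiSystem S := by
    rintro _ ⟨c, d, hc, hd, rfl⟩ _ ⟨c', d', hc', hd', rfl⟩ -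
    refine ⟨max c c', min d d', ?_, ?_, Ioc_inter_Ioc⟩
    · rcases max_choice c c' with h | h <;> rwa [h]
    · rcases min_choice d d' with h | h <;> rwa [h]
  refine hS.tendsto_probabilityMeasure_of_tendsto_of_mem ?_ ?_ ?_
  · rintro _ ⟨c, d, -, -, rfl⟩
    exact measurableSet_Ioc
  · intro u hu x hx
    obtain ⟨ε, hε, hball⟩ := Metric.isOpen_iff.1 hu x hx
    obtain ⟨c, hc, hc'⟩ := exists_continuousAt_mem_Ioo (hF.mono t) (sub_lt_self x hε)
    obtain ⟨d, hd, hd'⟩ := exists_continuousAt_mem_Ioo (hF.mono t) (lt_add_of_pos_right x hε)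
    refine ⟨Ioc c d, ⟨c, d, hc', hd', rfl⟩, Ioc_mem_nhds hc.2 hd.1, fun y hy => hball ?_⟩
    rw [Real.ball_eq_Ioo]
    exact ⟨hc.1.trans hy.1, hy.2.trans_lt hd.2⟩
  · rintro _ ⟨c, d, hc, hd, rfl⟩
    have hlaw (s : ℝ) : hF.law s (Ioc c d) = (F s d - F s c).toNNReal := by
      rw [ProbabilityMeasure.coeFn_def]
      exact congrArg ENNReal.toNNReal (hF.law_Ioc s c d)
    simp only [hlaw]
    exact (continuous_real_toNNReal.tendsto _).comp
      ((hF.continuousAt_time t d hd).sub (hF.continuousAt_time t c hc))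

lemma measurable_lintegral_tail (hF : IsCdfFlow F) :
    Measurable fun t => ∫⁻ s in Ioi 0, ENNReal.ofReal (tail (F t) s) := by
  have htail : Measurable fun p : ℝ × ℝ => tail (F p.1) p.2 :=
    (hF.measurable_uncurry.const_sub 1).add
      (hF.measurable_uncurry.comp (measurable_fst.prodMk measurable_snd.neg))
  exact htail.ennreal_ofReal.lintegral_prod_right'

lemma memF (hF : IsCdfFlow F) {D : ℝ → ℝ} (hD : Continuous D)
    (hle : ∀ t ≥ 0, ∫⁻ s in Ioi 0, ENNReal.ofReal (tail (F t) s) ≤ ENNReal.ofReal (D t)) :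
    MemF F := by
  have hmoment (t : ℝ) : ∫⁻ x, ENNReal.ofReal |x| ∂(hF.law t : Measure ℝ) =
      ∫⁻ s in Ioi 0, ENNReal.ofReal (tail (F t) s) := by
    rw [lintegral_abs_eq_lintegral_tail, hF.cdfOf_law]
  have hmean (t : ℝ) : ∫ x, |x| ∂(hF.law t : Measure ℝ) =
      (∫⁻ s in Ioi 0, ENNReal.ofReal (tail (F t) s)).toReal := by
    rw [← hmoment, integral_eq_lintegral_of_nonneg_ae (.of_forall abs_nonneg) (by fun_prop)]
  refine ⟨hF.law, hF.continuous_law.continuousOn, fun t ht => ?_, fun T _ => ?_,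
    fun t _ x => congrFun (hF.cdfOf_law t).symm x⟩
  · refine (lintegral_ofReal_ne_top_iff_integrable (by fun_prop) (.of_forall abs_nonneg)).1 ?_
    exact hmoment t ▸ ((hle t ht).trans_lt ENNReal.ofReal_lt_top).ne
  · simp only [hmean]
    refine Integrable.mono' (hD.abs.integrableOn_Icc (a := 0) (b := T))
      hF.measurable_lintegral_tail.ennreal_toReal.aestronglyMeasurable ?_
    filter_upwards [ae_restrict_mem measurableSet_Icc] with t ht
    rw [Real.norm_of_nonneg ENNReal.toReal_nonneg]
    exact ENNReal.toReal_le_of_le_ofReal (abs_nonneg _)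
      ((hle t ht.1).trans (ENNReal.ofReal_le_ofReal (le_abs_self _)))

end IsCdfFlow

/-- The class `𝓕` without its moment conditions: for `t ≥ 0`, `F t` is the distribution function of
`P t` for a weakly continuous flow `P` of probability measures. -/
def HasContinuousLaw (F : ℝ → ℝ → ℝ) : Prop :=
  ∃ P : ℝ → ProbabilityMeasure ℝ, ContinuousOn P (Ici 0) ∧
    ∀ t, 0 ≤ t → ∀ x, F t x = cdfOf (P t) x

lemma MemF.hasContinuousLaw {F : ℝ → ℝ → ℝ} : MemF F → HasContinuousLaw F
  | ⟨P, hP, _, _, hF⟩ => ⟨P, hP, hF⟩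

lemma IsCdfFlow.hasContinuousLaw {F : ℝ → ℝ → ℝ} (hF : IsCdfFlow F) : HasContinuousLaw F :=
  ⟨hF.law, hF.continuous_law.continuousOn, fun t _ x => congrFun (hF.cdfOf_law t).symm x⟩

lemma isCdfFlow_cdfOf {P : ℝ → ProbabilityMeasure ℝ} (hP : Continuous P) :
    IsCdfFlow fun t => cdfOf (P t) where
  mono t := (isSubCdf_cdfOf _).mono
  mem_Icc t := (isSubCdf_cdfOf _).mem_Icc
  rightCont t := cdfOf_eq_cdf (P t) ▸ (ProbabilityTheory.cdf (P t : Measure ℝ)).right_continuous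
  tendsto_atBot t := cdfOf_eq_cdf (P t) ▸ ProbabilityTheory.tendsto_cdf_atBot _
  tendsto_atTop t := cdfOf_eq_cdf (P t) ▸ ProbabilityTheory.tendsto_cdf_atTop _
  continuousAt_time t x hx := by
    rw [cdfOf_eq_cdf] at hx
    have hnull : (P t : Measure ℝ) (frontier (Iic x)) = 0 := by
      rw [frontier_Iic, ← ProbabilityTheory.measure_cdf (P t : Measure ℝ),
        StieltjesFunction.measure_singleton,
        leftLim_eq_of_tendsto (hx.tendsto.mono_left nhdsWithin_le_nhds), sub_self,
        ENNReal.ofReal_zero]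
    exact (ENNReal.tendsto_toReal (measure_ne_top _ _)).comp
      (ProbabilityMeasure.tendsto_measure_of_null_frontier_of_tendsto' (hP.tendsto t) hnull)

lemma HasContinuousLaw.exists_isCdfFlow {F : ℝ → ℝ → ℝ} (hF : HasContinuousLaw F) :
    ∃ G, IsCdfFlow G ∧ ∀ t ≥ 0, F t = G t := by
  obtain ⟨P, hP, hFP⟩ := hF
  have hcont : Continuous fun t => P (max t 0) :=
    hP.comp_continuous (by fun_prop) fun t => le_max_right t 0
  refine ⟨_, isCdfFlow_cdfOf hcont, fun t ht => funext fun x => ?_⟩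
  rw [hFP t ht, max_eq_left ht]

/-! ### Existence and uniqueness -/

/-- The extension of `A` from `[0, 1]` to `ℝ` which is constant on either side. -/
def clampExtend (A : ℝ → ℝ) (u : ℝ) : ℝ := A (projIcc 0 1 zero_le_one u)

section ClampExtend

variable {A : ℝ → ℝ}

lemma eqOn_clampExtend (A : ℝ → ℝ) : EqOn A (clampExtend A) (Icc 0 1) := fun u hu => by
  rw [clampExtend, projIcc_of_mem zero_le_one hu]

lemma continuous_clampExtend (hA : ContinuousOn A (Icc 0 1)) : Continuous (clampExtend A) :=
  hA.comp_continuous (continuous_subtype_val.comp continuous_projIcc) fun _ => Subtype.coe_prop _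

lemma lipschitzWith_clampExtend {K : NNReal} (hA : LipschitzOnWith K A (Icc 0 1)) :
    LipschitzWith K (clampExtend A) :=
  mul_one K ▸ hA.to_restrict.comp (LipschitzWith.projIcc zero_le_one)

lemma monotone_clampExtend (hA : MonotoneOn A (Icc 0 1)) : Monotone (clampExtend A) :=
  fun _ _ h => hA (Subtype.coe_prop _) (Subtype.coe_prop _) (monotone_projIcc zero_le_one h)

end ClampExtend

lemma IsWeakSolution.congr {A B A' B' F₀ : ℝ → ℝ} {F G : ℝ → ℝ → ℝ}
    (hW : IsWeakSolution A B F₀ F) (hA : EqOn A A' (Icc 0 1)) (hB : EqOn B B' (Icc 0 1))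
    (hG : ∀ t ≥ 0, ∀ x, G t x ∈ Icc (0 : ℝ) 1) (hFG : ∀ t ≥ 0, F t = G t) :
    IsWeakSolution A' B' F₀ G := by
  intro g hg hc t ht
  rw [← hFG t ht, hW g hg hc t ht]
  refine integral_congr_ae (.of_forall fun x => intervalIntegral.integral_congr fun s hs => ?_)
  rw [uIcc_of_le ht] at hs
  simp only [hFG s hs.1, hA (hG s hs.1 x), hB (hG s hs.1 x)]

theorem IsWeakSolution.unique {A B F₀ : ℝ → ℝ} {F G : ℝ → ℝ → ℝ}
    (hFW : IsWeakSolution A B F₀ F) (hGW : IsWeakSolution A B F₀ G)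
    (hF : HasContinuousLaw F) (hG : HasContinuousLaw G) (hA : ContinuousOn A (Icc 0 1))
    (hB : ContinuousOn B (Icc 0 1)) (hmono : StrictMonoOn A (Icc 0 1)) {t : ℝ} (ht : 0 ≤ t)
    (x : ℝ) : F t x = G t x := by
  have hA' := continuous_clampExtend hA
  have hB' := continuous_clampExtend hB
  have hspatial {H H' : ℝ → ℝ → ℝ} (hW : IsWeakSolution A B F₀ H) (hH' : IsCdfFlow H')
      (hHH' : ∀ t ≥ 0, H t = H' t) :
      IsSpatialWeakSolution (clampExtend A) (clampExtend B) F₀ H' :=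
    hH'.isSpatialWeakSolution hA' hB' (hW.congr (eqOn_clampExtend A) (eqOn_clampExtend B)
      (fun t _ => hH'.mem_Icc t) hHH')
  obtain ⟨F', hF', hFF'⟩ := hF.exists_isCdfFlow
  obtain ⟨G', hG', hGG'⟩ := hG.exists_isCdfFlow
  rw [hFF' t ht, hGG' t ht]
  exact (hspatial hFW hF' hFF').unique (hspatial hGW hG' hGG') hF' hG' hA' hB'
    (hmono.congr (eqOn_clampExtend A)) ht x

lemma IsSpatialWeakSolution.comp_max_zero {A B F₀ : ℝ → ℝ} {F : ℝ → ℝ → ℝ}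
    (hW : IsSpatialWeakSolution A B F₀ F) :
    IsSpatialWeakSolution A B F₀ fun t => F (max t 0) := by
  intro φ hφ hc t ht
  beta_reduce
  rw [max_eq_left ht, hW φ hφ hc t ht]
  refine intervalIntegral.integral_congr fun s hs => ?_
  rw [uIcc_of_le ht] at hs
  simp only [max_eq_left hs.1]

lemma IsSubCdf.tendsto_of_tendsto_tail {f : ℝ → ℝ} (hf : IsSubCdf f)
    (h : Tendsto (tail f) atTop (𝓝 0)) : Tendsto f atBot (𝓝 0) ∧ Tendsto f atTop (𝓝 1) := by
  have hbot : Tendsto (fun s => f (-s)) atTop (𝓝 0) :=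
    squeeze_zero (fun s => (hf.mem_Icc _).1)
      (fun s => by unfold tail; linarith [(hf.mem_Icc s).2]) h
  refine ⟨by simpa [comp_def] using hbot.comp tendsto_neg_atBot_atTop, ?_⟩
  simpa [tail] using (h.sub hbot).const_sub 1

lemma exists_isCdfFlow_isSpatialWeakSolution {A B F₀ : ℝ → ℝ} {K : NNReal}
    (hA : LipschitzWith K A) (hB : LipschitzWith K B) (hmono : Monotone A) (hF₀ : IsSubCdf F₀)
    (hlim : Tendsto (tail F₀) atTop (𝓝 0)) :
    ∃ F, IsCdfFlow F ∧ IsSpatialWeakSolution A B F₀ F := by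
  obtain ⟨F, hW, hF, hright, htime⟩ := exists_isSpatialWeakSolution hA hB hmono hF₀
  have hlim (t : ℝ) := (hF (max t 0)).tendsto_of_tendsto_tail
    (hW.tendsto_tail hF₀ hF hA.continuous hB.continuous hlim (le_max_right t 0))
  refine ⟨fun t => F (max t 0), ?_, hW.comp_max_zero⟩
  exact {
    mono := fun t => (hF _).mono
    mem_Icc := fun t => (hF _).mem_Icc
    rightCont := fun t => hright _
    tendsto_atBot := fun t => (hlim t).1
    tendsto_atTop := fun t => (hlim t).2
    continuousAt_time := fun t x hx => (htime _ x hx).comp (f := fun t => max t 0) (by fun_prop) }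

theorem exists_isWeakSolution {A B : ℝ → ℝ} {K L : NNReal} (hA : LipschitzOnWith K A (Icc 0 1))
    (hB : LipschitzOnWith L B (Icc 0 1)) (hmono : MonotoneOn A (Icc 0 1))
    (m : Measure ℝ) [IsProbabilityMeasure m] :
    ∃ F, IsWeakSolution A B (cdfOf m) F ∧ HasContinuousLaw F ∧
      (Integrable (fun x => |x|) m → MemF F) := by
  have hA' := (lipschitzWith_clampExtend hA).weaken (le_max_left K L)
  have hB' := (lipschitzWith_clampExtend hB).weaken (le_max_right K L)
  have hm := isSubCdf_cdfOf m
  obtain ⟨F, hF, hW⟩ := exists_isCdfFlow_isSpatialWeakSolution hA' hB'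
    (monotone_clampExtend hmono) hm (tendsto_tail_cdfOf m)
  have hweak := (hF.isWeakSolution hA'.continuous hB'.continuous hW).congr
    (eqOn_clampExtend A).symm (eqOn_clampExtend B).symm (fun t _ => hF.mem_Icc t) fun _ _ => rfl
  refine ⟨F, hweak, hF.hasContinuousLaw, fun hint => ?_⟩
  obtain ⟨D, K, hDK⟩ := hW.exists_lintegral_tail_le hm hF.isSubCdf hA'.continuous hB'.continuous
    (integrableOn_tail_cdfOf m hint)
  exact hF.memF (by fun_prop) hDK

lemma exists_lipschitzOnWith_primitive {f : ℝ → ℝ} (hf : ContinuousOn f (Icc 0 1)) :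
    ∃ K, LipschitzOnWith K (primitive f) (Icc 0 1) := by
  obtain ⟨M, hM0, hM⟩ := exists_abs_le_on_Icc hf
  refine ⟨⟨M, hM0⟩, LipschitzOnWith.of_dist_le_mul fun u hu v hv => ?_⟩
  have hint {w : ℝ} (hw : w ∈ Icc (0 : ℝ) 1) : IntervalIntegrable f volume 0 w :=
    (hf.mono (uIcc_subset_Icc ⟨le_rfl, zero_le_one⟩ hw)).intervalIntegrable
  rw [Real.dist_eq, Real.dist_eq, primitive, primitive,
    intervalIntegral.integral_interval_sub_left (hint hu) (hint hv), ← Real.norm_eq_abs]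
  exact intervalIntegral.norm_integral_le_of_norm_le_const fun w hw =>
    hM w (uIcc_subset_Icc hv hu (uIoc_subset_uIcc hw))

theorem existence_uniqueness_probabilistic_solution_general {A B : ℝ → ℝ} {K L : NNReal}
    (hA : LipschitzOnWith K A (Icc 0 1)) (hB : LipschitzOnWith L B (Icc 0 1))
    (hmono : StrictMonoOn A (Icc 0 1)) (m : Measure ℝ) [IsProbabilityMeasure m] :
    ∃ F, (IsWeakSolution A B (cdfOf m) F ∧ HasContinuousLaw F) ∧
      (Integrable (fun x => |x|) m → MemF F) ∧
      ∀ G, IsWeakSolution A B (cdfOf m) G → HasContinuousLaw G →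
        ∀ t, 0 ≤ t → ∀ x, G t x = F t x := by
  obtain ⟨F, hW, hF, hmem⟩ := exists_isWeakSolution hA hB hmono.monotoneOn m
  exact ⟨F, ⟨hW, hF⟩, hmem, fun G hGW hG t ht x =>
    hGW.unique hW hG hF hA.continuousOn hB.continuousOn hmono ht x⟩

/-- Under (D1) and a finite first moment of `m`, there is exactly one weak solution
of the Cauchy problem with initial condition `H*m` in the class `𝓕`. -/
theorem existence_uniqueness_probabilistic_solution
    (a b : ℝ → ℝ)
    (ha : ContinuousOn a (Set.Icc 0 1)) (hb : ContinuousOn b (Set.Icc 0 1))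
    (ha0 : ∀ u ∈ Set.Icc (0:ℝ) 1, 0 ≤ a u)
    (hD1 : StrictMonoOn (primitive a) (Set.Icc 0 1))
    (m : Measure ℝ) [IsProbabilityMeasure m]
    (hm : Integrable (fun x => |x|) m) :
    ∃ F : ℝ → ℝ → ℝ,
      (IsWeakSolution (primitive a) (primitive b) (cdfOf m) F ∧ MemF F) ∧
      ∀ G : ℝ → ℝ → ℝ,
        IsWeakSolution (primitive a) (primitive b) (cdfOf m) G → MemF G →
        ∀ t : ℝ, 0 ≤ t → ∀ x : ℝ, G t x = F t x := by
  obtain ⟨K, hA⟩ := exists_lipschitzOnWith_primitive ha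
  obtain ⟨L, hB⟩ := exists_lipschitzOnWith_primitive hb
  obtain ⟨F, ⟨hW, -⟩, hmem, hunique⟩ :=
    existence_uniqueness_probabilistic_solution_general hA hB hD1 m
  exact ⟨F, ⟨hW, hmem hm⟩, fun G hGW hG => hunique G hGW hG.hasContinuousLaw⟩
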